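/- arXiv:2210.05995 — 9 statements merged into one kernel-verified Lean document; each statement's English description precedes it below -/
import Mathlib

section
/- Suppose f satisfies Assumptions 1 (each f_i is L-smooth), 3 (primal function well-defined) and 4 (y-side μ₂-PL); let κ₂ := L/μ₂ and λ > 0. For any epoch k of mini-batch simSGDA-RR (for any realized permutation σ_k), with epoch aggregates g^k, h^k defined so that x₀^{k+1} = x₀^k − qα g^k and y₀^{k+1} = y₀^k + qβ h^k, the following deterministic inequality holds: V_λ(z₀^{k+1}) − V_λ(z₀^k) ≤ −((λ+1)/2)qα‖∇Φ(x₀^k)‖² + (λ+1)qα‖∇Φ(x₀^k) − ∇₁f(z₀^k)‖² + (qα/2)‖∇₁f(z₀^k)‖² − (qβ/2)‖∇₂f(z₀^k)‖² + (λ + 1/2)qα‖g^k − ∇₁f(z₀^k)‖² + (qβ/2)‖h^k − ∇₂f(z₀^k)‖² − [λ − ((λ+1)(κ₂+1)+1)Lqα]·(qα/2)‖g^k‖² − (1 − Lqβ)·(qβ/2)‖h^k‖². -/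
/-- Mini-batch average of (partial) gradients over the `t`-th batch (0-indexed) induced by a
permutation `σ` with batch size `b`. -/
noncomputable def batchAvg {n : ℕ} {E F V : Type*} [AddCommGroup V] [Module ℝ V] (b : ℕ)
    (g : Fin n → E → F → V) (σ : Equiv.Perm (Fin n)) (t : ℕ) (x : E) (y : F) : V :=
  (b : ℝ)⁻¹ •
    ∑ j ∈ Finset.univ.filter (fun j : Fin n => b * t ≤ (j : ℕ) ∧ (j : ℕ) < b * (t + 1)),
      g (σ j) x y

/-- `t` steps of one epoch of mini-batch simultaneous SGDA with permutation `σ`. -/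
noncomputable def simEpoch {n : ℕ} {E F : Type*} [AddCommGroup E] [Module ℝ E]
    [AddCommGroup F] [Module ℝ F] (α β : ℝ) (b : ℕ)
    (g1 : Fin n → E → F → E) (g2 : Fin n → E → F → F)
    (σ : Equiv.Perm (Fin n)) : ℕ → E × F → E × F
  | 0, z => z
  | t + 1, z =>
    let w := simEpoch α β b g1 g2 σ t z
    (w.1 - α • batchAvg b g1 σ t w.1 w.2, w.2 + β • batchAvg b g2 σ t w.1 w.2)

/-!
By the polarization identity, an inexact gradient step changes a function with a quadratic upper
bound by an amount expressed through squared norms only. This is applied to `-f`, which is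
`L`-smooth because every `f_i` is, and to the primal function `Φ = max_y f(·, y)`. For the latter,
let `y` maximize `f(x, ·)`, so that `∇₂f(x, y) = 0`. Then `‖∇₂f(x + u, y)‖ ≤ L‖u‖`, and the PL
inequality bounds the gap `Φ(x + u) - f(x + u, y)` by `L²‖u‖² / (2μ₂)`. Hence `Φ` has the same
first-order expansion at `x` as `f(·, y)` up to `(κ₂ + 1)L‖u‖² / 2`, which yields both its
differentiability and its quadratic upper bound.
-/

open scoped InnerProductSpace

section LipschitzGradient

lemma norm_sub_sub_apply_le_of_lipschitz_fderiv {E G : Type*} [NormedAddCommGroup E]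
    [NormedSpace ℝ E] [NormedAddCommGroup G] [NormedSpace ℝ G] {f : E → G} {f' : E → E →L[ℝ] G}
    {L : ℝ} (hf : ∀ x, HasFDerivAt f (f' x) x) (hL : ∀ x y, ‖f' x - f' y‖ ≤ L * ‖x - y‖)
    (x u : E) : ‖f (x + u) - f x - f' x u‖ ≤ L / 2 * ‖u‖ ^ 2 := by
  have hderiv (t : ℝ) : HasDerivAt (fun t : ℝ => f (x + t • u) - f x - t • f' x u)
      (f' (x + t • u) u - f' x u) t := by
    have hline : HasDerivAt (fun t : ℝ => x + t • u) u t := by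
      simpa using ((hasDerivAt_id t).smul_const u).const_add x
    simpa using (((hf _).comp_hasDerivAt t hline).sub_const (f x)).fun_sub
      ((hasDerivAt_id t).smul_const (f' x u))
  have hquad (t : ℝ) : HasDerivAt (fun t : ℝ => L / 2 * ‖u‖ ^ 2 * t ^ 2) (L * ‖u‖ ^ 2 * t) t :=
    ((hasDerivAt_pow 2 t).const_mul _).congr_deriv (by norm_num; ring)
  have hbound (t : ℝ) (ht : t ∈ Set.Ico (0 : ℝ) 1) :
      ‖f' (x + t • u) u - f' x u‖ ≤ L * ‖u‖ ^ 2 * t :=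
    calc ‖f' (x + t • u) u - f' x u‖ ≤ ‖f' (x + t • u) - f' x‖ * ‖u‖ :=
          (f' (x + t • u) - f' x).le_opNorm u
      _ ≤ L * ‖x + t • u - x‖ * ‖u‖ := by gcongr; exact hL _ _
      _ = L * ‖u‖ ^ 2 * t := by
          rw [add_sub_cancel_left, norm_smul, Real.norm_of_nonneg ht.1]; ring
  simpa using image_norm_le_of_norm_deriv_right_le_deriv_boundary
    (fun t _ => (hderiv t).continuousAt.continuousWithinAt)
    (fun t _ => (hderiv t).hasDerivWithinAt) (by simp) hquad hbound
    (Set.right_mem_Icc.2 zero_le_one)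

/-- `L`-smoothness: `f` is differentiable with gradient `f'`, and `f'` is `L`-Lipschitz. -/
structure HasLipschitzGradient {H : Type*} [NormedAddCommGroup H] [InnerProductSpace ℝ H]
    [CompleteSpace H] (L : ℝ) (f : H → ℝ) (f' : H → H) : Prop where
  hasGradientAt : ∀ z, HasGradientAt f (f' z) z
  norm_sub_le : ∀ z w, ‖f' z - f' w‖ ≤ L * ‖z - w‖

variable {H : Type*} [NormedAddCommGroup H] [InnerProductSpace ℝ H] [CompleteSpace H]

lemma HasLipschitzGradient.abs_sub_sub_inner_le {L : ℝ} {f : H → ℝ} {f' : H → H}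
    (hf : HasLipschitzGradient L f f') (z w : H) :
    |f (z + w) - f z - ⟪f' z, w⟫_ℝ| ≤ L / 2 * ‖w‖ ^ 2 :=
  norm_sub_sub_apply_le_of_lipschitz_fderiv (fun z => (hf.hasGradientAt z).hasFDerivAt)
    (fun z w => by simpa only [← map_sub, LinearIsometryEquiv.norm_map] using hf.norm_sub_le z w)
    z w

lemma HasLipschitzGradient.sum_smul {ι : Type*} {s : Finset ι} {w : ι → ℝ} {L : ℝ}
    {f : ι → H → ℝ} {f' : ι → H → H} (hw : ∀ i ∈ s, 0 ≤ w i) (hw₁ : ∑ i ∈ s, w i = 1)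
    (hf : ∀ i ∈ s, HasLipschitzGradient L (f i) (f' i)) :
    HasLipschitzGradient L (fun z => ∑ i ∈ s, w i • f i z) (fun z => ∑ i ∈ s, w i • f' i z) where
  hasGradientAt z := by
    rw [hasGradientAt_iff_hasFDerivAt, map_sum]
    refine .fun_sum fun i hi => ?_
    simpa using! ((hf i hi).hasGradientAt z).hasFDerivAt.const_smul (w i)
  norm_sub_le z z' := by
    calc ‖∑ i ∈ s, w i • f' i z - ∑ i ∈ s, w i • f' i z'‖
        = ‖∑ i ∈ s, w i • (f' i z - f' i z')‖ := by
          simp only [smul_sub, Finset.sum_sub_distrib]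
      _ ≤ ∑ i ∈ s, w i * (L * ‖z - z'‖) := norm_sum_le_of_le _ fun i hi => by
          rw [norm_smul, Real.norm_of_nonneg (hw i hi)]
          exact mul_le_mul_of_nonneg_left ((hf i hi).norm_sub_le z z') (hw i hi)
      _ = L * ‖z - z'‖ := by rw [← Finset.sum_mul, hw₁, one_mul]

lemma HasLipschitzGradient.average {ι : Type*} [Fintype ι] [Nonempty ι] {L : ℝ} {f : ι → H → ℝ}
    {f' : ι → H → H} (hf : ∀ i, HasLipschitzGradient L (f i) (f' i)) :
    HasLipschitzGradient L (fun z => (∑ i, f i z) / Fintype.card ι)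
      (fun z => (Fintype.card ι : ℝ)⁻¹ • ∑ i, f' i z) := by
  simpa only [div_eq_inv_mul, Finset.mul_sum, Finset.smul_sum, smul_eq_mul] using
    HasLipschitzGradient.sum_smul (s := Finset.univ) (w := fun _ => (Fintype.card ι : ℝ)⁻¹)
      (fun _ _ => by positivity) (by simp) fun i _ => hf i

lemma hasGradientAt_of_abs_sub_sub_inner_le {f : H → ℝ} {z g : H} {C : ℝ}
    (h : ∀ w, |f (z + w) - f z - ⟪g, w⟫_ℝ| ≤ C * ‖w‖ ^ 2) : HasGradientAt f g z := by
  rw [hasGradientAt_iff_isLittleO_nhds_zero]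
  have hO : (fun w => f (z + w) - f z - ⟪g, w⟫_ℝ) =O[nhds 0] fun w : H => ‖w‖ ^ 2 :=
    .of_bound C (.of_forall fun w => by simpa using h w)
  exact hO.trans_isLittleO (by simpa using Asymptotics.isLittleO_norm_pow_id (E' := H) one_lt_two)

end LipschitzGradient

section JointSmoothness

variable {E F : Type*} [NormedAddCommGroup E] [InnerProductSpace ℝ E] [CompleteSpace E]
  [NormedAddCommGroup F] [InnerProductSpace ℝ F] [CompleteSpace F]

/-- A function of two variables as a function on the Hilbert space `E × F`; the `L²` product is
needed because the norm of `E × F` itself is the sup norm. -/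
def uncurryL2 {E F V : Type*} (f : E → F → V) (z : WithLp 2 (E × F)) : V := f z.fst z.snd

/-- The gradient on the Hilbert space `E × F` assembled from the two partial gradients. -/
def jointGradient {E F : Type*} (g₁ : E → F → E) (g₂ : E → F → F) (z : WithLp 2 (E × F)) :
    WithLp 2 (E × F) :=
  WithLp.toLp 2 (g₁ z.fst z.snd, g₂ z.fst z.snd)

lemma hasGradientAt_uncurryL2 {f : E → F → ℝ} {g₁ : E → F → E} {g₂ : E → F → F}
    (h₁ : ∀ x y, HasGradientAt (fun x' => f x' y) (g₁ x y) x)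
    (h₂ : ∀ x y, HasGradientAt (fun y' => f x y') (g₂ x y) y)
    (hc : Continuous (jointGradient g₁ g₂)) (z : WithLp 2 (E × F)) :
    HasGradientAt (uncurryL2 f) (jointGradient g₁ g₂ z) z := by
  have hpair : Continuous fun p : E × F => (g₁ p.1 p.2, g₂ p.1 p.2) :=
    (WithLp.prod_continuous_ofLp 2 E F).comp (hc.comp (WithLp.prod_continuous_toLp 2 E F))
  have huncurry := (hasStrictFDerivAt_uncurry_coprod (𝕜 := ℝ) (f := f) (u := (z.fst, z.snd))
    (f₁ := fun x y => InnerProductSpace.toDual ℝ E (g₁ x y))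
    (f₂ := fun x y => InnerProductSpace.toDual ℝ F (g₂ x y))
    (.of_forall fun p => (h₁ p.1 p.2).hasFDerivAt) (.of_forall fun p => (h₂ p.1 p.2).hasFDerivAt)
    ((InnerProductSpace.toDual ℝ E).continuous.comp hpair.fst).continuousAt
    ((InnerProductSpace.toDual ℝ F).continuous.comp hpair.snd).continuousAt).hasFDerivAt
  rw [hasGradientAt_iff_hasFDerivAt]
  refine (huncurry.comp z
    (WithLp.prodContinuousLinearEquiv 2 ℝ E F).hasFDerivAt).congr_fderiv ?_
  ext w
  simp [jointGradient, Function.HasUncurry.uncurry]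

lemma hasLipschitzGradient_uncurryL2 {f : E → F → ℝ} {g₁ : E → F → E} {g₂ : E → F → F} {L : ℝ}
    (hL : 0 ≤ L) (h₁ : ∀ x y, HasGradientAt (fun x' => f x' y) (g₁ x y) x)
    (h₂ : ∀ x y, HasGradientAt (fun y' => f x y') (g₂ x y) y)
    (hlip : ∀ x y x' y', ‖g₁ x y - g₁ x' y'‖ ^ 2 + ‖g₂ x y - g₂ x' y'‖ ^ 2
      ≤ L ^ 2 * (‖x - x'‖ ^ 2 + ‖y - y'‖ ^ 2)) :
    HasLipschitzGradient L (uncurryL2 f) (jointGradient g₁ g₂) := by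
  have hnorm (z w : WithLp 2 (E × F)) :
      ‖jointGradient g₁ g₂ z - jointGradient g₁ g₂ w‖ ≤ L * ‖z - w‖ := by
    rw [← sq_le_sq₀ (norm_nonneg _) (by positivity), mul_pow, WithLp.prod_norm_sq_eq_of_L2,
      WithLp.prod_norm_sq_eq_of_L2]
    exact hlip z.fst z.snd w.fst w.snd
  have hc : Continuous (jointGradient g₁ g₂) :=
    (LipschitzWith.of_dist_le' fun z w => by simpa only [dist_eq_norm] using hnorm z w).continuous
  exact ⟨hasGradientAt_uncurryL2 h₁ h₂ hc, hnorm⟩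

namespace HasLipschitzGradient

variable {f : E → F → ℝ} {g₁ : E → F → E} {g₂ : E → F → F} {L : ℝ}

lemma abs_uncurryL2_sub_sub_inner_le
    (hf : HasLipschitzGradient L (uncurryL2 f) (jointGradient g₁ g₂)) (x u : E) (y v : F) :
    |f (x + u) (y + v) - f x y - (⟪g₁ x y, u⟫_ℝ + ⟪g₂ x y, v⟫_ℝ)|
      ≤ L / 2 * (‖u‖ ^ 2 + ‖v‖ ^ 2) := by
  simpa [uncurryL2, jointGradient, WithLp.prod_norm_sq_eq_of_L2] using
    hf.abs_sub_sub_inner_le (WithLp.toLp 2 (x, y)) (WithLp.toLp 2 (u, v))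

lemma norm_snd_sub_le (hf : HasLipschitzGradient L (uncurryL2 f) (jointGradient g₁ g₂))
    (x x' : E) (y : F) : ‖g₂ x y - g₂ x' y‖ ≤ L * ‖x - x'‖ := by
  have hlip := hf.norm_sub_le (WithLp.toLp 2 (x, y)) (WithLp.toLp 2 (x', y))
  rw [← WithLp.toLp_sub (x := (x, y)), Prod.mk_sub_mk, sub_self, WithLp.norm_toLp_fst] at hlip
  exact (WithLp.norm_snd_le _ _).trans hlip

lemma snd_eq_zero_of_forall_le (hf : HasLipschitzGradient L (uncurryL2 f) (jointGradient g₁ g₂))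
    {x : E} {y : F} (hy : ∀ y', f x y' ≤ f x y) : g₂ x y = 0 := by
  have hgrad : HasGradientAt (f x) (g₂ x y) y := hasGradientAt_of_abs_sub_sub_inner_le fun v => by
    simpa using hf.abs_uncurryL2_sub_sub_inner_le x 0 y v
  have hmax : IsLocalMax (f x) y := .of_forall hy
  simpa using hmax.hasFDerivAt_eq_zero hgrad.hasFDerivAt

end HasLipschitzGradient

end JointSmoothness

section PrimalFunction

variable {E F : Type*} [NormedAddCommGroup E] [InnerProductSpace ℝ E] [CompleteSpace E]
  [NormedAddCommGroup F] [InnerProductSpace ℝ F] [CompleteSpace F]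
  {f : E → F → ℝ} {g₁ : E → F → E} {g₂ : E → F → F} {Φ : E → ℝ} {L μ : ℝ}

lemma max_sub_le_of_polyak_lojasiewicz (hμ : 0 < μ)
    (hf : HasLipschitzGradient L (uncurryL2 f) (jointGradient g₁ g₂))
    (hPL : ∀ x y, 2 * μ * (Φ x - f x y) ≤ ‖g₂ x y‖ ^ 2) {x : E} {y : F} (hy : g₂ x y = 0)
    (u : E) : Φ (x + u) - f (x + u) y ≤ L / μ * L / 2 * ‖u‖ ^ 2 := by
  have hgrad : ‖g₂ (x + u) y‖ ≤ L * ‖u‖ := by simpa [hy] using hf.norm_snd_sub_le (x + u) x y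
  calc Φ (x + u) - f (x + u) y ≤ (L * ‖u‖) ^ 2 / (2 * μ) := by
        rw [le_div_iff₀' (by positivity)]
        exact (hPL _ _).trans (pow_le_pow_left₀ (norm_nonneg _) hgrad 2)
    _ = L / μ * L / 2 * ‖u‖ ^ 2 := by field_simp

lemma abs_max_sub_sub_inner_le (hL : 0 ≤ L) (hμ : 0 < μ)
    (hf : HasLipschitzGradient L (uncurryL2 f) (jointGradient g₁ g₂))
    (hΦ : ∀ x, IsGreatest (Set.range (f x)) (Φ x))
    (hPL : ∀ x y, 2 * μ * (Φ x - f x y) ≤ ‖g₂ x y‖ ^ 2) {x : E} {y : F} (hy : f x y = Φ x)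
    (u : E) : |Φ (x + u) - Φ x - ⟪g₁ x y, u⟫_ℝ| ≤ (L / μ + 1) * L / 2 * ‖u‖ ^ 2 := by
  have hle (x' : E) (y' : F) : f x' y' ≤ Φ x' := (hΦ x').2 ⟨y', rfl⟩
  have hgap := max_sub_le_of_polyak_lojasiewicz hμ hf hPL
    (hf.snd_eq_zero_of_forall_le fun y' => hy ▸ hle x y') u
  have hexp : |f (x + u) y - Φ x - ⟪g₁ x y, u⟫_ℝ| ≤ L / 2 * ‖u‖ ^ 2 := by
    simpa [hy] using hf.abs_uncurryL2_sub_sub_inner_le x u y 0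
  have hnonneg : 0 ≤ L / μ * L / 2 * ‖u‖ ^ 2 := by positivity
  rw [abs_le] at hexp ⊢
  constructor <;> linarith [hle (x + u) y]

lemma max_sub_sub_inner_gradient_le (hL : 0 ≤ L) (hμ : 0 < μ)
    (hf : HasLipschitzGradient L (uncurryL2 f) (jointGradient g₁ g₂))
    (hΦ : ∀ x, IsGreatest (Set.range (f x)) (Φ x))
    (hPL : ∀ x y, 2 * μ * (Φ x - f x y) ≤ ‖g₂ x y‖ ^ 2) (x u : E) :
    Φ (x + u) - Φ x - ⟪gradient Φ x, u⟫_ℝ ≤ (L / μ + 1) * L / 2 * ‖u‖ ^ 2 := by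
  obtain ⟨y, hy⟩ := (hΦ x).1
  have hexp := abs_max_sub_sub_inner_le hL hμ hf hΦ hPL hy
  rw [(hasGradientAt_of_abs_sub_sub_inner_le hexp).gradient]
  exact (abs_le.1 (hexp u)).2

end PrimalFunction

section PotentialFunction

variable {E F : Type*} [NormedAddCommGroup E] [InnerProductSpace ℝ E] [CompleteSpace E]
  [NormedAddCommGroup F] [InnerProductSpace ℝ F] [CompleteSpace F]
  {f : E → F → ℝ} {g₁ : E → F → E} {g₂ : E → F → F} {Φ : E → ℝ} {L μ : ℝ}

/-- The potential `V_λ`, which measures the progress of an epoch, with an arbitrary reference level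
`c` in place of `inf Φ`. -/
def potential {E F : Type*} (lam c : ℝ) (Φ : E → ℝ) (f : E → F → ℝ) (x : E) (y : F) : ℝ :=
  lam * (Φ x - c) + (Φ x - f x y)

lemma inexact_gradient_step_le {H : Type*} [NormedAddCommGroup H] [InnerProductSpace ℝ H]
    {f : H → ℝ} {z d : H} {M : ℝ} (h : ∀ w, f (z + w) - f z - ⟪d, w⟫_ℝ ≤ M / 2 * ‖w‖ ^ 2)
    (g : H) (a : ℝ) :
    f (z - a • g) - f z ≤
      -(a / 2) * ‖d‖ ^ 2 + a / 2 * ‖d - g‖ ^ 2 - (1 - M * a) * (a / 2) * ‖g‖ ^ 2 := by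
  have hstep := h (-(a • g))
  rw [← sub_eq_add_neg, inner_neg_right, real_inner_smul_right, norm_neg, norm_smul, mul_pow,
    Real.norm_eq_abs, sq_abs] at hstep
  linear_combination hstep - a / 2 * norm_sub_sq_real d g

lemma inexact_descent_ascent_step_le
    (hf : HasLipschitzGradient L (uncurryL2 f) (jointGradient g₁ g₂))
    (x g : E) (y h : F) (a c : ℝ) :
    f x y - f (x - a • g) (y + c • h) ≤
      a / 2 * (‖g₁ x y‖ ^ 2 - ‖g - g₁ x y‖ ^ 2 + (1 + L * a) * ‖g‖ ^ 2)
        - c / 2 * (‖g₂ x y‖ ^ 2 - ‖h - g₂ x y‖ ^ 2 + (1 - L * c) * ‖h‖ ^ 2) := by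
  have hstep := (abs_le.1 (hf.abs_uncurryL2_sub_sub_inner_le x (-(a • g)) y (c • h))).1
  simp only [← sub_eq_add_neg, inner_neg_right, real_inner_smul_right, norm_neg, norm_smul,
    mul_pow, Real.norm_eq_abs, sq_abs] at hstep
  have hg := norm_sub_sq_real g (g₁ x y)
  have hh := norm_sub_sq_real h (g₂ x y)
  rw [real_inner_comm] at hg hh
  linear_combination hstep + a / 2 * hg - c / 2 * hh

lemma potential_step_le (hL : 0 ≤ L) (hμ : 0 < μ)
    (hf : HasLipschitzGradient L (uncurryL2 f) (jointGradient g₁ g₂))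
    (hΦ : ∀ x, IsGreatest (Set.range (f x)) (Φ x))
    (hPL : ∀ x y, 2 * μ * (Φ x - f x y) ≤ ‖g₂ x y‖ ^ 2) {lam a : ℝ} (hlam : -1 ≤ lam)
    (ha : 0 ≤ a) (c Φ₀ : ℝ) (x g : E) (y h : F) :
    potential lam Φ₀ Φ f (x - a • g) (y + c • h) - potential lam Φ₀ Φ f x y ≤
      -((lam + 1) / 2) * a * ‖gradient Φ x‖ ^ 2
        + (lam + 1) * a * ‖gradient Φ x - g₁ x y‖ ^ 2
        + a / 2 * ‖g₁ x y‖ ^ 2 - c / 2 * ‖g₂ x y‖ ^ 2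
        + (lam + 1 / 2) * a * ‖g - g₁ x y‖ ^ 2 + c / 2 * ‖h - g₂ x y‖ ^ 2
        - (lam - ((lam + 1) * (L / μ + 1) + 1) * L * a) * (a / 2) * ‖g‖ ^ 2
        - (1 - L * c) * (c / 2) * ‖h‖ ^ 2 := by
  set d := gradient Φ x
  have hprimal : Φ (x - a • g) - Φ x ≤ -(a / 2) * ‖d‖ ^ 2 + a / 2 * ‖d - g‖ ^ 2
      - (1 - (L / μ + 1) * L * a) * (a / 2) * ‖g‖ ^ 2 :=
    inexact_gradient_step_le (max_sub_sub_inner_gradient_le hL hμ hf hΦ hPL x) g a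
  have hstep := inexact_descent_ascent_step_le hf x g y h a c
  have htriangle : ‖d - g‖ ^ 2 ≤ 2 * (‖d - g₁ x y‖ ^ 2 + ‖g - g₁ x y‖ ^ 2) :=
    calc ‖d - g‖ ^ 2 ≤ (‖d - g₁ x y‖ + ‖g - g₁ x y‖) ^ 2 := by
          gcongr; exact norm_sub_rev g (g₁ x y) ▸ norm_sub_le_norm_sub_add_norm_sub _ _ _
      _ ≤ 2 * (‖d - g₁ x y‖ ^ 2 + ‖g - g₁ x y‖ ^ 2) := add_sq_le
  have hlam₁ : 0 ≤ lam + 1 := by linarith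
  unfold potential
  linear_combination (lam + 1) * hprimal + hstep + (lam + 1) * (a / 2) * htriangle

end PotentialFunction

section Epoch

variable {n : ℕ} {E F : Type*}

section Algebra

variable [AddCommGroup E] [Module ℝ E] [AddCommGroup F] [Module ℝ F] (α β : ℝ) (b : ℕ)
  (g₁ : Fin n → E → F → E) (g₂ : Fin n → E → F → F) (σ : Equiv.Perm (Fin n)) (z : E × F) (t : ℕ)

lemma simEpoch_fst_eq_sub_sum :
    (simEpoch α β b g₁ g₂ σ t z).1 = z.1 - α • ∑ s ∈ Finset.range t,
      batchAvg b g₁ σ s (simEpoch α β b g₁ g₂ σ s z).1 (simEpoch α β b g₁ g₂ σ s z).2 := by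
  induction t with
  | zero => simp [simEpoch]
  | succ t ih => rw [Finset.sum_range_succ, smul_add, ← sub_sub, ← ih]; rfl

lemma simEpoch_snd_eq_add_sum :
    (simEpoch α β b g₁ g₂ σ t z).2 = z.2 + β • ∑ s ∈ Finset.range t,
      batchAvg b g₂ σ s (simEpoch α β b g₁ g₂ σ s z).1 (simEpoch α β b g₁ g₂ σ s z).2 := by
  induction t with
  | zero => simp [simEpoch]
  | succ t ih => rw [Finset.sum_range_succ, smul_add, ← add_assoc, ← ih]; rfl

end Algebra

variable [NormedAddCommGroup E] [InnerProductSpace ℝ E] [CompleteSpace E]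
  [NormedAddCommGroup F] [InnerProductSpace ℝ F] [CompleteSpace F]

theorem sim_epoch_naive_recurrence_general
    {b q : ℕ} (hbq : 0 < b * q) (hbqn : b * q ≤ n) {L μ lam : ℝ} (hL : 0 ≤ L) (hμ : 0 < μ)
    (hlam : -1 ≤ lam)
    {f : Fin n → E → F → ℝ} {g₁ : Fin n → E → F → E} {g₂ : Fin n → E → F → F}
    {Fm : E → F → ℝ} {G₁ : E → F → E} {G₂ : E → F → F}
    (hFm : ∀ x y, Fm x y = (∑ i, f i x y) / n)
    (hG₁ : ∀ x y, G₁ x y = (n : ℝ)⁻¹ • ∑ i, g₁ i x y)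
    (hG₂ : ∀ x y, G₂ x y = (n : ℝ)⁻¹ • ∑ i, g₂ i x y)
    (hf : ∀ i, HasLipschitzGradient L (uncurryL2 (f i)) (jointGradient (g₁ i) (g₂ i)))
    {Φ : E → ℝ} (hΦ : ∀ x, IsGreatest (Set.range (Fm x)) (Φ x))
    (hPL : ∀ x y, 2 * μ * (Φ x - Fm x y) ≤ ‖G₂ x y‖ ^ 2)
    {α : ℝ} (hα : 0 ≤ α) (β Φ₀ : ℝ) (σ : Equiv.Perm (Fin n)) (x₀ : E) (y₀ : F) {g : E} {h : F}
    (hg : g = (q : ℝ)⁻¹ • ∑ t ∈ Finset.range q, batchAvg b g₁ σ t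
      (simEpoch α β b g₁ g₂ σ t (x₀, y₀)).1 (simEpoch α β b g₁ g₂ σ t (x₀, y₀)).2)
    (hh : h = (q : ℝ)⁻¹ • ∑ t ∈ Finset.range q, batchAvg b g₂ σ t
      (simEpoch α β b g₁ g₂ σ t (x₀, y₀)).1 (simEpoch α β b g₁ g₂ σ t (x₀, y₀)).2) :
    potential lam Φ₀ Φ Fm (simEpoch α β b g₁ g₂ σ q (x₀, y₀)).1
        (simEpoch α β b g₁ g₂ σ q (x₀, y₀)).2 - potential lam Φ₀ Φ Fm x₀ y₀ ≤
      -((lam + 1) / 2) * (q * α) * ‖gradient Φ x₀‖ ^ 2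
        + (lam + 1) * (q * α) * ‖gradient Φ x₀ - G₁ x₀ y₀‖ ^ 2
        + q * α / 2 * ‖G₁ x₀ y₀‖ ^ 2 - q * β / 2 * ‖G₂ x₀ y₀‖ ^ 2
        + (lam + 1 / 2) * (q * α) * ‖g - G₁ x₀ y₀‖ ^ 2 + q * β / 2 * ‖h - G₂ x₀ y₀‖ ^ 2
        - (lam - ((lam + 1) * (L / μ + 1) + 1) * L * (q * α)) * (q * α / 2) * ‖g‖ ^ 2
        - (1 - L * (q * β)) * (q * β / 2) * ‖h‖ ^ 2 := by
  have : NeZero n := ⟨(hbq.trans_le hbqn).ne'⟩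
  have hq : (q : ℝ) ≠ 0 := Nat.cast_ne_zero.2 (Nat.pos_of_mul_pos_left hbq).ne'
  have hsmooth : HasLipschitzGradient L (uncurryL2 Fm) (jointGradient G₁ G₂) := by
    convert HasLipschitzGradient.average hf using 2 with z z
    · simp [uncurryL2, hFm]
    · refine WithLp.ofLp_injective 2 (Prod.ext ?_ ?_) <;>
        simp [jointGradient, hG₁, hG₂, Prod.fst_sum, Prod.snd_sum]
  have hx : (simEpoch α β b g₁ g₂ σ q (x₀, y₀)).1 = x₀ - (q * α) • g := by
    rw [simEpoch_fst_eq_sub_sum, mul_comm, mul_smul, hg, smul_inv_smul₀ hq]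
  have hy : (simEpoch α β b g₁ g₂ σ q (x₀, y₀)).2 = y₀ + (q * β) • h := by
    rw [simEpoch_snd_eq_add_sum, mul_comm, mul_smul, hh, smul_inv_smul₀ hq]
  rw [hx, hy]
  exact potential_step_le hL hμ hsmooth hΦ hPL hlam (by positivity) _ Φ₀ x₀ g y₀ h

end Epoch

/-- **Lemma (naive per-epoch recurrence for the potential function, simSGDA-RR).**
Under component `L`-smoothness, well-definedness of the primal function and the `y`-side
`μ₂`-PL condition, for any realized permutation of an epoch of mini-batch simSGDA-RR the
stated deterministic inequality on `V_λ(z₀^{k+1}) − V_λ(z₀^k)` holds, where `g^k`, `h^k` are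
the epoch aggregates (so that `x₀^{k+1} = x₀^k − qα g^k`, `y₀^{k+1} = y₀^k + qβ h^k`). -/
theorem sim_epoch_naive_recurrence
    (dx dy n b q : ℕ) (hn : 1 ≤ n) (hb : 0 < b) (hq : n = b * q)
    (L μ2 lam : ℝ) (hL : 0 < L) (hμ2 : 0 < μ2) (hlam : 0 < lam)
    (f : Fin n → EuclideanSpace ℝ (Fin dx) → EuclideanSpace ℝ (Fin dy) → ℝ)
    (g1 : Fin n → EuclideanSpace ℝ (Fin dx) → EuclideanSpace ℝ (Fin dy) → EuclideanSpace ℝ (Fin dx))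
    (g2 : Fin n → EuclideanSpace ℝ (Fin dx) → EuclideanSpace ℝ (Fin dy) → EuclideanSpace ℝ (Fin dy))
    (Fm : EuclideanSpace ℝ (Fin dx) → EuclideanSpace ℝ (Fin dy) → ℝ)
    (G1 : EuclideanSpace ℝ (Fin dx) → EuclideanSpace ℝ (Fin dy) → EuclideanSpace ℝ (Fin dx))
    (G2 : EuclideanSpace ℝ (Fin dx) → EuclideanSpace ℝ (Fin dy) → EuclideanSpace ℝ (Fin dy))
    (hFm : ∀ x y, Fm x y = (∑ i, f i x y) / n)
    (hG1 : ∀ x y, G1 x y = (n : ℝ)⁻¹ • ∑ i, g1 i x y)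
    (hG2 : ∀ x y, G2 x y = (n : ℝ)⁻¹ • ∑ i, g2 i x y)
    (hg1 : ∀ i x y, HasGradientAt (fun x' => f i x' y) (g1 i x y) x)
    (hg2 : ∀ i x y, HasGradientAt (fun y' => f i x y') (g2 i x y) y)
    (hsmooth : ∀ i x y x' y',
      ‖g1 i x y - g1 i x' y'‖ ^ 2 + ‖g2 i x y - g2 i x' y'‖ ^ 2
        ≤ L ^ 2 * (‖x - x'‖ ^ 2 + ‖y - y'‖ ^ 2))
    (Φ : EuclideanSpace ℝ (Fin dx) → ℝ) (Φs : ℝ)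
    (hΦ : ∀ x, IsGreatest (Set.range (Fm x)) (Φ x))
    (hYcl : ∀ x, IsClosed {y | Fm x y = Φ x})
    (hΦs : IsGLB (Set.range Φ) Φs)
    (hPL2 : ∀ x y, 2 * μ2 * (Φ x - Fm x y) ≤ ‖G2 x y‖ ^ 2)
    (V : EuclideanSpace ℝ (Fin dx) → EuclideanSpace ℝ (Fin dy) → ℝ)
    (hV : ∀ x y, V x y = lam * (Φ x - Φs) + (Φ x - Fm x y))
    (α β : ℝ) (hα : 0 < α) (hβ : 0 < β)
    (σ : Equiv.Perm (Fin n))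
    (x0 : EuclideanSpace ℝ (Fin dx)) (y0 : EuclideanSpace ℝ (Fin dy))
    (gk : EuclideanSpace ℝ (Fin dx)) (hk : EuclideanSpace ℝ (Fin dy))
    (hgk : gk = (q : ℝ)⁻¹ • ∑ t ∈ Finset.range q,
      batchAvg b g1 σ t (simEpoch α β b g1 g2 σ t (x0, y0)).1 (simEpoch α β b g1 g2 σ t (x0, y0)).2)
    (hhk : hk = (q : ℝ)⁻¹ • ∑ t ∈ Finset.range q,
      batchAvg b g2 σ t (simEpoch α β b g1 g2 σ t (x0, y0)).1 (simEpoch α β b g1 g2 σ t (x0, y0)).2) :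
    V (simEpoch α β b g1 g2 σ q (x0, y0)).1 (simEpoch α β b g1 g2 σ q (x0, y0)).2 - V x0 y0
      ≤ -((lam + 1) / 2) * ((q : ℝ) * α) * ‖gradient Φ x0‖ ^ 2
        + (lam + 1) * ((q : ℝ) * α) * ‖gradient Φ x0 - G1 x0 y0‖ ^ 2
        + ((q : ℝ) * α / 2) * ‖G1 x0 y0‖ ^ 2
        - ((q : ℝ) * β / 2) * ‖G2 x0 y0‖ ^ 2
        + (lam + 1 / 2) * ((q : ℝ) * α) * ‖gk - G1 x0 y0‖ ^ 2
        + ((q : ℝ) * β / 2) * ‖hk - G2 x0 y0‖ ^ 2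
        - (lam - ((lam + 1) * (L / μ2 + 1) + 1) * L * ((q : ℝ) * α)) * ((q : ℝ) * α / 2) * ‖gk‖ ^ 2
        - (1 - L * ((q : ℝ) * β)) * ((q : ℝ) * β / 2) * ‖hk‖ ^ 2 := by
  obtain rfl : V = potential lam Φs Φ Fm := funext₂ hV
  exact sim_epoch_naive_recurrence_general (hq ▸ hn) hq.ge hL.le hμ2 (by linarith) hFm hG1 hG2
    (fun i => hasLipschitzGradient_uncurryL2 hL.le (hg1 i) (hg2 i) (hsmooth i)) hΦ hPL2 hα.le β Φs
    σ x0 y0 hgk hhk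
end

section
/- Suppose f satisfies Assumptions 1 (each f_i is L-smooth) and 2 (component gradient variance with constants A,B ≥ 0), n > 1, and the permutation σ_k is sampled uniformly at random from the symmetric group on {1,…,n}. If the step sizes satisfy α² + β² ≤ 1/(3q(q−1)L²), then the iterates of the k-th epoch of mini-batch simSGDA-RR started at z₀^k satisfy E_k[G_k] ≤ 2( q² + (q(q−1)/(n−1))A )·( α²‖∇₁f(z₀^k)‖² + β²‖∇₂f(z₀^k)‖² ) + (2q(q−1)/(n−1))(α² + β²)B, where E_k denotes expectation over σ_k given z₀^k and G_k := (1/q)∑_{t=1}^q ‖z_{t−1}^k − z₀^k‖². -/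
/-!
The joint iterate `z = (x; y)` moves along mini-batch averages of the single family of fields
`dᵢ = (-α ∇₁fᵢ, β ∇₂fᵢ)`, whose squared Lipschitz constant is at most `c = (α² + β²) L²`.

For a fixed permutation, compare `z_t - z₀` with the sum `S_t` of the first `t` mini-batch averages
frozen at `z₀`: with `T = ∑ ‖z_t - z₀‖²`, Cauchy-Schwarz gives
`T ≤ c q (q - 1) T + 2 ∑ ‖S_t‖²`, and the step-size condition, `c q (q - 1) ≤ 1 / 3`, turns this
into `T ≤ 3 ∑ ‖S_t‖²`.

The sum `S_t` is a sample of `b t` fields drawn without replacement and divided by `b`, so that with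
`d` the mean and `v` the variance of the `dᵢ(z₀)` its second moment is exactly
`t² ‖d‖² + t (q - t) v / (n - 1)`. Keeping the two parts orthogonal, rather than splitting them by
`‖u + w‖² ≤ 2 ‖u‖² + 2 ‖w‖²`, saves a factor `2` over the bound to be proved.
-/

open Finset
open scoped BigOperators

section Sums

lemma two_mul_sum_range_natCast {R : Type*} [CommRing R] (q : ℕ) :
    2 * ∑ t ∈ range q, (t : R) = q * (q - 1) := by
  induction q with
  | zero => simp
  | succ q ih => rw [sum_range_succ, mul_add, ih]; push_cast; ring

lemma six_mul_sum_range_natCast_sq {R : Type*} [CommRing R] (q : ℕ) :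
    6 * ∑ t ∈ range q, (t : R) ^ 2 = q * (q - 1) * (2 * q - 1) := by
  induction q with
  | zero => simp
  | succ q ih => rw [sum_range_succ, mul_add, ih]; push_cast; ring

lemma natCast_mul_sub_one_nonneg (q : ℕ) : (0 : ℝ) ≤ q * (q - 1) := by
  rw [← two_mul_sum_range_natCast]
  positivity

lemma three_mul_sum_range_sq_mul_add_le (q : ℕ) {M W : ℝ} (hM : 0 ≤ M) (hW : 0 ≤ W) :
    3 * ∑ t ∈ range q, ((t : ℝ) ^ 2 * M + t * (q - t) * W)
      ≤ q * (q ^ 2 * M + q * (q - 1) * W) := by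
  have hlin := two_mul_sum_range_natCast (R := ℝ) q
  have hsq := six_mul_sum_range_natCast_sq (R := ℝ) q
  have hM' : 3 * ∑ t ∈ range q, (t : ℝ) ^ 2 ≤ q * q ^ 2 := by
    linear_combination hsq / 2 + 3 / 2 * natCast_mul_sub_one_nonneg q + q.cast_nonneg (α := ℝ)
  have hW' : 3 * ∑ t ∈ range q, (t : ℝ) * (q - t) ≤ q * (q * (q - 1)) := by
    have hsplit : ∑ t ∈ range q, (t : ℝ) * (q - t)
        = q * ∑ t ∈ range q, (t : ℝ) - ∑ t ∈ range q, (t : ℝ) ^ 2 := by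
      rw [mul_sum, ← sum_sub_distrib]
      exact sum_congr rfl fun t _ => by ring
    have hcube : (0 : ℝ) ≤ q * (q - 1) ^ 2 := by positivity
    rw [hsplit]
    linear_combination (3 / 2 * q : ℝ) * hlin - hsq / 2 + hcube / 2
  rw [sum_add_distrib, ← sum_mul, ← sum_mul]
  linear_combination hM' * M + hW' * W

lemma sum_sub_inv_card_smul_sum {V : Type*} [AddCommGroup V] [Module ℝ V] {n : ℕ} (v : Fin n → V) :
    ∑ i, (v i - (n : ℝ)⁻¹ • ∑ j, v j) = 0 := by
  rcases n.eq_zero_or_pos with rfl | hn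
  · simp
  · rw [sum_sub_distrib, sum_const, card_univ, Fintype.card_fin, ← Nat.cast_smul_eq_nsmul ℝ,
      smul_inv_smul₀ (by positivity), sub_self]

variable {V : Type*} [SeminormedAddCommGroup V]

lemma norm_add_sq_le_two_mul (a b : V) : ‖a + b‖ ^ 2 ≤ 2 * (‖a‖ ^ 2 + ‖b‖ ^ 2) :=
  (pow_le_pow_left₀ (norm_nonneg _) (norm_add_le a b) 2).trans add_sq_le

lemma norm_sum_sq_le_card_mul {ι : Type*} (s : Finset ι) (v : ι → V) :
    ‖∑ i ∈ s, v i‖ ^ 2 ≤ #s * ∑ i ∈ s, ‖v i‖ ^ 2 :=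
  (pow_le_pow_left₀ (norm_nonneg _) (norm_sum_le _ _) 2).trans sq_sum_le_card_mul_sum_sq

end Sums

section Trajectories

variable {V : Type*} [SeminormedAddCommGroup V]

lemma norm_sub_zero_sq_le (z w : ℕ → V) (t : ℕ) :
    ‖z t - z 0‖ ^ 2
      ≤ 2 * (t * ∑ s ∈ range t, ‖z (s + 1) - z s - w s‖ ^ 2 + ‖∑ s ∈ range t, w s‖ ^ 2) := by
  have hsplit : z t - z 0 = ∑ s ∈ range t, (z (s + 1) - z s - w s) + ∑ s ∈ range t, w s := by
    rw [← sum_add_distrib, ← sum_range_sub]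
    simp only [sub_add_cancel]
  have herr := norm_sum_sq_le_card_mul (range t) fun s => z (s + 1) - z s - w s
  rw [card_range] at herr
  rw [hsplit]
  exact (norm_add_sq_le_two_mul _ _).trans (by gcongr)

lemma sum_norm_sub_zero_sq_le {q : ℕ} {c : ℝ} (hc : 0 ≤ c) (hcq : c * (3 * q * (q - 1)) ≤ 1)
    {z w : ℕ → V} (hw : ∀ s, ‖z (s + 1) - z s - w s‖ ^ 2 ≤ c * ‖z s - z 0‖ ^ 2) :
    ∑ t ∈ range q, ‖z t - z 0‖ ^ 2 ≤ 3 * ∑ t ∈ range q, ‖∑ s ∈ range t, w s‖ ^ 2 := by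
  set T := ∑ t ∈ range q, ‖z t - z 0‖ ^ 2 with hT
  have herr : ∀ t ∈ range q, ∑ s ∈ range t, ‖z (s + 1) - z s - w s‖ ^ 2 ≤ c * T := by
    intro t ht
    rw [hT, mul_sum]
    exact (sum_le_sum fun s _ => hw s).trans <| sum_le_sum_of_subset_of_nonneg
      (range_subset_range.2 (mem_range.1 ht).le) fun s _ _ => by positivity
  have hself : T ≤ c * (q * (q - 1)) * T + 2 * ∑ t ∈ range q, ‖∑ s ∈ range t, w s‖ ^ 2 := by
    calc T ≤ ∑ t ∈ range q, 2 * (t * (c * T) + ‖∑ s ∈ range t, w s‖ ^ 2) :=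
          sum_le_sum fun t ht => (norm_sub_zero_sq_le z w t).trans (by gcongr; exact herr t ht)
      _ = _ := by
          rw [← mul_sum, sum_add_distrib, ← sum_mul]
          linear_combination (c * T) * two_mul_sum_range_natCast (R := ℝ) q
  linear_combination (3 / 2 : ℝ) * hself + T / 2 * hcq

end Trajectories

section Sampling

variable {ι : Type*} [Fintype ι] [DecidableEq ι]

lemma expect_perm_apply {M : Type*} [AddCommMonoid M] [Module ℚ≥0 M] (f : ι → M) (a : ι) :
    𝔼 σ : Equiv.Perm ι, f (σ a) = 𝔼 i, f i := by
  have : Nonempty ι := ⟨a⟩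
  have hswap : ∀ b, 𝔼 σ : Equiv.Perm ι, f (σ b) = 𝔼 σ : Equiv.Perm ι, f (σ a) := fun b =>
    Fintype.expect_equiv (Equiv.mulRight (Equiv.swap a b)) _ _ (by simp)
  calc 𝔼 σ : Equiv.Perm ι, f (σ a)
      = 𝔼 b, 𝔼 σ : Equiv.Perm ι, f (σ b) := by simp only [hswap, Fintype.expect_const]
    _ = 𝔼 σ : Equiv.Perm ι, 𝔼 b, f (σ b) := expect_comm _ _ _
    _ = 𝔼 _σ : Equiv.Perm ι, 𝔼 i, f i :=
        expect_congr rfl fun σ _ => Fintype.expect_equiv σ _ _ fun _ => rfl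
    _ = 𝔼 i, f i := Fintype.expect_const _

variable {V : Type*} [NormedAddCommGroup V] [InnerProductSpace ℝ V] {v : ι → V}

-- Clearing the denominator `N - 1` makes this and the next identity valid for `N ≤ 1` as well.
lemma card_sub_one_mul_expect_perm_inner (hv : ∑ i, v i = 0) {a b : ι} (hab : a ≠ b) :
    ((Fintype.card ι : ℝ) - 1) * 𝔼 σ : Equiv.Perm ι, inner ℝ (v (σ a)) (v (σ b))
      = -𝔼 i, ‖v i‖ ^ 2 := by
  have hswap : ∀ c ∈ univ.erase a, 𝔼 σ : Equiv.Perm ι, inner ℝ (v (σ a)) (v (σ c))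
      = 𝔼 σ : Equiv.Perm ι, inner ℝ (v (σ a)) (v (σ b)) := fun c hc =>
    Fintype.expect_equiv (Equiv.mulRight (Equiv.swap b c)) _ _ <| by
      simp [Equiv.swap_apply_of_ne_of_ne hab (ne_of_mem_erase hc).symm]
  have hzero : ∑ c, 𝔼 σ : Equiv.Perm ι, inner ℝ (v (σ a)) (v (σ c)) = 0 := by
    rw [← expect_sum_comm]
    refine expect_eq_zero fun σ _ => ?_
    rw [← inner_sum, Equiv.sum_comp σ v, hv, inner_zero_right]
  have hdiag : 𝔼 σ : Equiv.Perm ι, inner ℝ (v (σ a)) (v (σ a)) = 𝔼 i, ‖v i‖ ^ 2 := by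
    simp only [real_inner_self_eq_norm_sq]
    exact expect_perm_apply (fun i => ‖v i‖ ^ 2) a
  rw [← add_sum_erase _ _ (mem_univ a), sum_congr rfl hswap, hdiag, sum_const, nsmul_eq_mul,
    cast_card_erase_of_mem (mem_univ a), card_univ] at hzero
  linear_combination hzero

lemma card_sub_one_mul_expect_perm_norm_sum_sq (hv : ∑ i, v i = 0) (S : Finset ι) :
    ((Fintype.card ι : ℝ) - 1) * 𝔼 σ : Equiv.Perm ι, ‖∑ j ∈ S, v (σ j)‖ ^ 2
      = #S * (Fintype.card ι - #S) * 𝔼 i, ‖v i‖ ^ 2 := by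
  have hpair : ∀ j k, ((Fintype.card ι : ℝ) - 1) *
      𝔼 σ : Equiv.Perm ι, inner ℝ (v (σ k)) (v (σ j))
        = (if j = k then Fintype.card ι * 𝔼 i, ‖v i‖ ^ 2 else 0) - 𝔼 i, ‖v i‖ ^ 2 := by
    intro j k
    split_ifs with h
    · simp only [h, real_inner_self_eq_norm_sq]
      rw [expect_perm_apply (fun i => ‖v i‖ ^ 2) k]
      ring
    · rw [card_sub_one_mul_expect_perm_inner hv (Ne.symm h), zero_sub]
  calc ((Fintype.card ι : ℝ) - 1) * 𝔼 σ : Equiv.Perm ι, ‖∑ j ∈ S, v (σ j)‖ ^ 2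
      = ∑ j ∈ S, ∑ k ∈ S, ((Fintype.card ι : ℝ) - 1) *
          𝔼 σ : Equiv.Perm ι, inner ℝ (v (σ k)) (v (σ j)) := by
        simp only [← real_inner_self_eq_norm_sq, sum_inner, inner_sum, expect_sum_comm, mul_sum]
    _ = ∑ j ∈ S, ∑ k ∈ S,
          ((if j = k then Fintype.card ι * 𝔼 i, ‖v i‖ ^ 2 else 0) - 𝔼 i, ‖v i‖ ^ 2) := by
        simp only [hpair]
    _ = #S * (Fintype.card ι - #S) * 𝔼 i, ‖v i‖ ^ 2 := by
        simp only [sum_sub_distrib, sum_ite_eq, sum_ite_mem, inter_self, sum_const, nsmul_eq_mul]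
        ring

lemma expect_perm_norm_sum_sq {m : V} (hm : ∑ i, (v i - m) = 0) (S : Finset ι) :
    𝔼 σ : Equiv.Perm ι, ‖∑ j ∈ S, v (σ j)‖ ^ 2
      = #S ^ 2 * ‖m‖ ^ 2 + 𝔼 σ : Equiv.Perm ι, ‖∑ j ∈ S, (v (σ j) - m)‖ ^ 2 := by
  have hcross : 𝔼 σ : Equiv.Perm ι, ∑ j ∈ S, inner ℝ m (v (σ j) - m) = 0 := by
    rw [expect_sum_comm]
    refine sum_eq_zero fun j _ => ?_
    rw [expect_perm_apply (fun i => inner ℝ m (v i - m)) j, Fintype.expect_eq_sum_div_card,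
      ← inner_sum, hm, inner_zero_right, zero_div]
  have hexpand : ∀ σ : Equiv.Perm ι, ‖∑ j ∈ S, v (σ j)‖ ^ 2 = #S ^ 2 * ‖m‖ ^ 2
      + 2 * #S * ∑ j ∈ S, inner ℝ m (v (σ j) - m) + ‖∑ j ∈ S, (v (σ j) - m)‖ ^ 2 := by
    intro σ
    have hsplit : ∑ j ∈ S, v (σ j) = (#S : ℝ) • m + ∑ j ∈ S, (v (σ j) - m) := by
      rw [sum_sub_distrib, sum_const, Nat.cast_smul_eq_nsmul, add_sub_cancel]
    rw [hsplit, norm_add_sq_real, norm_smul, real_inner_smul_left, inner_sum, RCLike.norm_natCast]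
    ring
  simp only [hexpand, expect_add_distrib, Fintype.expect_const, ← mul_expect, hcross, mul_zero,
    add_zero]

end Sampling

section Batches

variable {n : ℕ} {E F V : Type*}

section Module

variable [AddCommGroup V] [Module ℝ V]

lemma sum_range_batchAvg (b : ℕ) (g : Fin n → E → F → V) (σ : Equiv.Perm (Fin n)) (t : ℕ)
    (x : E) (y : F) :
    ∑ s ∈ range t, batchAvg b g σ s x y
      = (b : ℝ)⁻¹ • ∑ j with (j : Fin n).val < b * t, g (σ j) x y := by
  induction t with
  | zero => simp
  | succ t ih =>
    rw [sum_range_succ, ih, batchAvg, ← smul_add, ← sum_union]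
    · congr 2
      grind [Nat.mul_succ]
    · rw [disjoint_left]
      grind

end Module

lemma card_batch_le (n b t : ℕ) : #{j : Fin n | b * t ≤ (j : ℕ) ∧ (j : ℕ) < b * (t + 1)} ≤ b :=
  calc _ ≤ #(Ico (b * t) (b * (t + 1))) :=
        card_le_card_of_injOn Fin.val (by simp +contextual [Set.MapsTo]) Fin.val_injective.injOn
    _ = b := by rw [Nat.card_Ico, mul_add, mul_one, Nat.add_sub_cancel_left]

lemma norm_batchAvg_sub_le [SeminormedAddCommGroup V] [NormedSpace ℝ V] (b : ℕ)
    {g : Fin n → E → F → V} {x x' : E} {y y' : F} {K : ℝ} (hK : 0 ≤ K)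
    (hg : ∀ i, ‖g i x y - g i x' y'‖ ≤ K) (σ : Equiv.Perm (Fin n)) (t : ℕ) :
    ‖batchAvg b g σ t x y - batchAvg b g σ t x' y'‖ ≤ K := by
  have hcard : (#{j : Fin n | b * t ≤ (j : ℕ) ∧ (j : ℕ) < b * (t + 1)} : ℝ) ≤ b :=
    Nat.cast_le.2 (card_batch_le n b t)
  rw [batchAvg, batchAvg, ← smul_sub, ← sum_sub_distrib, norm_smul, norm_inv, RCLike.norm_natCast]
  calc _ ≤ (b : ℝ)⁻¹ * (b * K) := by
        gcongr
        refine (norm_sum_le_of_le _ fun j _ => hg (σ j)).trans ?_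
        rw [sum_const, nsmul_eq_mul]
        gcongr
    _ ≤ K := by
        rw [← mul_assoc]
        exact mul_le_of_le_one_left hK inv_mul_le_one

lemma expect_perm_norm_sum_batchAvg_sq [NormedAddCommGroup V] [InnerProductSpace ℝ V]
    {b q : ℕ} (hn : 1 < n) (hq : n = b * q) {g : Fin n → E → F → V} {x : E} {y : F} {m : V}
    (hm : ∑ i, (g i x y - m) = 0) {t : ℕ} (ht : t ≤ q) :
    𝔼 σ : Equiv.Perm (Fin n), ‖∑ s ∈ range t, batchAvg b g σ s x y‖ ^ 2
      = t ^ 2 * ‖m‖ ^ 2 + t * (q - t) * ((𝔼 i, ‖g i x y - m‖ ^ 2) / (n - 1)) := by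
  have hb : (b : ℝ) ≠ 0 := by rintro h; simp_all
  have hn1 : (n : ℝ) - 1 ≠ 0 := (sub_pos.2 (Nat.one_lt_cast.2 hn)).ne'
  have hnq : (n : ℝ) = b * q := by exact_mod_cast hq
  have hcard : #{j : Fin n | (j : ℕ) < b * t} = b * t := by
    rw [Fin.card_filter_val_lt, min_eq_right (hq ▸ Nat.mul_le_mul_left b ht)]
  have hvar := card_sub_one_mul_expect_perm_norm_sum_sq hm ({j | (j : ℕ) < b * t} : Finset (Fin n))
  rw [hcard, Fintype.card_fin, Nat.cast_mul] at hvar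
  simp only [sum_range_batchAvg, norm_smul, mul_pow, ← mul_expect]
  rw [expect_perm_norm_sum_sq hm, hcard, eq_div_of_mul_eq hn1 ((mul_comm _ _).trans hvar)]
  rw [norm_inv, RCLike.norm_natCast, Nat.cast_mul, hnq]
  field_simp

end Batches

section Epoch

variable {n : ℕ} {E F : Type*} [NormedAddCommGroup E] [NormedAddCommGroup F]

lemma norm_toLp_sub_sq (p p' : E × F) :
    ‖WithLp.toLp 2 p - WithLp.toLp 2 p'‖ ^ 2 = ‖p.1 - p'.1‖ ^ 2 + ‖p.2 - p'.2‖ ^ 2 := by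
  rw [WithLp.prod_norm_sq_eq_of_L2]
  rfl

variable [NormedSpace ℝ E] [NormedSpace ℝ F]

/-- The update direction `(-α u, β v)` that simultaneous gradient descent-ascent takes along a pair
`(u, v)` of partial gradients. It takes values in the `L²` product, where `‖(x, y)‖² = ‖x‖² + ‖y‖²`,
because the norm of `E × F` is the sup norm. -/
def sgdaDirection (α β : ℝ) : E × F →ₗ[ℝ] WithLp 2 (E × F) :=
  (WithLp.linearEquiv 2 ℝ (E × F)).symm ∘ₗ
    ((-α) • LinearMap.id).prodMap (β • LinearMap.id)

lemma sgdaDirection_apply (α β : ℝ) (u : E) (v : F) :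
    sgdaDirection α β (u, v) = WithLp.toLp 2 (-α • u, β • v) := rfl

lemma norm_sgdaDirection_sq (α β : ℝ) (u : E) (v : F) :
    ‖sgdaDirection α β (u, v)‖ ^ 2 = α ^ 2 * ‖u‖ ^ 2 + β ^ 2 * ‖v‖ ^ 2 := by
  rw [sgdaDirection_apply, WithLp.prod_norm_sq_eq_of_L2, WithLp.toLp_fst, WithLp.toLp_snd]
  simp only [neg_smul, norm_neg, norm_smul, mul_pow, Real.norm_eq_abs, sq_abs]

lemma norm_sgdaDirection_sq_le (α β : ℝ) (u : E) (v : F) :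
    ‖sgdaDirection α β (u, v)‖ ^ 2 ≤ (α ^ 2 + β ^ 2) * (‖u‖ ^ 2 + ‖v‖ ^ 2) := by
  rw [norm_sgdaDirection_sq]
  linear_combination sq_nonneg (α * ‖v‖) + sq_nonneg (β * ‖u‖)

/-- The family of vector fields `(-α ∇₁fᵢ, β ∇₂fᵢ)` whose mini-batch averages are the increments of
the joint iterate `z = (x; y)`. -/
def sgdaField (α β : ℝ) (g1 : Fin n → E → F → E) (g2 : Fin n → E → F → F) (i : Fin n)
    (x : E) (y : F) : WithLp 2 (E × F) :=
  sgdaDirection α β (g1 i x y, g2 i x y)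

lemma sgdaField_sub (α β : ℝ) (g1 : Fin n → E → F → E) (g2 : Fin n → E → F → F) (i : Fin n)
    (x : E) (y : F) (u : E) (v : F) :
    sgdaField α β g1 g2 i x y - sgdaDirection α β (u, v)
      = sgdaDirection α β (g1 i x y - u, g2 i x y - v) := by
  rw [sgdaField, ← map_sub, Prod.mk_sub_mk]

variable (α β : ℝ) (b : ℕ) (g1 : Fin n → E → F → E) (g2 : Fin n → E → F → F)
  (σ : Equiv.Perm (Fin n))

lemma batchAvg_sgdaField (t : ℕ) (x : E) (y : F) :
    batchAvg b (sgdaField α β g1 g2) σ t x y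
      = sgdaDirection α β (batchAvg b g1 σ t x y, batchAvg b g2 σ t x y) := by
  simp only [batchAvg, sgdaField]
  rw [← Prod.smul_mk, ← map_sum, prod_mk_sum, map_smul]

lemma toLp_simEpoch_succ_sub (z : E × F) (t : ℕ) :
    WithLp.toLp 2 (simEpoch α β b g1 g2 σ (t + 1) z) - WithLp.toLp 2 (simEpoch α β b g1 g2 σ t z)
      = batchAvg b (sgdaField α β g1 g2) σ t
          (simEpoch α β b g1 g2 σ t z).1 (simEpoch α β b g1 g2 σ t z).2 := by
  rw [batchAvg_sgdaField, sgdaDirection_apply, ← WithLp.toLp_sub, simEpoch]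
  congr 1
  ext <;> simp [sub_eq_add_neg]

variable {α β b g1 g2}

lemma norm_batchAvg_sgdaField_sub_sq_le {L : ℝ} {x x0 : E} {y y0 : F}
    (hsmooth : ∀ i, ‖g1 i x y - g1 i x0 y0‖ ^ 2 + ‖g2 i x y - g2 i x0 y0‖ ^ 2
      ≤ L ^ 2 * (‖x - x0‖ ^ 2 + ‖y - y0‖ ^ 2)) (t : ℕ) :
    ‖batchAvg b (sgdaField α β g1 g2) σ t x y - batchAvg b (sgdaField α β g1 g2) σ t x0 y0‖ ^ 2
      ≤ (α ^ 2 + β ^ 2) * L ^ 2 * (‖x - x0‖ ^ 2 + ‖y - y0‖ ^ 2) := by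
  set K := (α ^ 2 + β ^ 2) * L ^ 2 * (‖x - x0‖ ^ 2 + ‖y - y0‖ ^ 2) with hK
  have hK0 : 0 ≤ K := by positivity
  have hfield : ∀ i, ‖sgdaField α β g1 g2 i x y - sgdaField α β g1 g2 i x0 y0‖ ≤ √K := by
    intro i
    refine Real.le_sqrt_of_sq_le ?_
    rw [sgdaField.eq_def _ _ _ _ i x0, sgdaField_sub, hK, mul_assoc]
    exact (norm_sgdaDirection_sq_le _ _ _ _).trans (by gcongr; exact hsmooth i)
  exact (Real.le_sqrt (norm_nonneg _) hK0).1
    (norm_batchAvg_sub_le b (Real.sqrt_nonneg K) hfield σ t)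

lemma sum_simEpoch_drift_le {q : ℕ} {L : ℝ} {x0 : E} {y0 : F}
    (hstep : (α ^ 2 + β ^ 2) * (3 * q * (q - 1) * L ^ 2) ≤ 1)
    (hsmooth : ∀ i x y, ‖g1 i x y - g1 i x0 y0‖ ^ 2 + ‖g2 i x y - g2 i x0 y0‖ ^ 2
      ≤ L ^ 2 * (‖x - x0‖ ^ 2 + ‖y - y0‖ ^ 2)) :
    ∑ t ∈ range q, (‖(simEpoch α β b g1 g2 σ t (x0, y0)).1 - x0‖ ^ 2
        + ‖(simEpoch α β b g1 g2 σ t (x0, y0)).2 - y0‖ ^ 2)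
      ≤ 3 * ∑ t ∈ range q,
          ‖∑ s ∈ range t, batchAvg b (sgdaField α β g1 g2) σ s x0 y0‖ ^ 2 := by
  set z : ℕ → WithLp 2 (E × F) := fun t =>
    WithLp.toLp 2 (simEpoch α β b g1 g2 σ t (x0, y0)) with hz
  have hdist : ∀ t, ‖z t - z 0‖ ^ 2 = ‖(simEpoch α β b g1 g2 σ t (x0, y0)).1 - x0‖ ^ 2
      + ‖(simEpoch α β b g1 g2 σ t (x0, y0)).2 - y0‖ ^ 2 := fun t => norm_toLp_sub_sq _ _
  simp only [← hdist]
  refine sum_norm_sub_zero_sq_le (c := (α ^ 2 + β ^ 2) * L ^ 2) (by positivity) (by linarith)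
    fun s => ?_
  rw [hz, toLp_simEpoch_succ_sub, ← hz, hdist]
  exact norm_batchAvg_sgdaField_sub_sq_le σ (fun i => hsmooth i _ _) s

end Epoch

section ExpectedDrift

variable {n b q : ℕ} {E F : Type*} [NormedAddCommGroup E] [InnerProductSpace ℝ E]
  [NormedAddCommGroup F] [InnerProductSpace ℝ F] {L α β : ℝ}
  {g1 : Fin n → E → F → E} {g2 : Fin n → E → F → F} {x0 : E} {y0 : F}

lemma expect_norm_sgdaField_sub_sq (u : E) (v : F) :
    𝔼 i, ‖sgdaField α β g1 g2 i x0 y0 - sgdaDirection α β (u, v)‖ ^ 2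
      = α ^ 2 * ((∑ i, ‖g1 i x0 y0 - u‖ ^ 2) / n) + β ^ 2 * ((∑ i, ‖g2 i x0 y0 - v‖ ^ 2) / n) := by
  simp only [sgdaField_sub, norm_sgdaDirection_sq, Fintype.expect_eq_sum_div_card,
    Fintype.card_fin, sum_add_distrib, ← mul_sum]
  ring

lemma expect_simEpoch_drift_le (hn : 1 < n) (hq : n = b * q)
    (hstep : (α ^ 2 + β ^ 2) * (3 * q * (q - 1) * L ^ 2) ≤ 1)
    (hsmooth : ∀ i x y, ‖g1 i x y - g1 i x0 y0‖ ^ 2 + ‖g2 i x y - g2 i x0 y0‖ ^ 2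
      ≤ L ^ 2 * (‖x - x0‖ ^ 2 + ‖y - y0‖ ^ 2))
    {m : WithLp 2 (E × F)} (hm : ∑ i, (sgdaField α β g1 g2 i x0 y0 - m) = 0) :
    𝔼 σ : Equiv.Perm (Fin n), (q : ℝ)⁻¹ * ∑ t ∈ range q,
        (‖(simEpoch α β b g1 g2 σ t (x0, y0)).1 - x0‖ ^ 2
          + ‖(simEpoch α β b g1 g2 σ t (x0, y0)).2 - y0‖ ^ 2)
      ≤ q ^ 2 * ‖m‖ ^ 2
        + q * (q - 1) * ((𝔼 i, ‖sgdaField α β g1 g2 i x0 y0 - m‖ ^ 2) / (n - 1)) := by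
  have hq0 : (q : ℝ) ≠ 0 := by rintro h; simp_all
  have hn1 : (0 : ℝ) < n - 1 := sub_pos.2 (Nat.one_lt_cast.2 hn)
  set W := (𝔼 i, ‖sgdaField α β g1 g2 i x0 y0 - m‖ ^ 2) / (n - 1 : ℝ)
  have hW0 : 0 ≤ W := div_nonneg (expect_nonneg fun i _ => by positivity) hn1.le
  calc _ ≤ 𝔼 σ : Equiv.Perm (Fin n), (q : ℝ)⁻¹ * (3 * ∑ t ∈ range q,
          ‖∑ s ∈ range t, batchAvg b (sgdaField α β g1 g2) σ s x0 y0‖ ^ 2) :=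
        expect_le_expect fun σ _ => mul_le_mul_of_nonneg_left
          (sum_simEpoch_drift_le σ hstep hsmooth) (by positivity)
    _ = (q : ℝ)⁻¹ * (3 * ∑ t ∈ range q, 𝔼 σ : Equiv.Perm (Fin n),
          ‖∑ s ∈ range t, batchAvg b (sgdaField α β g1 g2) σ s x0 y0‖ ^ 2) := by
        simp only [← mul_expect, expect_sum_comm]
    _ = (q : ℝ)⁻¹ * (3 * ∑ t ∈ range q, ((t : ℝ) ^ 2 * ‖m‖ ^ 2 + t * (q - t) * W)) := by
        rw [sum_congr rfl fun t ht =>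
          expect_perm_norm_sum_batchAvg_sq hn hq hm (mem_range.1 ht).le]
    _ ≤ (q : ℝ)⁻¹ * (q * (q ^ 2 * ‖m‖ ^ 2 + q * (q - 1) * W)) :=
        mul_le_mul_of_nonneg_left
          (three_mul_sum_range_sq_mul_add_le q (by positivity) hW0) (by positivity)
    _ = q ^ 2 * ‖m‖ ^ 2 + q * (q - 1) * W := inv_mul_cancel_left₀ hq0 _

theorem sim_epoch_expected_drift_bound_general (hn : 1 < n) (hq : n = b * q) {A B : ℝ}
    {G1 : E} {G2 : F} (hG1 : G1 = (n : ℝ)⁻¹ • ∑ i, g1 i x0 y0)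
    (hG2 : G2 = (n : ℝ)⁻¹ • ∑ i, g2 i x0 y0)
    (hsmooth : ∀ i x y, ‖g1 i x y - g1 i x0 y0‖ ^ 2 + ‖g2 i x y - g2 i x0 y0‖ ^ 2
      ≤ L ^ 2 * (‖x - x0‖ ^ 2 + ‖y - y0‖ ^ 2))
    (hvar1 : (∑ i, ‖g1 i x0 y0 - G1‖ ^ 2) / n ≤ A * ‖G1‖ ^ 2 + B)
    (hvar2 : (∑ i, ‖g2 i x0 y0 - G2‖ ^ 2) / n ≤ A * ‖G2‖ ^ 2 + B)
    (hstep : (α ^ 2 + β ^ 2) * (3 * q * (q - 1) * L ^ 2) ≤ 1) :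
    (∑ σ : Equiv.Perm (Fin n), (q : ℝ)⁻¹ * ∑ t ∈ range q,
        (‖(simEpoch α β b g1 g2 σ t (x0, y0)).1 - x0‖ ^ 2
          + ‖(simEpoch α β b g1 g2 σ t (x0, y0)).2 - y0‖ ^ 2))
        / (Fintype.card (Equiv.Perm (Fin n)) : ℝ)
      ≤ (q ^ 2 + q * (q - 1) / (n - 1) * A) * (α ^ 2 * ‖G1‖ ^ 2 + β ^ 2 * ‖G2‖ ^ 2)
        + q * (q - 1) / (n - 1) * (α ^ 2 + β ^ 2) * B := by
  have hcentred : ∑ i, (sgdaField α β g1 g2 i x0 y0 - sgdaDirection α β (G1, G2)) = 0 := by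
    simp only [sgdaField_sub]
    rw [← map_sum, ← prod_mk_sum, hG1, hG2, sum_sub_inv_card_smul_sum, sum_sub_inv_card_smul_sum,
      Prod.mk_zero_zero, map_zero]
  have hdrift := expect_simEpoch_drift_le hn hq hstep hsmooth hcentred
  have hW : (0 : ℝ) ≤ q * (q - 1) / (n - 1) :=
    div_nonneg (natCast_mul_sub_one_nonneg q) (sub_nonneg.2 (Nat.one_le_cast.2 hn.le))
  rw [norm_sgdaDirection_sq, expect_norm_sgdaField_sub_sq, Fintype.expect_eq_sum_div_card,
    mul_div_left_comm] at hdrift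
  refine hdrift.trans ?_
  linear_combination (q * (q - 1) / (n - 1) : ℝ) * (α ^ 2 * hvar1 + β ^ 2 * hvar2)

end ExpectedDrift

/-- **Lemma (expected iterate drift within an epoch of simSGDA-RR).**
Under component `L`-smoothness and the component-gradient-variance assumption, for `n > 1`
and step sizes with `α² + β² ≤ 1/(3q(q−1)L²)`, the expected drift
`E_k[G_k] = E_k[(1/q)∑_{t=1}^q ‖z_{t−1} − z₀‖²]` over a uniformly random permutation is at
most `2(q² + (q(q−1)/(n−1))A)(α²‖∇₁f(z₀)‖² + β²‖∇₂f(z₀)‖²) + (2q(q−1)/(n−1))(α²+β²)B`. -/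
theorem sim_epoch_expected_drift_bound
    (dx dy n b q : ℕ) (hn : 1 < n) (hb : 0 < b) (hq : n = b * q)
    (L A B : ℝ) (hL : 0 < L) (hA : 0 ≤ A) (hB : 0 ≤ B)
    (f : Fin n → EuclideanSpace ℝ (Fin dx) → EuclideanSpace ℝ (Fin dy) → ℝ)
    (g1 : Fin n → EuclideanSpace ℝ (Fin dx) → EuclideanSpace ℝ (Fin dy) → EuclideanSpace ℝ (Fin dx))
    (g2 : Fin n → EuclideanSpace ℝ (Fin dx) → EuclideanSpace ℝ (Fin dy) → EuclideanSpace ℝ (Fin dy))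
    (G1 : EuclideanSpace ℝ (Fin dx) → EuclideanSpace ℝ (Fin dy) → EuclideanSpace ℝ (Fin dx))
    (G2 : EuclideanSpace ℝ (Fin dx) → EuclideanSpace ℝ (Fin dy) → EuclideanSpace ℝ (Fin dy))
    (hG1 : ∀ x y, G1 x y = (n : ℝ)⁻¹ • ∑ i, g1 i x y)
    (hG2 : ∀ x y, G2 x y = (n : ℝ)⁻¹ • ∑ i, g2 i x y)
    (hg1 : ∀ i x y, HasGradientAt (fun x' => f i x' y) (g1 i x y) x)
    (hg2 : ∀ i x y, HasGradientAt (fun y' => f i x y') (g2 i x y) y)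
    (hsmooth : ∀ i x y x' y',
      ‖g1 i x y - g1 i x' y'‖ ^ 2 + ‖g2 i x y - g2 i x' y'‖ ^ 2
        ≤ L ^ 2 * (‖x - x'‖ ^ 2 + ‖y - y'‖ ^ 2))
    (hvar1 : ∀ x y, (∑ i, ‖g1 i x y - G1 x y‖ ^ 2) / n ≤ A * ‖G1 x y‖ ^ 2 + B)
    (hvar2 : ∀ x y, (∑ i, ‖g2 i x y - G2 x y‖ ^ 2) / n ≤ A * ‖G2 x y‖ ^ 2 + B)
    (α β : ℝ)
    (hstep : α ^ 2 + β ^ 2 ≤ 1 / (3 * (q : ℝ) * ((q : ℝ) - 1) * L ^ 2))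
    (x0 : EuclideanSpace ℝ (Fin dx)) (y0 : EuclideanSpace ℝ (Fin dy)) :
    (∑ σ : Equiv.Perm (Fin n),
        (q : ℝ)⁻¹ * ∑ t ∈ Finset.range q,
          (‖(simEpoch α β b g1 g2 σ t (x0, y0)).1 - x0‖ ^ 2 +
            ‖(simEpoch α β b g1 g2 σ t (x0, y0)).2 - y0‖ ^ 2)) /
      (Fintype.card (Equiv.Perm (Fin n)) : ℝ)
      ≤ 2 * ((q : ℝ) ^ 2 + ((q : ℝ) * ((q : ℝ) - 1) / ((n : ℝ) - 1)) * A) *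
          (α ^ 2 * ‖G1 x0 y0‖ ^ 2 + β ^ 2 * ‖G2 x0 y0‖ ^ 2)
        + (2 * (q : ℝ) * ((q : ℝ) - 1) / ((n : ℝ) - 1)) * (α ^ 2 + β ^ 2) * B := by
  have hq1 := natCast_mul_sub_one_nonneg q
  have hstep' := mul_le_of_le_div₀ zero_le_one (by rw [mul_assoc 3]; positivity) hstep
  refine (le_mul_of_one_le_left (by positivity) one_le_two).trans ?_
  linear_combination 2 * sim_epoch_expected_drift_bound_general hn hq (hG1 x0 y0) (hG2 x0 y0)
    (fun i x y => hsmooth i x y x0 y0) (hvar1 x0 y0) (hvar2 x0 y0) hstep'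
end

section
/- Let g : ℝ^d → ℝ be differentiable with nonempty, closed optimal set X* := argmin g, and for each x let x_p denote a projection of x onto X* (a nearest point of X* to x). Then the following implications hold: (1) if g is μ-strongly convex, then g is μ-PL and satisfies the μ-restricted secant inequality (RSI); (2) if g is μ-PL, then g satisfies the μ-quadratic growth (QG) condition and the μ-error bound (EB) condition; (3) if g satisfies μ-RSI, then g satisfies μ-EB; (4) if g satisfies μ-EB and is L-smooth, then g is (μ²/L)-PL. -/
open RealInnerProductSpace

/-!
The implication from PL to quadratic growth is the substantial one. Put `f = √(g - g*)`, so that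
`∇f = ∇g / (2 f)` wherever `g > g*`; the PL inequality says exactly that `‖∇f‖ ≥ √(μ / 2)` there.
If `√(μ / 2) * dist(x, X*) ≤ f x` failed, Ekeland's variational principle applied to `f`, started
at `x` and with a slope slightly below `√(μ / 2)`, would give a point outside `X*` at which
`‖∇f‖ < √(μ / 2)`.
-/

open Filter Metric Set Topology

section Ekeland

variable {X : Type*} [MetricSpace X] [CompleteSpace X] {f : X → ℝ} {c : ℝ}

lemma exists_forall_add_mul_dist_le_of_pairwise (hf : Continuous f) (hbdd : BddBelow (range f))
    (hc : 0 < c) {M : Set X} (hM : M.Nonempty)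
    (hpair : ∀ a ∈ M, ∀ b ∈ M, c * dist a b ≤ |f a - f b|) :
    ∃ y, ∀ a ∈ M, f y + c * dist y a ≤ f a := by
  have hbddM : BddBelow (f '' M) := hbdd.mono (image_subset_range f M)
  obtain ⟨v, -, hv, hvM⟩ := exists_seq_tendsto_sInf (hM.image f) hbddM
  choose u huM huv using hvM
  obtain rfl : f ∘ u = v := funext huv
  have hcauchy : CauchySeq u := by
    rw [Metric.cauchySeq_iff]
    intro ε hε
    obtain ⟨N, hN⟩ := Metric.cauchySeq_iff.1 hv.cauchySeq (c * ε) (by positivity)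
    refine ⟨N, fun m hm n hn => lt_of_mul_lt_mul_left ?_ hc.le⟩
    exact (hpair _ (huM m) _ (huM n)).trans_lt (hN m hm n hn)
  obtain ⟨y, hy⟩ := cauchySeq_tendsto_of_complete hcauchy
  have hfy : f y = sInf (f '' M) :=
    tendsto_nhds_unique ((hf.tendsto y).comp hy) hv
  refine ⟨y, fun a ha => ?_⟩
  have hlim : c * dist y a ≤ |f y - f a| :=
    le_of_tendsto_of_tendsto' ((hy.dist tendsto_const_nhds).const_mul c)
      (((hf.tendsto y).comp hy).sub_const (f a)).abs fun n => hpair _ (huM n) a ha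
  have hle : f y ≤ f a := hfy.trans_le (csInf_le hbddM (mem_image_of_mem f ha))
  rw [abs_of_nonpos (sub_nonpos.2 hle)] at hlim
  linarith

theorem ekeland_variational_principle (hf : Continuous f) (hbdd : BddBelow (range f))
    (hc : 0 < c) (x : X) :
    ∃ y, f y + c * dist y x ≤ f x ∧ ∀ z, z ≠ y → f y < f z + c * dist z y := by
  -- `y` will be the least element of a maximal chain of the Brøndsted order `r`.
  let r : X → X → Prop := fun a b => f a + c * dist a b ≤ f b
  obtain ⟨M, hM, hxM⟩ := (IsChain.singleton (r := r) (a := x)).exists_maxChain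
  rw [singleton_subset_iff] at hxM
  have hpair : ∀ a ∈ M, ∀ b ∈ M, c * dist a b ≤ |f a - f b| := by
    intro a ha b hb
    rcases eq_or_ne a b with rfl | hab
    · simp
    rcases hM.1 ha hb hab with h | h
    · exact le_abs.2 (.inr (by linarith))
    · exact le_abs.2 (.inl (by rw [dist_comm]; linarith))
  obtain ⟨y, hy⟩ := exists_forall_add_mul_dist_le_of_pairwise hf hbdd hc ⟨x, hxM⟩ hpair
  refine ⟨y, hy x hxM, fun z hzy => lt_of_not_ge fun hz => ?_⟩
  have hzM : z ∈ M := by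
    have hchain : IsChain r (insert z M) := hM.1.insert fun a ha _ => .inl <| by
      have htri := mul_le_mul_of_nonneg_left (dist_triangle z y a) hc.le
      linarith [hy a ha]
    exact hM.2 hchain (subset_insert z M) ▸ mem_insert z M
  have hdist : 0 < c * dist y z := mul_pos hc (dist_pos.2 hzy.symm)
  rw [dist_comm] at hz
  linarith [hy z hzM]

end Ekeland

section Slope

variable {E : Type*} [NormedAddCommGroup E] [NormedSpace ℝ E] {f : E → ℝ} {c : ℝ}

lemma norm_fderiv_le_of_eventually_le_add {y : E} (hc : 0 ≤ c)
    (h : ∀ᶠ z in 𝓝 y, f y ≤ f z + c * ‖z - y‖) : ‖fderiv ℝ f y‖ ≤ c := by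
  by_cases hf : DifferentiableAt ℝ f y
  swap
  · simpa [fderiv_zero_of_not_differentiableAt hf] using hc
  have hlower (v : E) : -(c * ‖v‖) ≤ fderiv ℝ f y v := by
    have hline : Tendsto (fun t : ℝ => y + t • v) (𝓝[>] 0) (𝓝 y) := by
      refine Tendsto.mono_left ?_ nhdsWithin_le_nhds
      exact Continuous.tendsto' (by fun_prop) 0 y (by simp)
    refine ge_of_tendsto (hf.hasFDerivAt.hasLineDerivAt v).tendsto_slope_zero_right ?_
    filter_upwards [hline.eventually h, self_mem_nhdsWithin] with t ht (ht₀ : 0 < t)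
    rw [add_sub_cancel_left, norm_smul, Real.norm_of_nonneg ht₀.le] at ht
    rw [smul_eq_mul, inv_mul_eq_div, le_div_iff₀ ht₀]
    linarith
  refine ContinuousLinearMap.opNorm_le_bound _ hc fun v => abs_le.2 ⟨hlower v, ?_⟩
  simpa using neg_le_neg (hlower (-v))

theorem mul_infDist_le_of_le_norm_fderiv [CompleteSpace E] (hf : Continuous f)
    (hnonneg : ∀ y, 0 ≤ f y) (hslope : ∀ y, 0 < f y → c ≤ ‖fderiv ℝ f y‖) (x : E) :
    c * infDist x {y | f y = 0} ≤ f x := by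
  have hlt : ∀ b ∈ Ioo 0 c, b * infDist x {y | f y = 0} ≤ f x := by
    rintro b ⟨hb, hbc⟩
    obtain ⟨y, hyx, hy⟩ :=
      ekeland_variational_principle hf ⟨0, forall_mem_range.2 hnonneg⟩ hb x
    have hslope_le : ‖fderiv ℝ f y‖ ≤ b := by
      refine norm_fderiv_le_of_eventually_le_add hb.le (.of_forall fun z => ?_)
      rcases eq_or_ne z y with rfl | hzy
      · simp
      · exact dist_eq_norm z y ▸ (hy z hzy).le
    have hzero : f y = 0 :=
      ((hnonneg y).eq_or_lt.resolve_right fun hpos =>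
        (hslope_le.trans_lt hbc).not_ge (hslope y hpos)).symm
    calc b * infDist x {y | f y = 0} ≤ b * dist y x := by
          rw [dist_comm]
          gcongr
          exact infDist_le_dist_of_mem hzero
      _ ≤ f x := by linarith
  rcases le_or_gt c 0 with hc | hc
  · exact (mul_nonpos_of_nonpos_of_nonneg hc infDist_nonneg).trans (hnonneg x)
  have hlim : Tendsto (fun b => b * infDist x {y | f y = 0}) (𝓝[<] c)
      (𝓝 (c * infDist x {y | f y = 0})) :=
    (tendsto_id.mul_const _).mono_left nhdsWithin_le_nhds
  exact le_of_tendsto hlim (mem_of_superset (Ioo_mem_nhdsLT hc) hlt)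

end Slope

lemma infDist_eq_norm_sub_of_forall_le {E : Type*} [SeminormedAddCommGroup E] {s : Set E} {x p : E}
    (hp : p ∈ s) (hmin : ∀ w ∈ s, ‖x - p‖ ≤ ‖x - w‖) : infDist x s = ‖p - x‖ := by
  rw [norm_sub_rev, ← dist_eq_norm]
  refine (infDist_le_dist_of_mem hp).antisymm ((le_infDist ⟨p, hp⟩).2 fun w hw => ?_)
  simpa only [dist_eq_norm] using hmin w hw

/-- The optimal set `X* = argmin g` of an unconstrained minimization problem. -/
def minimizers {X : Type*} (g : X → ℝ) : Set X :=
  {x | ∀ y, g x ≤ g y}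

variable {E : Type*} [NormedAddCommGroup E] [InnerProductSpace ℝ E] [CompleteSpace E]

/-- `μ`-strong convexity of a differentiable function, in its first-order form. -/
def FirstOrderStronglyConvex (g : E → ℝ) (μ : ℝ) : Prop :=
  ∀ x x', g x + ⟪gradient g x, x' - x⟫ + μ / 2 * ‖x' - x‖ ^ 2 ≤ g x'

/-- The `μ`-Polyak–Łojasiewicz inequality. The minimum value of `g` is encoded as its value at an
arbitrary minimizer, so the condition is vacuous when there is none. -/
def PolyakLojasiewicz (g : E → ℝ) (μ : ℝ) : Prop :=
  ∀ p ∈ minimizers g, ∀ x, 2 * μ * (g x - g p) ≤ ‖gradient g x‖ ^ 2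

/-- The `μ`-restricted secant inequality, relative to a map `π` that plays the role of the
projection `x ↦ x_p` onto the optimal set. -/
def RestrictedSecant (g : E → ℝ) (π : E → E) (μ : ℝ) : Prop :=
  ∀ x, μ * ‖π x - x‖ ^ 2 ≤ ⟪gradient g x, x - π x⟫

/-- The `μ`-error bound condition. The distance `‖x_p - x‖` is encoded as the distance to the
optimal set, so that no projection has to exist. -/
def ErrorBound (g : E → ℝ) (μ : ℝ) : Prop :=
  ∀ x, μ * infDist x (minimizers g) ≤ ‖gradient g x‖

/-- The `μ`-quadratic growth condition, with the minimum value and the distance to the optimal set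
encoded as in `PolyakLojasiewicz` and `ErrorBound`. -/
def QuadraticGrowth (g : E → ℝ) (μ : ℝ) : Prop :=
  ∀ p ∈ minimizers g, ∀ x, μ / 2 * infDist x (minimizers g) ^ 2 ≤ g x - g p

/-- `L`-smoothness of a differentiable function: its gradient is `L`-Lipschitz. -/
def LipschitzGradient (g : E → ℝ) (L : ℝ) : Prop :=
  ∀ x y, ‖gradient g x - gradient g y‖ ≤ L * ‖x - y‖

variable {g : E → ℝ} {π : E → E} {μ L : ℝ}

lemma gradient_eq_zero_of_mem_minimizers {p : E} (hp : p ∈ minimizers g) : gradient g p = 0 := by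
  have hmin : IsLocalMin g p := .of_forall hp
  simp only [gradient, hmin.fderiv_eq_zero, map_zero]

namespace FirstOrderStronglyConvex

lemma mul_sub_le_norm_gradient_sq (hg : FirstOrderStronglyConvex g μ) (hμ : 0 ≤ μ) (x y : E) :
    2 * μ * (g x - g y) ≤ ‖gradient g x‖ ^ 2 := by
  have hsquare := norm_add_sq_real (gradient g x) (μ • (y - x))
  rw [inner_smul_right, norm_smul, Real.norm_of_nonneg hμ] at hsquare
  linarith [mul_le_mul_of_nonneg_left (hg x y) hμ,
    sq_nonneg ‖gradient g x + μ • (y - x)‖]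

lemma polyakLojasiewicz (hg : FirstOrderStronglyConvex g μ) (hμ : 0 ≤ μ) :
    PolyakLojasiewicz g μ :=
  fun p _ x => hg.mul_sub_le_norm_gradient_sq hμ x p

lemma mul_norm_sub_sq_le_inner (hg : FirstOrderStronglyConvex g μ) (x y : E) :
    μ * ‖y - x‖ ^ 2 ≤ ⟪gradient g x - gradient g y, x - y⟫ := by
  have hxy := hg x y
  have hyx := hg y x
  rw [← neg_sub x y, inner_neg_right, norm_neg] at hxy
  rw [inner_sub_left, norm_sub_rev]
  linarith

lemma restrictedSecant (hg : FirstOrderStronglyConvex g μ) (hπ : ∀ x, π x ∈ minimizers g) :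
    RestrictedSecant g π μ := fun x => by
  simpa only [gradient_eq_zero_of_mem_minimizers (hπ x), sub_zero]
    using hg.mul_norm_sub_sq_le_inner x (π x)

end FirstOrderStronglyConvex

namespace PolyakLojasiewicz

lemma sqrt_le_norm_fderiv_sqrt (hPL : PolyakLojasiewicz g μ) {p y : E} (hp : p ∈ minimizers g)
    (hg : DifferentiableAt ℝ g y) (hy : g p < g y) :
    √(μ / 2) ≤ ‖fderiv ℝ (fun z => √(g z - g p)) y‖ := by
  have hgap : 0 < g y - g p := sub_pos.2 hy
  rw [fderiv_sqrt (hg.sub_const _) hgap.ne', fderiv_sub_const, ← toDual_gradient, norm_smul,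
    LinearIsometryEquiv.norm_map, Real.norm_of_nonneg (by positivity)]
  refine Real.sqrt_le_iff.2 ⟨by positivity, ?_⟩
  rw [mul_pow, div_pow, mul_pow, Real.sq_sqrt hgap.le, one_pow, one_div_mul_eq_div,
    le_div_iff₀ (by positivity)]
  linarith [hPL p hp y]

theorem quadraticGrowth (hPL : PolyakLojasiewicz g μ) (hg : Differentiable ℝ g) (hμ : 0 ≤ μ) :
    QuadraticGrowth g μ := by
  intro p hp x
  have hgap (y : E) : 0 ≤ g y - g p := sub_nonneg.2 (hp y)
  have hzeros : {y | √(g y - g p) = 0} = minimizers g := by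
    ext y
    rw [mem_ofPred_eq, Real.sqrt_eq_zero (hgap y), sub_eq_zero]
    exact ⟨fun hy z => hy.trans_le (hp z), fun hy => (hy p).antisymm (hp y)⟩
  have hgrowth : √(μ / 2) * infDist x (minimizers g) ≤ √(g x - g p) := by
    rw [← hzeros]
    exact mul_infDist_le_of_le_norm_fderiv (hg.continuous.sub continuous_const).sqrt
      (fun _ => Real.sqrt_nonneg _)
      (fun y hy => hPL.sqrt_le_norm_fderiv_sqrt hp (hg y) (sub_pos.1 (Real.sqrt_pos.1 hy))) x
  calc μ / 2 * infDist x (minimizers g) ^ 2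
      = (√(μ / 2) * infDist x (minimizers g)) ^ 2 := by
        rw [mul_pow, Real.sq_sqrt (by positivity)]
    _ ≤ √(g x - g p) ^ 2 :=
        pow_le_pow_left₀ (mul_nonneg (Real.sqrt_nonneg _) infDist_nonneg) hgrowth 2
    _ = g x - g p := Real.sq_sqrt (hgap x)

lemma errorBound (hPL : PolyakLojasiewicz g μ) (hQG : QuadraticGrowth g μ) (hμ : 0 ≤ μ)
    (hne : (minimizers g).Nonempty) : ErrorBound g μ := by
  obtain ⟨p, hp⟩ := hne
  intro x
  refine le_of_abs_le (abs_le_of_sq_le_sq ?_ (norm_nonneg _))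
  calc (μ * infDist x (minimizers g)) ^ 2
      = 2 * μ * (μ / 2 * infDist x (minimizers g) ^ 2) := by ring
    _ ≤ 2 * μ * (g x - g p) := by gcongr; exact hQG p hp x
    _ ≤ ‖gradient g x‖ ^ 2 := hPL p hp x

end PolyakLojasiewicz

lemma RestrictedSecant.errorBound (hRSI : RestrictedSecant g π μ) (hμ : 0 ≤ μ)
    (hπ : ∀ x, π x ∈ minimizers g) : ErrorBound g μ := by
  intro x
  have hdist : infDist x (minimizers g) ≤ ‖x - π x‖ :=
    dist_eq_norm x (π x) ▸ infDist_le_dist_of_mem (hπ x)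
  refine (mul_le_mul_of_nonneg_left hdist hμ).trans ?_
  rcases (norm_nonneg (x - π x)).eq_or_lt with hzero | hpos
  · simp [← hzero]
  refine le_of_mul_le_mul_right ?_ hpos
  calc μ * ‖x - π x‖ * ‖x - π x‖ = μ * ‖π x - x‖ ^ 2 := by rw [norm_sub_rev]; ring
    _ ≤ ⟪gradient g x, x - π x⟫ := hRSI x
    _ ≤ ‖gradient g x‖ * ‖x - π x‖ := real_inner_le_norm _ _

namespace LipschitzGradient

theorem le_add_inner_add_sq (hL : LipschitzGradient g L) (hg : Differentiable ℝ g) (x y : E) :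
    g y ≤ g x + ⟪gradient g x, y - x⟫ + L / 2 * ‖y - x‖ ^ 2 := by
  set v := y - x with hv
  have hline (t : ℝ) : HasDerivAt (fun s : ℝ => g (x + s • v)) ⟪gradient g (x + t • v), v⟫ t := by
    have hinner : HasDerivAt (fun s : ℝ => x + s • v) v t := by
      simpa using ((hasDerivAt_id t).smul_const v).const_add x
    rw [inner_gradient_left]
    exact (hg (x + t • v)).hasFDerivAt.comp_hasDerivAt t hinner
  have hbound (t : ℝ) : HasDerivAt
      (fun s : ℝ => g x + ⟪gradient g x, v⟫ * s + L / 2 * ‖v‖ ^ 2 * s ^ 2)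
      (⟪gradient g x, v⟫ + L * t * ‖v‖ ^ 2) t := by
    refine ((((hasDerivAt_id t).const_mul _).const_add _).add
      ((hasDerivAt_pow 2 t).const_mul (L / 2 * ‖v‖ ^ 2))).congr_deriv ?_
    norm_num
    ring
  have hderiv_le : ∀ t ∈ Ico (0 : ℝ) 1,
      ⟪gradient g (x + t • v), v⟫ ≤ ⟪gradient g x, v⟫ + L * t * ‖v‖ ^ 2 := by
    intro t ht
    have hlip : ‖gradient g (x + t • v) - gradient g x‖ ≤ L * (t * ‖v‖) := by
      simpa [norm_smul, abs_of_nonneg ht.1] using hL (x + t • v) x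
    rw [← sub_le_iff_le_add', ← inner_sub_left]
    calc ⟪gradient g (x + t • v) - gradient g x, v⟫
        ≤ ‖gradient g (x + t • v) - gradient g x‖ * ‖v‖ := real_inner_le_norm _ _
      _ ≤ L * (t * ‖v‖) * ‖v‖ := by gcongr
      _ = L * t * ‖v‖ ^ 2 := by ring
  have hone := image_le_of_deriv_right_le_deriv_boundary
    (fun t _ => (hline t).continuousAt.continuousWithinAt)
    (fun t _ => (hline t).hasDerivWithinAt) (by simp)
    (fun t _ => (hbound t).continuousAt.continuousWithinAt)
    (fun t _ => (hbound t).hasDerivWithinAt) hderiv_le (right_mem_Icc.2 zero_le_one)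
  simpa [hv] using hone

lemma sub_le_infDist_sq (hL : LipschitzGradient g L) (hg : Differentiable ℝ g) (hL₀ : 0 < L)
    {p : E} (hp : p ∈ minimizers g) (x : E) :
    g x - g p ≤ L / 2 * infDist x (minimizers g) ^ 2 := by
  have hsqrt : √((g x - g p) / (L / 2)) ≤ infDist x (minimizers g) := by
    refine (le_infDist ⟨p, hp⟩).2 fun q hq => Real.sqrt_le_iff.2 ⟨dist_nonneg, ?_⟩
    have hdescent := hL.le_add_inner_add_sq hg q x
    rw [gradient_eq_zero_of_mem_minimizers hq, inner_zero_left] at hdescent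
    rw [div_le_iff₀' (by positivity), dist_eq_norm]
    linarith [hq p]
  exact (div_le_iff₀' (by positivity)).1 ((Real.sqrt_le_left infDist_nonneg).1 hsqrt)

end LipschitzGradient

lemma ErrorBound.polyakLojasiewicz (hEB : ErrorBound g μ) (hμ : 0 ≤ μ) (hg : Differentiable ℝ g)
    (hL₀ : 0 < L) (hL : LipschitzGradient g L) : PolyakLojasiewicz g (μ ^ 2 / L) := by
  intro p hp x
  calc 2 * (μ ^ 2 / L) * (g x - g p)
      ≤ 2 * (μ ^ 2 / L) * (L / 2 * infDist x (minimizers g) ^ 2) := by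
        gcongr
        exact hL.sub_le_infDist_sq hg hL₀ hp x
    _ = (μ * infDist x (minimizers g)) ^ 2 := by field_simp
    _ ≤ ‖gradient g x‖ ^ 2 := pow_le_pow_left₀ (mul_nonneg hμ infDist_nonneg) (hEB x) 2

theorem pl_sc_rsi_eb_qg_implications_general (hg : Differentiable ℝ g)
    (hπ : ∀ x, π x ∈ minimizers g) (hμ : 0 ≤ μ) :
    (FirstOrderStronglyConvex g μ → PolyakLojasiewicz g μ ∧ RestrictedSecant g π μ) ∧
    (PolyakLojasiewicz g μ → QuadraticGrowth g μ ∧ ErrorBound g μ) ∧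
    (RestrictedSecant g π μ → ErrorBound g μ) ∧
    (∀ L : ℝ, 0 < L → LipschitzGradient g L → ErrorBound g μ → PolyakLojasiewicz g (μ ^ 2 / L)) :=
  ⟨fun hSC => ⟨hSC.polyakLojasiewicz hμ, hSC.restrictedSecant hπ⟩,
    fun hPL =>
      have hQG := hPL.quadraticGrowth hg hμ
      ⟨hQG, hPL.errorBound hQG hμ ⟨π 0, hπ 0⟩⟩,
    fun hRSI => hRSI.errorBound hμ hπ,
    fun _ hL₀ hL hEB => hEB.polyakLojasiewicz hμ hg hL₀ hL⟩

/-- **Proposition (relations between PL, SC, RSI, EB, QG).**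
For a differentiable `g : ℝ^d → ℝ` with nonempty closed optimal set `X* = argmin g`, and
`proj x` a projection of `x` onto `X*`:
(1) `μ`-strong convexity implies `μ`-PL and `μ`-RSI;
(2) `μ`-PL implies `μ`-QG and `μ`-EB;
(3) `μ`-RSI implies `μ`-EB;
(4) `μ`-EB together with `L`-smoothness implies `(μ²/L)`-PL. -/
theorem pl_sc_rsi_eb_qg_implications
    (d : ℕ) (g : EuclideanSpace ℝ (Fin d) → ℝ)
    (hdiff : Differentiable ℝ g)
    (Xs : Set (EuclideanSpace ℝ (Fin d)))
    (hXs : Xs = {x | ∀ y, g x ≤ g y})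
    (hXsne : Xs.Nonempty)
    (hXscl : IsClosed Xs)
    (proj : EuclideanSpace ℝ (Fin d) → EuclideanSpace ℝ (Fin d))
    (hproj : ∀ x, proj x ∈ Xs ∧ ∀ w ∈ Xs, ‖x - proj x‖ ≤ ‖x - w‖)
    (μ : ℝ) (hμ : 0 < μ) :
    -- (1) SC → PL ∧ RSI
    ((∀ x x', g x + ⟪gradient g x, x' - x⟫ + μ / 2 * ‖x' - x‖ ^ 2 ≤ g x') →
      ((∀ xs ∈ Xs, ∀ x, 2 * μ * (g x - g xs) ≤ ‖gradient g x‖ ^ 2) ∧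
       (∀ x, μ * ‖proj x - x‖ ^ 2 ≤ ⟪gradient g x, x - proj x⟫))) ∧
    -- (2) PL → QG ∧ EB
    ((∀ xs ∈ Xs, ∀ x, 2 * μ * (g x - g xs) ≤ ‖gradient g x‖ ^ 2) →
      ((∀ xs ∈ Xs, ∀ x, μ / 2 * ‖proj x - x‖ ^ 2 ≤ g x - g xs) ∧
       (∀ x, μ * ‖proj x - x‖ ≤ ‖gradient g x‖))) ∧
    -- (3) RSI → EB
    ((∀ x, μ * ‖proj x - x‖ ^ 2 ≤ ⟪gradient g x, x - proj x⟫) →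
      (∀ x, μ * ‖proj x - x‖ ≤ ‖gradient g x‖)) ∧
    -- (4) EB ∧ L-smooth → (μ²/L)-PL
    (∀ L : ℝ, 0 < L →
      (∀ x y, ‖gradient g x - gradient g y‖ ≤ L * ‖x - y‖) →
      (∀ x, μ * ‖proj x - x‖ ≤ ‖gradient g x‖) →
      ∀ xs ∈ Xs, ∀ x, 2 * (μ ^ 2 / L) * (g x - g xs) ≤ ‖gradient g x‖ ^ 2) := by
  obtain rfl : Xs = minimizers g := hXs
  simpa only [FirstOrderStronglyConvex, PolyakLojasiewicz, RestrictedSecant, ErrorBound,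
    QuadraticGrowth, LipschitzGradient, infDist_eq_norm_sub_of_forall_le (hproj _).1 (hproj _).2]
    using pl_sc_rsi_eb_qg_implications_general hdiff (fun x => (hproj x).1) hμ.le
end

section
/- Let g : ℝ^{d_x} × ℝ^{d_y} → ℝ be L-smooth, suppose that for each fixed x the function −g(x;·) is μ₂-PL (i.e., ‖∇₂g(x;y)‖² ≥ 2μ₂(Φ(x) − g(x;y)) where Φ(x) := max_{y'} g(x;y')), and that for each x the set Y*_x := argmax_{y'} g(x;y') is nonempty and closed; let κ₂ := L/μ₂. Then for any x₀, x₁ and any y₀* ∈ Y*_{x₀}, every projection y₁* of y₀* onto the set Y*_{x₁} satisfies ‖y₀* − y₁*‖ ≤ κ₂‖x₀ − x₁‖. In particular, for every y₀* ∈ Y*_{x₀} there exists y₁* ∈ Y*_{x₁} with ‖y₀* − y₁*‖ ≤ κ₂‖x₀ − x₁‖. -/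
/-!
Everything rests on an error bound: if `f ≥ m` satisfies `2 μ (f - m) ≤ ‖f'‖ ^ 2`, then
`μ * dist(y, {f = m}) ≤ ‖f' y‖`. Where `f > m`, the function `√(f - m)` has slope at least
`√(μ / 2)`. For `c < √(μ / 2)`, Ekeland's principle (in a proper space: minimize
`√(f - m) + c * dist(·, y)`) gives a point `z` where the slope is at most `c`, so that `f z = m`,
and also gives `c * dist(y, z) ≤ √(f y - m)`. Letting `c → √(μ / 2)` yields quadratic growth,
`μ / 2 * dist(y, {f = m}) ^ 2 ≤ f y - m`, and one more use of the inequality turns this into the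
error bound. A maximizer of `g x₀` is a critical point of `g x₀`, hence nearly critical for
`g x₁`: there the derivative of `g x₁` has norm at most `L * dist(x₀, x₁)`.
-/

open Filter Topology Metric

lemma exists_add_mul_dist_le_and_forall_le_add {α : Type*} [PseudoMetricSpace α] [ProperSpace α]
    {φ : α → ℝ} {b c : ℝ} (hφ : Continuous φ) (hb : ∀ w, b ≤ φ w) (hc : 0 < c) (y : α) :
    ∃ z, φ z + c * dist z y ≤ φ y ∧ ∀ w, φ z ≤ φ w + c * dist w z := by
  have : Nonempty α := ⟨y⟩
  have hcont : Continuous fun z => φ z + c * dist z y := by fun_prop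
  have hcoercive : Tendsto (fun z => φ z + c * dist z y) (cocompact α) atTop :=
    tendsto_atTop_add_left_of_le _ b hb
      ((tendsto_dist_right_cocompact_atTop y).const_mul_atTop hc)
  obtain ⟨z, hz⟩ := hcont.exists_forall_le hcoercive
  refine ⟨z, by simpa only [dist_self, mul_zero, add_zero] using hz y, fun w => ?_⟩
  have htri : c * dist w y ≤ c * dist w z + c * dist z y := by
    rw [← mul_add]
    gcongr
    exact dist_triangle w z y
  linarith [hz w]

section NormedSpace

variable {E : Type*} [NormedAddCommGroup E] [NormedSpace ℝ E]

lemma norm_le_of_hasFDerivAt_of_eventually_le_add {φ : E → ℝ} {φ' : E →L[ℝ] ℝ} {z : E} {c : ℝ}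
    (hφ : HasFDerivAt φ φ' z) (hc : 0 ≤ c) (hmin : ∀ᶠ w in 𝓝 z, φ z ≤ φ w + c * dist w z) :
    ‖φ'‖ ≤ c := by
  refine le_of_forall_pos_le_add fun ε hε =>
    ContinuousLinearMap.opNorm_le_of_nhds_zero (by positivity) ?_
  have hlower : ∀ᶠ v in 𝓝 (0 : E), -((c + ε) * ‖v‖) ≤ φ' v := by
    rw [← map_add_left_nhds_zero z, eventually_map] at hmin
    filter_upwards [(hasFDerivAt_iff_isLittleO_nhds_zero.1 hφ).bound hε, hmin] with v hv hvmin
    rw [dist_self_add_left] at hvmin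
    linarith [le_of_abs_le hv]
  have hupper := (continuous_neg.tendsto' (0 : E) 0 neg_zero).eventually hlower
  filter_upwards [hlower, hupper] with v hv hnegv
  rw [norm_neg, map_neg] at hnegv
  exact abs_le.2 ⟨hv, neg_le_neg_iff.1 hnegv⟩

/-- The Polyak–Łojasiewicz condition with constant `μ` for a differentiable function `f` bounded
below by `m`. The bound is a parameter, so that no junk value of `⨅ y, f y` can intervene; when
`0 < μ` and `E` is finite-dimensional, it is attained (see `exists_eq`). -/
structure IsPolyakLojasiewicz (μ m : ℝ) (f : E → ℝ) : Prop where
  differentiable : Differentiable ℝ f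
  le_apply (y : E) : m ≤ f y
  mul_sub_le (y : E) : 2 * μ * (f y - m) ≤ ‖fderiv ℝ f y‖ ^ 2

namespace IsPolyakLojasiewicz

variable {μ m : ℝ} {f : E → ℝ}

lemma fderiv_eq_zero (h : IsPolyakLojasiewicz μ m f) {y : E} (hy : f y = m) :
    fderiv ℝ f y = 0 :=
  IsLocalMin.fderiv_eq_zero (Eventually.of_forall fun w => hy ▸ h.le_apply w)

lemma sqrt_le_norm_fderiv_sqrt (h : IsPolyakLojasiewicz μ m f) {y : E} (hy : f y ≠ m) :
    √(μ / 2) ≤ ‖fderiv ℝ (fun z => √(f z - m)) y‖ := by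
  have hpos : 0 < f y - m := sub_pos.2 ((h.le_apply y).lt_of_ne' hy)
  have hderiv := ((h.differentiable y).hasFDerivAt.sub_const m).sqrt hpos.ne'
  rw [hderiv.fderiv, norm_smul, Real.norm_of_nonneg (by positivity)]
  calc √(μ / 2) ≤ √((1 / (2 * √(f y - m)) * ‖fderiv ℝ f y‖) ^ 2) := by
        gcongr
        rw [mul_pow, div_pow, mul_pow, Real.sq_sqrt hpos.le, one_pow, one_div_mul_eq_div,
          le_div_iff₀ (by positivity)]
        linarith [h.mul_sub_le y]
    _ = 1 / (2 * √(f y - m)) * ‖fderiv ℝ f y‖ := Real.sqrt_sq (by positivity)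

variable [ProperSpace E]

lemma exists_eq_and_mul_dist_le_sqrt (h : IsPolyakLojasiewicz μ m f) {c : ℝ} (hc : 0 < c)
    (hcμ : c < √(μ / 2)) (y : E) : ∃ z, f z = m ∧ c * dist y z ≤ √(f y - m) := by
  have hcont : Continuous fun z => √(f z - m) :=
    (h.differentiable.continuous.sub continuous_const).sqrt
  obtain ⟨z, hzy, hz⟩ :=
    exists_add_mul_dist_le_and_forall_le_add hcont (fun w => Real.sqrt_nonneg _) hc y
  refine ⟨z, ?_, ?_⟩
  · by_contra hne
    have hdiff : DifferentiableAt ℝ (fun z => √(f z - m)) z :=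
      ((h.differentiable z).sub_const m).sqrt (sub_ne_zero.2 hne)
    have hslope := norm_le_of_hasFDerivAt_of_eventually_le_add hdiff.hasFDerivAt hc.le
      (Eventually.of_forall hz)
    exact (hcμ.trans_le (h.sqrt_le_norm_fderiv_sqrt hne)).not_ge hslope
  · rw [dist_comm]
    linarith [Real.sqrt_nonneg (f z - m)]

lemma exists_eq (h : IsPolyakLojasiewicz μ m f) (hμ : 0 < μ) : ∃ z, f z = m := by
  obtain ⟨c, hc, hcμ⟩ := exists_between (Real.sqrt_pos.2 (half_pos hμ))
  obtain ⟨z, hz, -⟩ := h.exists_eq_and_mul_dist_le_sqrt hc hcμ 0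
  exact ⟨z, hz⟩

lemma sqrt_mul_infDist_le_sqrt (h : IsPolyakLojasiewicz μ m f) (y : E) :
    √(μ / 2) * infDist y {z | f z = m} ≤ √(f y - m) := by
  by_contra! hlt
  have hdist : 0 < infDist y {z | f z = m} :=
    pos_of_mul_pos_right ((Real.sqrt_nonneg _).trans_lt hlt) (Real.sqrt_nonneg _)
  obtain ⟨c, hlc, hcμ⟩ := exists_between ((div_lt_iff₀ hdist).2 hlt)
  have hc : 0 < c := (by positivity : 0 ≤ √(f y - m) / infDist y {z | f z = m}).trans_lt hlc
  obtain ⟨z, hz, hle⟩ := h.exists_eq_and_mul_dist_le_sqrt hc hcμ y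
  have hinf : c * infDist y {z | f z = m} ≤ c * dist y z := by
    gcongr
    exact infDist_le_dist_of_mem hz
  exact ((div_lt_iff₀ hdist).1 hlc).not_ge (hinf.trans hle)

lemma half_mul_infDist_sq_le_sub (h : IsPolyakLojasiewicz μ m f) (hμ : 0 ≤ μ) (y : E) :
    μ / 2 * infDist y {z | f z = m} ^ 2 ≤ f y - m := by
  have hsq := pow_le_pow_left₀ (mul_nonneg (Real.sqrt_nonneg _) infDist_nonneg)
    (h.sqrt_mul_infDist_le_sqrt y) 2
  rwa [mul_pow, Real.sq_sqrt (by positivity), Real.sq_sqrt (sub_nonneg.2 (h.le_apply y))] at hsq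

lemma mul_infDist_le_norm_fderiv (h : IsPolyakLojasiewicz μ m f) (hμ : 0 ≤ μ) (y : E) :
    μ * infDist y {z | f z = m} ≤ ‖fderiv ℝ f y‖ := by
  refine (sq_le_sq₀ (mul_nonneg hμ infDist_nonneg) (norm_nonneg _)).1 ?_
  calc (μ * infDist y {z | f z = m}) ^ 2
      = 2 * μ * (μ / 2 * infDist y {z | f z = m} ^ 2) := by ring
    _ ≤ 2 * μ * (f y - m) := by gcongr; exact h.half_mul_infDist_sq_le_sub hμ y
    _ ≤ ‖fderiv ℝ f y‖ ^ 2 := h.mul_sub_le y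

lemma exists_eq_and_dist_eq_infDist (h : IsPolyakLojasiewicz μ m f) (hμ : 0 < μ) (y : E) :
    ∃ z, f z = m ∧ dist y z = infDist y {w | f w = m} := by
  have hclosed : IsClosed {w | f w = m} :=
    isClosed_eq h.differentiable.continuous continuous_const
  obtain ⟨z, hz, hdist⟩ := hclosed.exists_infDist_eq_dist (h.exists_eq hμ) y
  exact ⟨z, hz, hdist.symm⟩

end IsPolyakLojasiewicz

theorem argmax_selection_lipschitz_general {X : Type*} [PseudoMetricSpace X] [ProperSpace E]
    {K : NNReal} {μ : ℝ} (hμ : 0 < μ) {g : X → E → ℝ} {Φ : X → ℝ}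
    (hg : ∀ x, Differentiable ℝ (g x))
    (hLip : ∀ y, LipschitzWith K fun x => fderiv ℝ (g x) y)
    (hΦ : ∀ x, IsLUB (Set.range (g x)) (Φ x))
    (hPL : ∀ x y, 2 * μ * (Φ x - g x y) ≤ ‖fderiv ℝ (g x) y‖ ^ 2)
    (x₀ x₁ : X) {y₀ : E} (hy₀ : g x₀ y₀ = Φ x₀) :
    (∀ y₁, (∀ w, g x₁ w = Φ x₁ → dist y₀ y₁ ≤ dist y₀ w) →
        dist y₀ y₁ ≤ K / μ * dist x₀ x₁) ∧
      ∃ y₁, g x₁ y₁ = Φ x₁ ∧ dist y₀ y₁ ≤ K / μ * dist x₀ x₁ := by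
  have hneg (x : X) : IsPolyakLojasiewicz μ (-Φ x) (-g x) :=
    ⟨(hg x).neg, fun y => neg_le_neg ((hΦ x).1 ⟨y, rfl⟩), fun y => by
      simpa only [fderiv_neg, norm_neg, Pi.neg_apply, neg_sub_neg] using hPL x y⟩
  obtain ⟨z, hz, hdist⟩ := (hneg x₁).exists_eq_and_dist_eq_infDist hμ y₀
  have hcrit : fderiv ℝ (g x₀) y₀ = 0 := by
    simpa only [fderiv_neg, neg_eq_zero] using (hneg x₀).fderiv_eq_zero (neg_inj.2 hy₀)
  have hnearly_crit : ‖fderiv ℝ (g x₁) y₀‖ ≤ K * dist x₀ x₁ := by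
    simpa only [hcrit, dist_zero_left] using (hLip y₀).dist_le_mul x₀ x₁
  have herror := (hneg x₁).mul_infDist_le_norm_fderiv hμ.le y₀
  rw [← hdist, fderiv_neg, norm_neg] at herror
  have hbound : dist y₀ z ≤ K / μ * dist x₀ x₁ := by
    rw [div_mul_eq_mul_div, le_div_iff₀' hμ]
    exact herror.trans hnearly_crit
  have hzmax : g x₁ z = Φ x₁ := neg_inj.1 hz
  exact ⟨fun y₁ hy₁ => (hy₁ z hzmax).trans hbound, z, hzmax, hbound⟩

end NormedSpace

section InnerProductSpace

variable {F : Type*} [NormedAddCommGroup F] [InnerProductSpace ℝ F] [CompleteSpace F]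

lemma norm_fderiv_eq_of_hasGradientAt {f : F → ℝ} {v y : F} (h : HasGradientAt f v y) :
    ‖fderiv ℝ f y‖ = ‖v‖ := by
  rw [h.hasFDerivAt.fderiv, LinearIsometryEquiv.norm_map]

lemma lipschitzWith_fderiv_of_sq_add_sq_le {X G : Type*} [SeminormedAddCommGroup X]
    [SeminormedAddCommGroup G] {g : X → F → ℝ} {g₁ : X → F → G} {g₂ : X → F → F} {K : NNReal}
    (hg₂ : ∀ x y, HasGradientAt (g x) (g₂ x y) y)
    (hg : ∀ x y x' y', ‖g₁ x y - g₁ x' y'‖ ^ 2 + ‖g₂ x y - g₂ x' y'‖ ^ 2 ≤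
      K ^ 2 * (‖x - x'‖ ^ 2 + ‖y - y'‖ ^ 2))
    (y : F) : LipschitzWith K fun x => fderiv ℝ (g x) y := by
  refine LipschitzWith.of_dist_le_mul fun x x' => ?_
  have hsq : ‖g₂ x y - g₂ x' y‖ ^ 2 ≤ (K * ‖x - x'‖) ^ 2 := by
    have hxx' := hg x y x' y
    rw [sub_self, norm_zero] at hxx'
    linarith [sq_nonneg ‖g₁ x y - g₁ x' y‖]
  rw [(hg₂ x y).hasFDerivAt.fderiv, (hg₂ x' y).hasFDerivAt.fderiv, LinearIsometryEquiv.dist_map,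
    dist_eq_norm, dist_eq_norm]
  exact (sq_le_sq₀ (norm_nonneg _) (by positivity)).1 hsq

end InnerProductSpace

/-- **Proposition (Lipschitz-continuity-like property of `y*(x)`).**
Let `g : ℝ^{dx} × ℝ^{dy} → ℝ` be `L`-smooth (jointly, expressed through its partial gradients
`g1`, `g2`), suppose `−g(x;·)` is `μ₂`-PL for each `x`, and suppose the argmax sets
`Y*_x = {y | g x y = Φ x}` are nonempty and closed.  Then for any `x₀, x₁` and any
`y₀* ∈ Y*_{x₀}`, every projection `y₁*` of `y₀*` onto `Y*_{x₁}` satisfies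
`‖y₀* − y₁*‖ ≤ (L/μ₂)‖x₀ − x₁‖`; in particular such a `y₁* ∈ Y*_{x₁}` exists. -/
theorem argmax_selection_lipschitz
    (dx dy : ℕ) (L μ2 : ℝ) (hL : 0 < L) (hμ2 : 0 < μ2)
    (g : EuclideanSpace ℝ (Fin dx) → EuclideanSpace ℝ (Fin dy) → ℝ)
    (g1 : EuclideanSpace ℝ (Fin dx) → EuclideanSpace ℝ (Fin dy) → EuclideanSpace ℝ (Fin dx))
    (g2 : EuclideanSpace ℝ (Fin dx) → EuclideanSpace ℝ (Fin dy) → EuclideanSpace ℝ (Fin dy))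
    (hg1 : ∀ x y, HasGradientAt (fun x' => g x' y) (g1 x y) x)
    (hg2 : ∀ x y, HasGradientAt (fun y' => g x y') (g2 x y) y)
    (hsmooth : ∀ x y x' y',
      ‖g1 x y - g1 x' y'‖ ^ 2 + ‖g2 x y - g2 x' y'‖ ^ 2 ≤ L ^ 2 * (‖x - x'‖ ^ 2 + ‖y - y'‖ ^ 2))
    (Φ : EuclideanSpace ℝ (Fin dx) → ℝ)
    (hΦ : ∀ x, IsGreatest (Set.range (g x)) (Φ x))
    (hYcl : ∀ x, IsClosed {y | g x y = Φ x})
    (hPL2 : ∀ x y, 2 * μ2 * (Φ x - g x y) ≤ ‖g2 x y‖ ^ 2) :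
    ∀ x0 x1 y0s, g x0 y0s = Φ x0 →
      ((∀ y1s, g x1 y1s = Φ x1 → (∀ w, g x1 w = Φ x1 → ‖y0s - y1s‖ ≤ ‖y0s - w‖) →
          ‖y0s - y1s‖ ≤ (L / μ2) * ‖x0 - x1‖) ∧
       (∃ y1s, g x1 y1s = Φ x1 ∧ ‖y0s - y1s‖ ≤ (L / μ2) * ‖x0 - x1‖)) := by
  lift L to NNReal using hL.le
  intro x0 x1 y0s hy0
  have h := argmax_selection_lipschitz_general hμ2 (fun x y => (hg2 x y).differentiableAt)
    (lipschitzWith_fderiv_of_sq_add_sq_le hg2 hsmooth) (fun x => (hΦ x).isLUB)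
    (fun x y => norm_fderiv_eq_of_hasGradientAt (hg2 x y) ▸ hPL2 x y) x0 x1 hy0
  simpa only [dist_eq_norm] using And.imp_left (fun hproj y1s _ => hproj y1s) h
end

section
/- Let g : ℝ^{d_x} × ℝ^{d_y} → ℝ be L-smooth, suppose that for each fixed x the function −g(x;·) is μ₂-PL (i.e., ‖∇₂g(x;y)‖² ≥ 2μ₂(Φ(x) − g(x;y)) where Φ(x) := max_{y'} g(x;y')), and that for each x the set Y*_x := argmax_{y'} g(x;y') is nonempty and closed; let κ₂ := L/μ₂. Then Φ is differentiable with ∇Φ(x) = ∇₁g(x; y*(x)) for every choice of y*(x) ∈ Y*_x, and Φ is L(κ₂+1)-smooth (its gradient is L(κ₂+1)-Lipschitz). -/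
/-!
By the Polyak–Łojasiewicz inequality the slope of `√f`, where `f = Φ x' - g x' ·`, is at least
`√(μ / 2)` wherever `f` is positive. Ekeland's variational principle, applied to `√f`, therefore
yields from any point `y` a maximiser of `g x'` at distance at most `r * ‖∇₂g x' y‖`, for each
`r > 1 / μ`. When `y` maximises `g x`, its partial gradient `∇₂g x y` vanishes, so
`‖∇₂g x' y‖ ≤ L ‖x' - x‖`: maximisers can be followed in a Lipschitz way, with constant `r L`.

Comparing `Φ` with `g · y` from below and with `g · z` from above, for such a nearby maximiser `z`
of `g x'`, gives a first-order expansion of `Φ` with quadratic error, and the bound on `‖z - y‖`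
carries over to the gradients. Letting `r` tend to `1 / μ` gives the Lipschitz constant.
-/

open Filter Topology
open scoped NNReal

section Ekeland

lemma exists_mem_forall_two_mul_sub_le {α : Type*} {s : Set α} {φ : α → ℝ}
    (hφ : BddBelow (φ '' s)) {x : α} (hx : x ∈ s) :
    ∃ y ∈ s, ∀ w ∈ s, 2 * φ y - φ x ≤ φ w := by
  have hinf : ∀ w ∈ s, sInf (φ '' s) ≤ φ w := fun w hw => csInf_le hφ (Set.mem_image_of_mem φ hw)
  rcases (hinf x hx).eq_or_lt with heq | hlt
  · exact ⟨x, hx, fun w hw => by linarith [hinf w hw]⟩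
  · obtain ⟨_, ⟨y, hy, rfl⟩, hlt'⟩ := exists_lt_of_csInf_lt ⟨φ x, Set.mem_image_of_mem φ hx⟩
      (show sInf (φ '' s) < (sInf (φ '' s) + φ x) / 2 by linarith)
    exact ⟨y, hy, fun w hw => by linarith [hinf w hw]⟩

variable {α : Type*} [PseudoMetricSpace α] {φ : α → ℝ} {c : ℝ}

/-- Each step at least halves the gap between `φ (u n)` and the infimum of `φ` over the points `w`
with `φ w + c * dist w (u n) ≤ φ (u n)`. -/
lemma exists_seq_forall_two_mul_sub_le (hφ : BddBelow (Set.range φ)) (x₀ : α) :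
    ∃ u : ℕ → α, u 0 = x₀ ∧
      (∀ n, φ (u (n + 1)) + c * dist (u (n + 1)) (u n) ≤ φ (u n)) ∧
      ∀ n w, φ w + c * dist w (u n) ≤ φ (u n) → 2 * φ (u (n + 1)) - φ (u n) ≤ φ w := by
  have hnext (x : α) : ∃ y, φ y + c * dist y x ≤ φ x ∧
      ∀ w, φ w + c * dist w x ≤ φ x → 2 * φ y - φ x ≤ φ w :=
    exists_mem_forall_two_mul_sub_le (s := {w | φ w + c * dist w x ≤ φ x})
      (hφ.mono (Set.image_subset_range _ _)) (by simp)
  choose next hdecr hhalf using hnext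
  refine ⟨fun n => next^[n] x₀, rfl, fun n => ?_, fun n => ?_⟩ <;>
    simp only [Function.iterate_succ_apply']
  exacts [hdecr _, hhalf _]

lemma add_mul_dist_le_of_step (hc : 0 ≤ c) {u : ℕ → α}
    (hu : ∀ n, φ (u (n + 1)) + c * dist (u (n + 1)) (u n) ≤ φ (u n)) {n m : ℕ} (hnm : n ≤ m) :
    φ (u m) + c * dist (u m) (u n) ≤ φ (u n) := by
  induction m, hnm using Nat.le_induction with
  | base => simp
  | succ m _ ih =>
    have htri := mul_le_mul_of_nonneg_left (dist_triangle (u (m + 1)) (u m) (u n)) hc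
    linarith [hu m]

lemma exists_tendsto_of_add_mul_dist_le [CompleteSpace α] (hc : 0 < c)
    (hφ : BddBelow (Set.range φ)) {u : ℕ → α}
    (hu : ∀ ⦃n m⦄, n ≤ m → φ (u m) + c * dist (u m) (u n) ≤ φ (u n)) :
    ∃ z l, Tendsto u atTop (𝓝 z) ∧ Tendsto (fun n => φ (u n)) atTop (𝓝 l) := by
  have hanti : Antitone fun n => φ (u n) := fun n m hnm => by
    have : 0 ≤ c * dist (u m) (u n) := by positivity
    linarith [hu hnm]
  have hbdd : BddBelow (Set.range fun n => φ (u n)) := hφ.mono (Set.range_comp_subset_range u φ)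
  have hl := tendsto_atTop_ciInf hanti hbdd
  set l := ⨅ n, φ (u n)
  have hgap : Tendsto (fun n => (φ (u n) - l) / c) atTop (𝓝 0) := by
    simpa using (hl.sub_const l).div_const c
  have hcauchy : CauchySeq u := cauchySeq_of_le_tendsto_0' _ (fun n m hnm => by
    rw [le_div_iff₀ hc, dist_comm]
    linarith [hu hnm, hanti.le_of_tendsto hl m]) hgap
  obtain ⟨z, hz⟩ := cauchySeq_tendsto_of_complete hcauchy
  exact ⟨z, l, hz, hl⟩

theorem ekeland_variational_principle_s12 [CompleteSpace α] (hφ : LowerSemicontinuous φ)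
    (hbdd : BddBelow (Set.range φ)) (hc : 0 < c) (x₀ : α) :
    ∃ z, φ z + c * dist z x₀ ≤ φ x₀ ∧ ∀ w, φ z ≤ φ w + c * dist w z := by
  obtain ⟨u, rfl, hstep, hhalf⟩ := exists_seq_forall_two_mul_sub_le (c := c) hbdd x₀
  have hchain : ∀ ⦃n m⦄, n ≤ m → φ (u m) + c * dist (u m) (u n) ≤ φ (u n) :=
    fun n m => add_mul_dist_le_of_step hc.le hstep
  obtain ⟨z, l, hz, hl⟩ := exists_tendsto_of_add_mul_dist_le hc hbdd hchain
  have hzl : φ z ≤ l := le_of_forall_lt_imp_le_of_dense fun a ha =>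
    ge_of_tendsto hl <| (hz.eventually (hφ z a ha)).mono fun _ => le_of_lt
  have hmem (n : ℕ) : φ z + c * dist z (u n) ≤ φ (u n) := by
    have hlim : Tendsto (fun m => φ (u m) + c * dist (u m) (u n)) atTop
        (𝓝 (l + c * dist z (u n))) := hl.add ((hz.dist tendsto_const_nhds).const_mul c)
    have := le_of_tendsto hlim ((eventually_ge_atTop n).mono fun m => @hchain n m)
    linarith
  refine ⟨z, hmem 0, fun w => ?_⟩
  by_contra! hw
  have hlw : l ≤ φ w := by
    have hlim : Tendsto (fun n => 2 * φ (u (n + 1)) - φ (u n)) atTop (𝓝 (2 * l - l)) :=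
      ((hl.comp (tendsto_add_atTop_nat 1)).const_mul 2).sub hl
    have := le_of_tendsto' hlim fun n => hhalf n w <| by
      have := mul_le_mul_of_nonneg_left (dist_triangle w z (u n)) hc.le
      linarith [hmem n]
    linarith
  have : 0 ≤ c * dist w z := by positivity
  linarith

end Ekeland

section Derivative

variable {E : Type*} [NormedAddCommGroup E] [NormedSpace ℝ E] {f : E → ℝ}

lemma norm_le_of_forall_le_add_mul_norm_sub {f' : StrongDual ℝ E} {z : E} {c : ℝ} (hc : 0 ≤ c)
    (hf : HasFDerivAt f f' z) (hz : ∀ y, f z ≤ f y + c * ‖y - z‖) : ‖f'‖ ≤ c := by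
  have hlower (v : E) : -(c * ‖v‖) ≤ f' v := by
    refine ge_of_tendsto (hf.hasLineDerivAt v).tendsto_slope_zero_right ?_
    filter_upwards [self_mem_nhdsWithin] with t (ht : 0 < t)
    have h := hz (z + t • v)
    rw [add_sub_cancel_left, norm_smul, Real.norm_of_nonneg ht.le] at h
    rw [smul_eq_mul, inv_mul_eq_div, le_div_iff₀ ht]
    linarith
  refine f'.opNorm_le_bound hc fun v => abs_le.2 ⟨hlower v, ?_⟩
  have h := hlower (-v)
  rw [norm_neg, map_neg] at h
  linarith

lemma abs_sub_sub_apply_le_of_lipschitzWith {f' : E → StrongDual ℝ E} {L : ℝ≥0}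
    (hf : ∀ x, HasFDerivAt f (f' x) x) (hL : LipschitzWith L f') (x y : E) :
    |f y - f x - f' x (y - x)| ≤ L * ‖y - x‖ ^ 2 := by
  have h := (convex_segment x y).norm_image_sub_le_of_norm_hasFDerivWithin_le' (φ := f' x)
    (C := L * ‖y - x‖) (fun z _ => (hf z).hasFDerivWithinAt)
    (fun z hz => (hL.norm_sub_le z x).trans (by gcongr; exact norm_sub_le_of_mem_segment hz))
    (left_mem_segment ℝ x y) (right_mem_segment ℝ x y)
  rwa [mul_assoc, ← sq] at h

lemma hasFDerivAt_of_abs_sub_sub_apply_le {f' : StrongDual ℝ E} {x : E} {C : ℝ}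
    (h : ∀ y, |f y - f x - f' (y - x)| ≤ C * ‖y - x‖ ^ 2) : HasFDerivAt f f' x := by
  have hO : (fun y => f y - f x - f' (y - x)) =O[𝓝 x] fun y => ‖y - x‖ ^ 2 :=
    .of_bound C <| Eventually.of_forall fun y => by simpa using h y
  exact .of_isLittleO <| hO.trans_isLittleO (Asymptotics.isLittleO_pow_sub_sub x one_lt_two)

end Derivative

section PolyakLojasiewicz

variable {E : Type*} [NormedAddCommGroup E] [NormedSpace ℝ E] {f : E → ℝ}

lemma norm_sq_le_of_forall_sqrt_le_add_mul_dist {f' : StrongDual ℝ E} {z : E} {c : ℝ} (hc : 0 ≤ c)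
    (hf : HasFDerivAt f f' z) (hz : 0 < f z) (hslope : ∀ y, √(f z) ≤ √(f y) + c * dist y z) :
    ‖f'‖ ^ 2 ≤ 2 * (2 * c ^ 2) * f z := by
  have hnorm : ‖(1 / (2 * √(f z))) • f'‖ ≤ c :=
    norm_le_of_forall_le_add_mul_norm_sub hc (hf.sqrt hz.ne')
      (by simpa only [dist_eq_norm] using hslope)
  rw [norm_smul, Real.norm_of_nonneg (by positivity), one_div_mul_eq_div,
    div_le_iff₀ (by positivity)] at hnorm
  calc ‖f'‖ ^ 2 ≤ (c * (2 * √(f z))) ^ 2 := by gcongr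
    _ = 2 * (2 * c ^ 2) * √(f z) ^ 2 := by ring
    _ = 2 * (2 * c ^ 2) * f z := by rw [Real.sq_sqrt hz.le]

variable [CompleteSpace E] {f' : E → StrongDual ℝ E} {μ : ℝ}

lemma exists_eq_zero_mul_sq_dist_le_of_pl (hf : ∀ y, HasFDerivAt f (f' y) y) (hf₀ : ∀ y, 0 ≤ f y)
    (hPL : ∀ y, 2 * μ * f y ≤ ‖f' y‖ ^ 2) {ν : ℝ} (hν : 0 < ν) (hνμ : ν < μ) (y : E) :
    ∃ z, f z = 0 ∧ ν * dist z y ^ 2 ≤ 2 * f y := by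
  obtain ⟨c, hc, hcν⟩ : ∃ c : ℝ, 0 < c ∧ 2 * c ^ 2 = ν :=
    ⟨√(ν / 2), by positivity, by rw [Real.sq_sqrt (by positivity)]; ring⟩
  have hcont : Continuous f := continuous_iff_continuousAt.2 fun y => (hf y).continuousAt
  have hbdd : BddBelow (Set.range fun y => √(f y)) :=
    ⟨0, Set.forall_mem_range.2 fun y => Real.sqrt_nonneg (f y)⟩
  obtain ⟨z, hzy, hslope⟩ := ekeland_variational_principle_s12 hcont.sqrt.lowerSemicontinuous hbdd hc y
  refine ⟨z, ?_, ?_⟩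
  · by_contra hne
    have hpos : 0 < f z := (hf₀ z).lt_of_ne' hne
    have hsmall := norm_sq_le_of_forall_sqrt_le_add_mul_dist hc.le (hf z) hpos hslope
    rw [hcν] at hsmall
    have hlt : 2 * ν * f z < 2 * μ * f z := by gcongr
    linarith [hPL z]
  · have hdist : c * dist z y ≤ √(f y) := by linarith [Real.sqrt_nonneg (f z)]
    calc ν * dist z y ^ 2 = 2 * (c * dist z y) ^ 2 := by rw [← hcν]; ring
      _ ≤ 2 * √(f y) ^ 2 := by gcongr
      _ = 2 * f y := by rw [Real.sq_sqrt (hf₀ y)]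

lemma exists_eq_zero_dist_le_of_pl (hf : ∀ y, HasFDerivAt f (f' y) y) (hf₀ : ∀ y, 0 ≤ f y)
    (hPL : ∀ y, 2 * μ * f y ≤ ‖f' y‖ ^ 2) (hμ : 0 < μ) {r : ℝ} (hr : μ⁻¹ < r) (y : E) :
    ∃ z, f z = 0 ∧ dist z y ≤ r * ‖f' y‖ := by
  have hr₀ : 0 < r := (inv_pos.2 hμ).trans hr
  have hν : (r ^ 2 * μ)⁻¹ < μ := by
    rw [inv_lt_iff_one_lt_mul₀ hμ] at hr
    rw [inv_lt_iff_one_lt_mul₀ (by positivity)]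
    nlinarith
  obtain ⟨z, hz, hzy⟩ := exists_eq_zero_mul_sq_dist_le_of_pl hf hf₀ hPL (by positivity) hν y
  refine ⟨z, hz, le_of_sq_le_sq ?_ (by positivity)⟩
  rw [inv_mul_le_iff₀ (by positivity)] at hzy
  calc dist z y ^ 2 ≤ r ^ 2 * (2 * μ * f y) := by linarith
    _ ≤ r ^ 2 * ‖f' y‖ ^ 2 := by gcongr; exact hPL y
    _ = (r * ‖f' y‖) ^ 2 := by ring

end PolyakLojasiewicz

section PrimalFunction

variable {X Y : Type*} {g : X → Y → ℝ} {Φ : X → ℝ} {Lxx Lxy Lyx μ : ℝ≥0}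

lemma exists_maximizer_dist_le [PseudoMetricSpace X] [NormedAddCommGroup Y] [NormedSpace ℝ Y]
    [CompleteSpace Y] {g₂ : X → Y → StrongDual ℝ Y} (hμ : 0 < μ)
    (hg₂ : ∀ x y, HasFDerivAt (g x) (g₂ x y) y) (hyx : ∀ y, LipschitzWith Lyx (g₂ · y))
    (hΦ : ∀ x y, g x y ≤ Φ x) (hPL : ∀ x y, 2 * μ * (Φ x - g x y) ≤ ‖g₂ x y‖ ^ 2)
    {r : ℝ} (hr : (μ : ℝ)⁻¹ < r) {x : X} {y : Y} (hy : g x y = Φ x) (x' : X) :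
    ∃ z, g x' z = Φ x' ∧ dist z y ≤ r * (Lyx * dist x' x) := by
  have hcrit : g₂ x y = 0 :=
    IsLocalMax.hasFDerivAt_eq_zero (.of_forall fun w => (hΦ x w).trans hy.ge) (hg₂ x y)
  have hgrad : ‖g₂ x' y‖ ≤ Lyx * dist x' x := by
    simpa [hcrit] using (hyx y).dist_le_mul x' x
  obtain ⟨z, hz, hzy⟩ := exists_eq_zero_dist_le_of_pl (f := fun w => Φ x' - g x' w)
    (f' := fun w => -g₂ x' w) (fun w => (hg₂ x' w).const_sub (Φ x'))
    (fun w => sub_nonneg.2 (hΦ x' w)) (by simpa using hPL x') (NNReal.coe_pos.2 hμ) hr y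
  rw [norm_neg] at hzy
  have hr₀ : 0 ≤ r := (inv_nonneg.2 μ.coe_nonneg).trans hr.le
  exact ⟨z, (sub_eq_zero.1 hz).symm, hzy.trans (by gcongr)⟩

lemma hasFDerivAt_of_exists_maximizer_dist_le [NormedAddCommGroup X] [NormedSpace ℝ X]
    [PseudoMetricSpace Y] {g₁ : X → Y → StrongDual ℝ X}
    (hg₁ : ∀ x y, HasFDerivAt (g · y) (g₁ x y) x) (hxx : ∀ y, LipschitzWith Lxx (g₁ · y))
    {x : X} (hxy : LipschitzWith Lxy (g₁ x)) (hΦ : ∀ x y, g x y ≤ Φ x) {K : ℝ} (hK : 0 ≤ K)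
    {y : Y} (hy : g x y = Φ x)
    (hnear : ∀ x', ∃ z, g x' z = Φ x' ∧ dist z y ≤ K * dist x' x) :
    HasFDerivAt Φ (g₁ x y) x := by
  refine hasFDerivAt_of_abs_sub_sub_apply_le (C := Lxx + Lxy * K) fun x' => ?_
  obtain ⟨z, hz, hzy⟩ := hnear x'
  have hvary : g₁ x z (x' - x) - g₁ x y (x' - x) ≤ Lxy * K * ‖x' - x‖ ^ 2 := by
    calc g₁ x z (x' - x) - g₁ x y (x' - x) ≤ ‖g₁ x z - g₁ x y‖ * ‖x' - x‖ :=
          (Real.le_norm_self _).trans ((g₁ x z - g₁ x y).le_opNorm (x' - x))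
      _ ≤ Lxy * (K * ‖x' - x‖) * ‖x' - x‖ := by
          rw [← dist_eq_norm (g₁ x z), ← dist_eq_norm x']
          gcongr
          exact (hxy.dist_le_mul z y).trans (by gcongr)
      _ = Lxy * K * ‖x' - x‖ ^ 2 := by ring
  have htaylor (w : Y) := abs_le.1 <|
    abs_sub_sub_apply_le_of_lipschitzWith (fun x => hg₁ x w) (hxx w) x x'
  have hlower := (htaylor y).1
  have hupper := (htaylor z).2
  have : 0 ≤ Lxy * K * ‖x' - x‖ ^ 2 := by positivity
  exact abs_le.2 ⟨by linarith [hΦ x' y], by linarith [hΦ x z]⟩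

theorem primal_function_smooth_general [NormedAddCommGroup X] [NormedSpace ℝ X]
    [NormedAddCommGroup Y] [NormedSpace ℝ Y] [CompleteSpace Y] {g₁ : X → Y → StrongDual ℝ X}
    {g₂ : X → Y → StrongDual ℝ Y} (hμ : 0 < μ)
    (hg₁ : ∀ x y, HasFDerivAt (g · y) (g₁ x y) x) (hg₂ : ∀ x y, HasFDerivAt (g x) (g₂ x y) y)
    (hxx : ∀ y, LipschitzWith Lxx (g₁ · y)) (hxy : ∀ x, LipschitzWith Lxy (g₁ x))
    (hyx : ∀ y, LipschitzWith Lyx (g₂ · y)) (hΦ : ∀ x, IsGreatest (Set.range (g x)) (Φ x))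
    (hPL : ∀ x y, 2 * μ * (Φ x - g x y) ≤ ‖g₂ x y‖ ^ 2) :
    (∀ x y, g x y = Φ x → HasFDerivAt Φ (g₁ x y) x) ∧
      LipschitzWith (Lxx + Lxy * (Lyx / μ)) (fderiv ℝ Φ) := by
  have hle (x : X) (y : Y) : g x y ≤ Φ x := (hΦ x).2 ⟨y, rfl⟩
  have hnear {r : ℝ} (hr : (μ : ℝ)⁻¹ < r) {x : X} {y : Y} (hy : g x y = Φ x) (x' : X) :
      ∃ z, g x' z = Φ x' ∧ dist z y ≤ r * Lyx * dist x' x := by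
    simpa only [mul_assoc] using exists_maximizer_dist_le hμ hg₂ hyx hle hPL hr hy x'
  have hderiv (x : X) (y : Y) (hy : g x y = Φ x) : HasFDerivAt Φ (g₁ x y) x :=
    hasFDerivAt_of_exists_maximizer_dist_le hg₁ hxx (hxy x) hle (by positivity) hy
      (hnear (lt_add_one _) hy)
  refine ⟨hderiv, .of_dist_le_mul fun x' x => ?_⟩
  have hbound (r : ℝ) (hr : (μ : ℝ)⁻¹ < r) :
      dist (fderiv ℝ Φ x') (fderiv ℝ Φ x) ≤ (Lxx + Lxy * (r * Lyx)) * dist x' x := by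
    obtain ⟨y, hy⟩ := (hΦ x).1
    obtain ⟨z, hz, hzy⟩ := hnear hr hy x'
    rw [(hderiv x y hy).fderiv, (hderiv x' z hz).fderiv]
    calc dist (g₁ x' z) (g₁ x y) ≤ dist (g₁ x' z) (g₁ x z) + dist (g₁ x z) (g₁ x y) :=
          dist_triangle _ _ _
      _ ≤ Lxx * dist x' x + Lxy * (r * Lyx * dist x' x) :=
          add_le_add ((hxx z).dist_le_mul x' x) (((hxy x).dist_le_mul z y).trans (by gcongr))
      _ = (Lxx + Lxy * (r * Lyx)) * dist x' x := by ring
  have hlim : Tendsto (fun r : ℝ => (Lxx + Lxy * (r * Lyx)) * dist x' x) (𝓝[>] (μ : ℝ)⁻¹)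
      (𝓝 ((Lxx + Lxy * ((μ : ℝ)⁻¹ * Lyx)) * dist x' x)) :=
    Continuous.continuousWithinAt (by fun_prop)
  simpa [div_eq_inv_mul] using ge_of_tendsto hlim (eventually_mem_nhdsWithin.mono hbound)

end PrimalFunction

lemma le_mul_of_sq_add_sq_le {a b L c : ℝ} (hL : 0 ≤ L) (hc : 0 ≤ c)
    (h : a ^ 2 + b ^ 2 ≤ L ^ 2 * c ^ 2) : a ≤ L * c :=
  le_of_sq_le_sq (by nlinarith) (by positivity)

/-- **Proposition (smoothness of the primal function).**
Let `g : ℝ^{dx} × ℝ^{dy} → ℝ` be `L`-smooth (through partial gradients `g1`, `g2`),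
with `−g(x;·)` `μ₂`-PL for each `x` and argmax sets nonempty and closed.  Then
`Φ(x) = max_{y'} g(x;y')` is differentiable with `∇Φ(x) = ∇₁g(x; y*(x))` for every choice
of `y*(x) ∈ argmax g(x;·)`, and `Φ` is `L(κ₂+1)`-smooth with `κ₂ = L/μ₂`. -/
theorem primal_function_smooth
    (dx dy : ℕ) (L μ2 : ℝ) (hL : 0 < L) (hμ2 : 0 < μ2)
    (g : EuclideanSpace ℝ (Fin dx) → EuclideanSpace ℝ (Fin dy) → ℝ)
    (g1 : EuclideanSpace ℝ (Fin dx) → EuclideanSpace ℝ (Fin dy) → EuclideanSpace ℝ (Fin dx))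
    (g2 : EuclideanSpace ℝ (Fin dx) → EuclideanSpace ℝ (Fin dy) → EuclideanSpace ℝ (Fin dy))
    (hg1 : ∀ x y, HasGradientAt (fun x' => g x' y) (g1 x y) x)
    (hg2 : ∀ x y, HasGradientAt (fun y' => g x y') (g2 x y) y)
    (hsmooth : ∀ x y x' y',
      ‖g1 x y - g1 x' y'‖ ^ 2 + ‖g2 x y - g2 x' y'‖ ^ 2 ≤ L ^ 2 * (‖x - x'‖ ^ 2 + ‖y - y'‖ ^ 2))
    (Φ : EuclideanSpace ℝ (Fin dx) → ℝ)
    (hΦ : ∀ x, IsGreatest (Set.range (g x)) (Φ x))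
    (hYcl : ∀ x, IsClosed {y | g x y = Φ x})
    (hPL2 : ∀ x y, 2 * μ2 * (Φ x - g x y) ≤ ‖g2 x y‖ ^ 2) :
    (∀ x ys, g x ys = Φ x → HasGradientAt Φ (g1 x ys) x) ∧
    (∀ x x', ‖gradient Φ x - gradient Φ x'‖ ≤ L * (L / μ2 + 1) * ‖x - x'‖) := by
  lift L to ℝ≥0 using hL.le
  lift μ2 to ℝ≥0 using hμ2.le
  have hxx (y) : LipschitzWith L (g1 · y) := lipschitzWith_iff_norm_sub_le.2 fun x x' =>
    le_mul_of_sq_add_sq_le hL.le (norm_nonneg _) (by simpa using hsmooth x y x' y)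
  have hxy (x) : LipschitzWith L (g1 x) := lipschitzWith_iff_norm_sub_le.2 fun y y' =>
    le_mul_of_sq_add_sq_le hL.le (norm_nonneg _) (by simpa using hsmooth x y x y')
  have hyx (y) : LipschitzWith L (g2 · y) := lipschitzWith_iff_norm_sub_le.2 fun x x' =>
    le_mul_of_sq_add_sq_le hL.le (norm_nonneg _) (by simpa [add_comm] using hsmooth x y x' y)
  have hdual {n : ℕ} := (InnerProductSpace.toDual ℝ (EuclideanSpace ℝ (Fin n))).lipschitz
  obtain ⟨hderiv, hlip⟩ := primal_function_smooth_general hμ2 hg1 hg2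
    (fun y => one_mul L ▸ hdual.comp (hxx y)) (fun x => one_mul L ▸ hdual.comp (hxy x))
    (fun y => one_mul L ▸ hdual.comp (hyx y)) hΦ (by simpa using hPL2)
  refine ⟨hderiv, fun x x' => ?_⟩
  simpa [gradient, ← map_sub, mul_add, add_comm] using hlip.norm_sub_le x x'
end

section
/- Let g : ℝ^{d_x} × ℝ^{d_y} → ℝ be L-smooth and two-sided PL with constants μ₁ and μ₂: for each fixed y, g(·;y) is μ₁-PL (i.e., ‖∇₁g(x;y)‖² ≥ 2μ₁(g(x;y) − min_{x'} g(x';y))), and for each fixed x, −g(x;·) is μ₂-PL (i.e., ‖∇₂g(x;y)‖² ≥ 2μ₂(Φ(x) − g(x;y))), where Φ(x) := max_{y'} g(x;y') is well-defined with Y*_x nonempty and closed and Φ* := inf_x Φ(x) > −∞. Then g satisfies the primal PL condition: ‖∇Φ(x)‖² ≥ 2μ₁(Φ(x) − Φ*) for every x. -/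
/-!
Let `y` maximize `g(x; ·)`. Then `∇₂g(x; y) = 0`, so `‖∇₂g(x'; y)‖ = O(‖x' - x‖)`, and the PL
inequality in the second variable bounds the nonnegative gap `Φ(x') - g(x'; y)` by a multiple of
`‖∇₂g(x'; y)‖² = O(‖x' - x‖²)`. Hence `∇Φ(x) = ∇₁g(x; y)`. Since `g(·; y) ≤ Φ`, the infimum of
`g(·; y)` is at most `Φ*`, and the PL inequality of `g(·; y)` at `x` becomes that of `Φ`.
-/

open Asymptotics Filter Set Topology

section Derivatives

theorem hasFDerivAt_of_sub_isBigO_norm_sub_pow {𝕜 E F : Type*} [NontriviallyNormedField 𝕜]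
    [NormedAddCommGroup E] [NormedSpace 𝕜 E] [NormedAddCommGroup F] [NormedSpace 𝕜 F]
    {f₁ f : E → F} {f' : E →L[𝕜] F} {x : E} {n : ℕ} (hf : HasFDerivAt f f' x)
    (h : (fun z => f₁ z - f z) =O[𝓝 x] fun z => ‖z - x‖ ^ n) (hn : 1 < n) :
    HasFDerivAt f₁ f' x := by
  have hsub : HasFDerivAt (fun z => f₁ z - f z) (0 : E →L[𝕜] F) x := h.hasFDerivAt hn
  simpa only [sub_add_cancel, zero_add] using hsub.fun_add hf

theorem gradient_eq_zero_of_isLocalMax {E : Type*} [NormedAddCommGroup E] [InnerProductSpace ℝ E]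
    [CompleteSpace E] {f : E → ℝ} {f' x : E} (hmax : IsLocalMax f x)
    (hf : HasGradientAt f f' x) : f' = 0 :=
  (InnerProductSpace.toDual ℝ E).map_eq_zero_iff.1 (hmax.hasFDerivAt_eq_zero hf.hasFDerivAt)

end Derivatives

section Estimates

theorem isBigO_sub_of_mul_sub_le_sq_norm {α E F : Type*} [SeminormedAddCommGroup E]
    [SeminormedAddCommGroup F] {l : Filter α} {φ ψ : α → ℝ} {u : α → E} {v : α → F} {c : ℝ}
    (hc : 0 < c) (hle : ∀ a, φ a ≤ ψ a) (hbound : ∀ a, c * (ψ a - φ a) ≤ ‖u a‖ ^ 2)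
    (hu : u =O[l] v) : (fun a => ψ a - φ a) =O[l] fun a => ‖v a‖ ^ 2 := by
  have hgap : (fun a => ψ a - φ a) =O[l] fun a => ‖u a‖ ^ 2 :=
    .of_bound c⁻¹ <| .of_forall fun a => by
      rw [Real.norm_of_nonneg (sub_nonneg.2 (hle a)), Real.norm_of_nonneg (sq_nonneg _)]
      exact (le_inv_mul_iff₀ hc).2 (hbound a)
  exact hgap.trans (hu.norm_norm.pow 2)

theorem isBigO_snd_sub_of_sq_norm_add_sq_norm_le {E F G H : Type*} [SeminormedAddCommGroup E]
    [SeminormedAddCommGroup F] [SeminormedAddCommGroup G] [SeminormedAddCommGroup H]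
    {u : E → F → G} {v : E → F → H} {L : ℝ}
    (h : ∀ x y x' y', ‖u x y - u x' y'‖ ^ 2 + ‖v x y - v x' y'‖ ^ 2
      ≤ L ^ 2 * (‖x - x'‖ ^ 2 + ‖y - y'‖ ^ 2))
    (l : Filter E) (x : E) (y : F) :
    (fun x' => v x' y - v x y) =O[l] fun x' => x' - x := by
  refine .of_bound |L| (.of_forall fun x' => le_of_sq_le_sq ?_ (by positivity))
  calc ‖v x' y - v x y‖ ^ 2
      ≤ ‖u x' y - u x y‖ ^ 2 + ‖v x' y - v x y‖ ^ 2 := le_add_of_nonneg_left (sq_nonneg _)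
    _ ≤ L ^ 2 * (‖x' - x‖ ^ 2 + ‖y - y‖ ^ 2) := h x' y x y
    _ = (|L| * ‖x' - x‖) ^ 2 := by simp [mul_pow]

end Estimates

section PrimalFunction

variable {E F : Type*} [NormedAddCommGroup E] [InnerProductSpace ℝ E] [CompleteSpace E]
  [NormedAddCommGroup F] [InnerProductSpace ℝ F] [CompleteSpace F]
  {g : E → F → ℝ} {Φ : E → ℝ}

theorem hasGradientAt_primal_of_polyakLojasiewicz {μ : ℝ} (hμ : 0 < μ) {x : E} {y : F} {g1 : E}
    {g2 : E → F} (hg1 : HasGradientAt (fun x' => g x' y) g1 x) (hg2 : HasGradientAt (g x) (g2 x) y)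
    (hg2_lip : (fun x' => g2 x' - g2 x) =O[𝓝 x] fun x' => x' - x)
    (hΦ : ∀ x' y', g x' y' ≤ Φ x') (hy : g x y = Φ x)
    (hPL : ∀ x', 2 * μ * (Φ x' - g x' y) ≤ ‖g2 x'‖ ^ 2) : HasGradientAt Φ g1 x := by
  have hmax : IsLocalMax (g x) y := .of_forall fun y' => (hΦ x y').trans_eq hy.symm
  have hg2_zero : g2 x = 0 := gradient_eq_zero_of_isLocalMax hmax hg2
  have hg2_isBigO : g2 =O[𝓝 x] fun x' => x' - x := by
    simpa only [hg2_zero, sub_zero] using hg2_lip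
  have hgap : (fun x' => Φ x' - g x' y) =O[𝓝 x] fun x' => ‖x' - x‖ ^ 2 :=
    isBigO_sub_of_mul_sub_le_sq_norm (by positivity) (fun x' => hΦ x' y) hPL hg2_isBigO
  exact hasGradientAt_iff_hasFDerivAt.2 <|
    hasFDerivAt_of_sub_isBigO_norm_sub_pow hg1.hasFDerivAt hgap one_lt_two

theorem two_sided_pl_implies_primal_pl_general {μ1 μ2 : ℝ} (hμ1 : 0 ≤ μ1) (hμ2 : 0 < μ2)
    {g1 : E → F → E} {g2 : E → F → F}
    (hg1 : ∀ x y, HasGradientAt (fun x' => g x' y) (g1 x y) x)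
    (hg2 : ∀ x y, HasGradientAt (g x) (g2 x y) y)
    (hg2_lip : ∀ x y, (fun x' => g2 x' y - g2 x y) =O[𝓝 x] fun x' => x' - x)
    (hΦ : ∀ x, IsGreatest (range (g x)) (Φ x)) {Φs : ℝ} (hΦs : IsGLB (range Φ) Φs)
    {Ψ : F → ℝ} (hΨ : ∀ y, IsGLB (range fun x => g x y) (Ψ y))
    (hPL1 : ∀ x y, 2 * μ1 * (g x y - Ψ y) ≤ ‖g1 x y‖ ^ 2)
    (hPL2 : ∀ x y, 2 * μ2 * (Φ x - g x y) ≤ ‖g2 x y‖ ^ 2) (x : E) :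
    2 * μ1 * (Φ x - Φs) ≤ ‖gradient Φ x‖ ^ 2 := by
  obtain ⟨y, hy⟩ := (hΦ x).1
  have hle : ∀ x' y', g x' y' ≤ Φ x' := fun x' y' => (hΦ x').2 (mem_range_self y')
  have hgrad : gradient Φ x = g1 x y :=
    (hasGradientAt_primal_of_polyakLojasiewicz hμ2 (hg1 x y) (hg2 x y) (hg2_lip x y) hle hy
      fun x' => hPL2 x' y).gradient
  have hΨ_le : Ψ y ≤ Φs :=
    hΦs.2 <| forall_mem_range.2 fun x' => ((hΨ y).1 (mem_range_self x')).trans (hle x' y)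
  calc 2 * μ1 * (Φ x - Φs) ≤ 2 * μ1 * (g x y - Ψ y) := by rw [hy]; gcongr
    _ ≤ ‖g1 x y‖ ^ 2 := hPL1 x y
    _ = ‖gradient Φ x‖ ^ 2 := by rw [hgrad]

end PrimalFunction

/-- **Proposition (x-side PL ⇒ primal PL).**
Let `g : ℝ^{dx} × ℝ^{dy} → ℝ` be `L`-smooth and two-sided PL with constants `μ₁`, `μ₂`:
for each fixed `y`, `g(·;y)` is `μ₁`-PL (with minimum value `Ψ y`), and for each fixed `x`,
`−g(x;·)` is `μ₂`-PL.  Then the primal function `Φ(x) = max_{y'} g(x;y')` is `μ₁`-PL: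
`‖∇Φ(x)‖² ≥ 2μ₁(Φ(x) − Φ*)` for every `x`. -/
theorem two_sided_pl_implies_primal_pl
    (dx dy : ℕ) (L μ1 μ2 : ℝ) (hL : 0 < L) (hμ1 : 0 < μ1) (hμ2 : 0 < μ2)
    (g : EuclideanSpace ℝ (Fin dx) → EuclideanSpace ℝ (Fin dy) → ℝ)
    (g1 : EuclideanSpace ℝ (Fin dx) → EuclideanSpace ℝ (Fin dy) → EuclideanSpace ℝ (Fin dx))
    (g2 : EuclideanSpace ℝ (Fin dx) → EuclideanSpace ℝ (Fin dy) → EuclideanSpace ℝ (Fin dy))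
    (hg1 : ∀ x y, HasGradientAt (fun x' => g x' y) (g1 x y) x)
    (hg2 : ∀ x y, HasGradientAt (fun y' => g x y') (g2 x y) y)
    (hsmooth : ∀ x y x' y',
      ‖g1 x y - g1 x' y'‖ ^ 2 + ‖g2 x y - g2 x' y'‖ ^ 2 ≤ L ^ 2 * (‖x - x'‖ ^ 2 + ‖y - y'‖ ^ 2))
    (Φ : EuclideanSpace ℝ (Fin dx) → ℝ) (Φs : ℝ)
    (hΦ : ∀ x, IsGreatest (Set.range (g x)) (Φ x))
    (hYcl : ∀ x, IsClosed {y | g x y = Φ x})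
    (hΦs : IsGLB (Set.range Φ) Φs)
    (Ψ : EuclideanSpace ℝ (Fin dy) → ℝ)
    (hΨ : ∀ y, IsLeast (Set.range (fun x => g x y)) (Ψ y))
    (hPL1 : ∀ x y, 2 * μ1 * (g x y - Ψ y) ≤ ‖g1 x y‖ ^ 2)
    (hPL2 : ∀ x y, 2 * μ2 * (Φ x - g x y) ≤ ‖g2 x y‖ ^ 2) :
    ∀ x, 2 * μ1 * (Φ x - Φs) ≤ ‖gradient Φ x‖ ^ 2 :=
  two_sided_pl_implies_primal_pl_general hμ1.le hμ2 hg1 hg2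
    (fun x => isBigO_snd_sub_of_sq_norm_add_sq_norm_le hsmooth (𝓝 x) x) hΦ hΦs
    (fun y => (hΨ y).isGLB) hPL1 hPL2
end

section
/- Let g : ℝ^{d_x} × ℝ^{d_y} → ℝ with primal function Φ(x) := max_y g(x;y) well-defined, Y*_x := argmax_y g(x;y) nonempty and closed for each x, and Φ* := inf_x Φ(x) > −∞; fix λ > 0. Then: (i) a point (x*;y*) is a global minimax point of g (i.e., g(x*;y) ≤ g(x*;y*) ≤ Φ(x) for all x, y) if and only if V_λ(x*;y*) = 0, where V_λ(x;y) := λ(Φ(x) − Φ*) + (Φ(x) − g(x;y)); (ii) if g is L-smooth and −g(x;·) is μ₂-PL for every x, then every global minimax point of g is a stationary point (∇₁g = ∇₂g = 0 there); (iii) if moreover g(·;y) is μ₁-PL for every y and Φ attains its infimum, then every stationary point of g is a saddle point (g(x*;y) ≤ g(x*;y*) ≤ g(x;y*) for all x, y), and g possesses a saddle point. -/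
/-!
The potential is a sum of two nonnegative terms, so it vanishes exactly when `y` maximizes `g x`
and `x` minimizes `Φ`, which is what being a global minimax point amounts to.

At such a point `(x₀, y₀)` the second partial derivative vanishes, so it is `O(‖x - x₀‖)` at
`(x, y₀)`. The PL inequality squares this bound: `0 ≤ Φ x - g x y₀ = O(‖x - x₀‖ ^ 2)`.
Hence `Φ` is differentiable at `x₀` with the same derivative as `g · y₀`
(a version of Danskin's theorem), and this derivative is zero because `x₀` minimizes `Φ`.

With PL in both variables a stationary point has no primal and no dual gap, so it is a saddle
point; one exists because a minimizer of `Φ`, paired with a best response, is a global minimax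
point and therefore stationary.
-/

open Set Asymptotics InnerProductSpace
open scoped Topology

section Order

variable {α β γ : Type*}

/-- The pair `(x, y)` is a global minimax point of `g`, whose primal function
`x ↦ max_y g x y` is passed as the argument `Φ`. -/
def IsGlobalMinimax [LE γ] (g : α → β → γ) (Φ : α → γ) (x : α) (y : β) : Prop :=
  (∀ y', g x y' ≤ g x y) ∧ ∀ x', g x y ≤ Φ x'

theorem isGlobalMinimax_iff [PartialOrder γ] {g : α → β → γ} {Φ : α → γ} {Φs : γ} {x : α} {y : β}
    (hΦ : IsGreatest (range (g x)) (Φ x)) (hΦs : IsGLB (range Φ) Φs) :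
    IsGlobalMinimax g Φ x y ↔ Φ x = Φs ∧ g x y = Φ x := by
  constructor
  · rintro ⟨hmax, hmin⟩
    have hval : g x y = Φ x :=
      IsGreatest.unique ⟨mem_range_self y, forall_mem_range.2 hmax⟩ hΦ
    have hleast : IsLeast (range Φ) (Φ x) :=
      ⟨mem_range_self x, forall_mem_range.2 fun x' => hval ▸ hmin x'⟩
    exact ⟨hleast.isGLB.unique hΦs, hval⟩
  · rintro ⟨hopt, hval⟩
    exact ⟨fun y' => hval ▸ hΦ.2 (mem_range_self y'),
      fun x' => (hval.trans hopt) ▸ hΦs.1 (mem_range_self x')⟩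

theorem isSaddlePointOn_univ_iff [Preorder γ] {g : α → β → γ} {x : α} {y : β} :
    IsSaddlePointOn univ univ g x y ↔ (∀ y', g x y' ≤ g x y) ∧ ∀ x', g x y ≤ g x' y :=
  ⟨fun h => ⟨fun y' => h x trivial y' trivial, fun x' => h x' trivial y trivial⟩,
    fun h x' _ y' _ => (h.1 y').trans (h.2 x')⟩

/-- The potential `V_λ(x; y) = λ (Φ x - Φ*) + (Φ x - g x y)`, a weighted sum of the suboptimality
of `x` for the primal problem and of `y` for the inner maximization. -/
def minimaxPotential (g : α → β → ℝ) (Φ : α → ℝ) (Φs lam : ℝ) (x : α) (y : β) : ℝ :=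
  lam * (Φ x - Φs) + (Φ x - g x y)

theorem minimaxPotential_eq_zero_iff {g : α → β → ℝ} {Φ : α → ℝ} {Φs lam : ℝ} {x : α} {y : β}
    (hlam : 0 < lam) (hΦs : Φs ≤ Φ x) (hΦ : g x y ≤ Φ x) :
    minimaxPotential g Φ Φs lam x y = 0 ↔ Φ x = Φs ∧ g x y = Φ x := by
  rw [minimaxPotential, add_eq_zero_iff_of_nonneg
    (mul_nonneg hlam.le (sub_nonneg.2 hΦs)) (sub_nonneg.2 hΦ), mul_eq_zero_iff_left hlam.ne',
    sub_eq_zero, sub_eq_zero, eq_comm (a := g x y)]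

end Order

section PolyakLojasiewicz

variable {α β V W : Type*} [SeminormedAddCommGroup V] [SeminormedAddCommGroup W] {μ : ℝ}

theorem nonpos_of_polyakLojasiewicz {δ : ℝ} {v : V} (hμ : 0 < μ) (hPL : 2 * μ * δ ≤ ‖v‖ ^ 2)
    (hv : ‖v‖ = 0) : δ ≤ 0 :=
  nonpos_of_mul_nonpos_right (by simpa [hv] using hPL) (mul_pos two_pos hμ)

theorem isBigO_sq_of_polyakLojasiewicz {δ : α → ℝ} {v : α → V} {w : α → W} {l : Filter α}
    (hμ : 0 < μ) (hδ : ∀ x, 0 ≤ δ x) (hPL : ∀ x, 2 * μ * δ x ≤ ‖v x‖ ^ 2) (hv : v =O[l] w) :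
    δ =O[l] fun x => ‖w x‖ ^ 2 := by
  have hδv : δ =O[l] fun x => ‖v x‖ ^ 2 := .of_bound (2 * μ)⁻¹ <| .of_forall fun x => by
    rw [Real.norm_of_nonneg (hδ x), norm_pow, norm_norm, le_inv_mul_iff₀ (mul_pos two_pos hμ)]
    exact hPL x
  exact hδv.trans (hv.norm_norm.pow 2)

theorem isSaddlePointOn_of_polyakLojasiewicz {g : α → β → ℝ} {Φ : α → ℝ} {Ψ : β → ℝ}
    {μ1 μ2 : ℝ} {x : α} {y : β} {v : V} {w : W} (hμ1 : 0 < μ1) (hμ2 : 0 < μ2)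
    (hΦ : ∀ y', g x y' ≤ Φ x) (hΨ : ∀ x', Ψ y ≤ g x' y)
    (hPL1 : 2 * μ1 * (g x y - Ψ y) ≤ ‖v‖ ^ 2) (hPL2 : 2 * μ2 * (Φ x - g x y) ≤ ‖w‖ ^ 2)
    (hv : ‖v‖ = 0) (hw : ‖w‖ = 0) : IsSaddlePointOn univ univ g x y := fun x' _ y' _ =>
  calc
    g x y' ≤ Φ x := hΦ y'
    _ ≤ g x y := sub_nonpos.1 (nonpos_of_polyakLojasiewicz hμ2 hPL2 hw)
    _ ≤ Ψ y := sub_nonpos.1 (nonpos_of_polyakLojasiewicz hμ1 hPL1 hv)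
    _ ≤ g x' y := hΨ x'

end PolyakLojasiewicz

section Stationarity

variable {E F G H : Type*} [NormedAddCommGroup E] [NormedAddCommGroup F] [NormedAddCommGroup G]
  [NormedAddCommGroup H]

theorem hasFDerivAt_of_sub_isBigO_norm_sub_sq {𝕜 : Type*} [NontriviallyNormedField 𝕜]
    [NormedSpace 𝕜 E] [NormedSpace 𝕜 G] {f h : E → G} {f' : E →L[𝕜] G} {a : E}
    (hf : HasFDerivAt f f' a) (hgap : (fun x => h x - f x) =O[𝓝 a] fun x => ‖x - a‖ ^ 2) :
    HasFDerivAt h f' a := by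
  simpa using hf.fun_add (hgap.hasFDerivAt (𝕜 := 𝕜) one_lt_two)

theorem isBigO_sub_of_locallyLipschitz {f : E → G} (hf : LocallyLipschitz f) (a : E) :
    (fun x => f x - f a) =O[𝓝 a] fun x => x - a := by
  obtain ⟨K, t, ht, hK⟩ := hf a
  refine .of_bound K ?_
  filter_upwards [ht] with x hx
  exact hK.norm_sub_le hx (mem_of_mem_nhds ht)

theorem lipschitzWith_of_joint_sq_le {p : E → F → G} {q : E → F → H} {L : ℝ}
    (hL : ∀ x y x' y', ‖p x y - p x' y'‖ ^ 2 + ‖q x y - q x' y'‖ ^ 2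
      ≤ L ^ 2 * (‖x - x'‖ ^ 2 + ‖y - y'‖ ^ 2)) (y : F) :
    LipschitzWith ‖L‖₊ fun x => q x y := by
  refine LipschitzWith.of_dist_le_mul fun x x' => ?_
  rw [dist_eq_norm, dist_eq_norm, coe_nnnorm]
  refine le_of_sq_le_sq ?_ (by positivity)
  calc
    ‖q x y - q x' y‖ ^ 2 ≤ ‖p x y - p x' y‖ ^ 2 + ‖q x y - q x' y‖ ^ 2 :=
      le_add_of_nonneg_left (sq_nonneg _)
    _ ≤ L ^ 2 * (‖x - x'‖ ^ 2 + ‖y - y‖ ^ 2) := hL x y x' y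
    _ = (‖L‖ * ‖x - x'‖) ^ 2 := by simp [mul_pow]

variable [NormedSpace ℝ E] [NormedSpace ℝ F]

theorem IsGlobalMinimax.partial_fderiv_eq_zero {g : E → F → ℝ} {Φ : E → ℝ} {x₀ : E} {y₀ : F}
    (h : IsGlobalMinimax g Φ x₀ y₀) {μ : ℝ} {g1 : StrongDual ℝ E} {g2 : E → StrongDual ℝ F}
    (hμ : 0 < μ) (hΦ : ∀ x, g x y₀ ≤ Φ x) (hg1 : HasFDerivAt (fun x => g x y₀) g1 x₀)
    (hg2 : HasFDerivAt (g x₀) (g2 x₀) y₀)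
    (hlip : (fun x => g2 x - g2 x₀) =O[𝓝 x₀] fun x => x - x₀)
    (hPL : ∀ x, 2 * μ * (Φ x - g x y₀) ≤ ‖g2 x‖ ^ 2) :
    g1 = 0 ∧ g2 x₀ = 0 := by
  have hg2_zero : g2 x₀ = 0 :=
    IsLocalMax.hasFDerivAt_eq_zero (Filter.Eventually.of_forall h.1) hg2
  have hgap : (fun x => Φ x - g x y₀) =O[𝓝 x₀] fun x => ‖x - x₀‖ ^ 2 :=
    isBigO_sq_of_polyakLojasiewicz hμ (fun x => sub_nonneg.2 (hΦ x)) hPL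
      (by simpa only [hg2_zero, sub_zero] using hlip)
  have hΦ_deriv : HasFDerivAt Φ g1 x₀ := hasFDerivAt_of_sub_isBigO_norm_sub_sq hg1 hgap
  have hval : Φ x₀ ≤ g x₀ y₀ :=
    sub_nonpos.1 (nonpos_of_polyakLojasiewicz hμ (hPL x₀) (by rw [hg2_zero, norm_zero]))
  have hΦ_min : IsLocalMin Φ x₀ := Filter.Eventually.of_forall fun x => hval.trans (h.2 x)
  exact ⟨hΦ_min.hasFDerivAt_eq_zero hΦ_deriv, hg2_zero⟩

theorem minimax_potential_stationary_saddle_general (g : E → F → ℝ) (Φ : E → ℝ) (Φs lam : ℝ)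
    (hΦ : ∀ x, IsGreatest (range (g x)) (Φ x)) (hΦs : IsGLB (range Φ) Φs) (hlam : 0 < lam) :
    (∀ x y, IsGlobalMinimax g Φ x y ↔ minimaxPotential g Φ Φs lam x y = 0) ∧
    (∀ (μ2 : ℝ) (g1 : E → F → StrongDual ℝ E) (g2 : E → F → StrongDual ℝ F), 0 < μ2 →
      (∀ x y, HasFDerivAt (fun x' => g x' y) (g1 x y) x) →
      (∀ x y, HasFDerivAt (g x) (g2 x y) y) →
      (∀ y, LocallyLipschitz fun x => g2 x y) →
      (∀ x y, 2 * μ2 * (Φ x - g x y) ≤ ‖g2 x y‖ ^ 2) →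
      ∀ x y, IsGlobalMinimax g Φ x y → g1 x y = 0 ∧ g2 x y = 0) ∧
    (∀ (μ1 μ2 : ℝ) (g1 : E → F → StrongDual ℝ E) (g2 : E → F → StrongDual ℝ F) (Ψ : F → ℝ),
      0 < μ1 → 0 < μ2 →
      (∀ x y, HasFDerivAt (fun x' => g x' y) (g1 x y) x) →
      (∀ x y, HasFDerivAt (g x) (g2 x y) y) →
      (∀ y, LocallyLipschitz fun x => g2 x y) →
      (∀ x y, 2 * μ2 * (Φ x - g x y) ≤ ‖g2 x y‖ ^ 2) →
      (∀ y, IsLeast (range fun x => g x y) (Ψ y)) →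
      (∀ x y, 2 * μ1 * (g x y - Ψ y) ≤ ‖g1 x y‖ ^ 2) →
      (∃ x, Φ x = Φs) →
      (∀ x y, g1 x y = 0 → g2 x y = 0 → IsSaddlePointOn univ univ g x y) ∧
        ∃ x y, IsSaddlePointOn univ univ g x y) := by
  have hle (x y) : g x y ≤ Φ x := (hΦ x).2 (mem_range_self y)
  refine ⟨fun x y => ?_, fun μ2 g1 g2 hμ2 hg1 hg2 hlip hPL x y h => ?_,
    fun μ1 μ2 g1 g2 Ψ hμ1 hμ2 hg1 hg2 hlip hPL2 hΨ hPL1 ⟨x₀, hx₀⟩ => ?_⟩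
  · rw [isGlobalMinimax_iff (hΦ x) hΦs,
      minimaxPotential_eq_zero_iff hlam (hΦs.1 (mem_range_self x)) (hle x y)]
  · exact h.partial_fderiv_eq_zero hμ2 (hle · y) (hg1 x y) (hg2 x y)
      (isBigO_sub_of_locallyLipschitz (hlip y) x) (hPL · y)
  · have saddle_of_stationary (x y) (h1 : g1 x y = 0) (h2 : g2 x y = 0) :
        IsSaddlePointOn univ univ g x y :=
      isSaddlePointOn_of_polyakLojasiewicz hμ1 hμ2 (hle x) (fun x' => (hΨ y).2 (mem_range_self x'))
        (hPL1 x y) (hPL2 x y) (by rw [h1, norm_zero]) (by rw [h2, norm_zero])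
    obtain ⟨y₀, hy₀⟩ := (hΦ x₀).1
    have hminimax : IsGlobalMinimax g Φ x₀ y₀ := (isGlobalMinimax_iff (hΦ x₀) hΦs).2 ⟨hx₀, hy₀⟩
    obtain ⟨h1, h2⟩ := hminimax.partial_fderiv_eq_zero hμ2 (hle · y₀) (hg1 x₀ y₀) (hg2 x₀ y₀)
      (isBigO_sub_of_locallyLipschitz (hlip y₀) x₀) (hPL2 · y₀)
    exact ⟨saddle_of_stationary, x₀, y₀, saddle_of_stationary x₀ y₀ h1 h2⟩

end Stationarity

/-- **Proposition (optimality notions).**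
For `g : ℝ^{dx} × ℝ^{dy} → ℝ` with well-defined primal function `Φ`, nonempty closed argmax
sets, `Φ* = inf Φ > −∞` and `λ > 0`:
(i) `(x*;y*)` is a global minimax point iff `V_λ(x*;y*) = 0`;
(ii) if `g` is `L`-smooth and `−g(x;·)` is `μ₂`-PL for every `x`, every global minimax point
is a stationary point;
(iii) if moreover `g(·;y)` is `μ₁`-PL for every `y` and `Φ` attains its infimum, every
stationary point is a saddle point, and `g` possesses a saddle point. -/
theorem minimax_potential_stationary_saddle
    (dx dy : ℕ)
    (g : EuclideanSpace ℝ (Fin dx) → EuclideanSpace ℝ (Fin dy) → ℝ)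
    (Φ : EuclideanSpace ℝ (Fin dx) → ℝ) (Φs lam : ℝ)
    (hΦ : ∀ x, IsGreatest (Set.range (g x)) (Φ x))
    (hYcl : ∀ x, IsClosed {y | g x y = Φ x})
    (hΦs : IsGLB (Set.range Φ) Φs)
    (hlam : 0 < lam) :
    -- (i) global minimax ↔ V_λ = 0
    (∀ xs ys,
      ((∀ y, g xs y ≤ g xs ys) ∧ (∀ x, g xs ys ≤ Φ x)) ↔
        lam * (Φ xs - Φs) + (Φ xs - g xs ys) = 0) ∧
    -- (ii) smooth nonconvex-PL: global minimax ⇒ stationary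
    (∀ (L μ2 : ℝ)
      (g1 : EuclideanSpace ℝ (Fin dx) → EuclideanSpace ℝ (Fin dy) → EuclideanSpace ℝ (Fin dx))
      (g2 : EuclideanSpace ℝ (Fin dx) → EuclideanSpace ℝ (Fin dy) → EuclideanSpace ℝ (Fin dy)),
      0 < L → 0 < μ2 →
      (∀ x y, HasGradientAt (fun x' => g x' y) (g1 x y) x) →
      (∀ x y, HasGradientAt (fun y' => g x y') (g2 x y) y) →
      (∀ x y x' y',
        ‖g1 x y - g1 x' y'‖ ^ 2 + ‖g2 x y - g2 x' y'‖ ^ 2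
          ≤ L ^ 2 * (‖x - x'‖ ^ 2 + ‖y - y'‖ ^ 2)) →
      (∀ x y, 2 * μ2 * (Φ x - g x y) ≤ ‖g2 x y‖ ^ 2) →
      ∀ xs ys, (∀ y, g xs y ≤ g xs ys) → (∀ x, g xs ys ≤ Φ x) →
        g1 xs ys = 0 ∧ g2 xs ys = 0) ∧
    -- (iii) smooth two-sided PL: stationary ⇒ saddle, and a saddle point exists
    (∀ (L μ1 μ2 : ℝ)
      (g1 : EuclideanSpace ℝ (Fin dx) → EuclideanSpace ℝ (Fin dy) → EuclideanSpace ℝ (Fin dx))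
      (g2 : EuclideanSpace ℝ (Fin dx) → EuclideanSpace ℝ (Fin dy) → EuclideanSpace ℝ (Fin dy))
      (Ψ : EuclideanSpace ℝ (Fin dy) → ℝ),
      0 < L → 0 < μ1 → 0 < μ2 →
      (∀ x y, HasGradientAt (fun x' => g x' y) (g1 x y) x) →
      (∀ x y, HasGradientAt (fun y' => g x y') (g2 x y) y) →
      (∀ x y x' y',
        ‖g1 x y - g1 x' y'‖ ^ 2 + ‖g2 x y - g2 x' y'‖ ^ 2
          ≤ L ^ 2 * (‖x - x'‖ ^ 2 + ‖y - y'‖ ^ 2)) →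
      (∀ x y, 2 * μ2 * (Φ x - g x y) ≤ ‖g2 x y‖ ^ 2) →
      (∀ y, IsLeast (Set.range (fun x => g x y)) (Ψ y)) →
      (∀ x y, 2 * μ1 * (g x y - Ψ y) ≤ ‖g1 x y‖ ^ 2) →
      (∃ x, Φ x = Φs) →
      ((∀ xs ys, g1 xs ys = 0 → g2 xs ys = 0 →
          (∀ y, g xs y ≤ g xs ys) ∧ (∀ x, g xs ys ≤ g x ys)) ∧
       (∃ xs ys, (∀ y, g xs y ≤ g xs ys) ∧ (∀ x, g xs ys ≤ g x ys)))) := by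
  obtain ⟨potential, stationary, saddle⟩ :=
    minimax_potential_stationary_saddle_general g Φ Φs lam hΦ hΦs hlam
  refine ⟨potential, fun L μ2 g1 g2 _ hμ2 hg1 hg2 hL hPL xs ys hmax hmin => ?_,
    fun L μ1 μ2 g1 g2 Ψ _ hμ1 hμ2 hg1 hg2 hL hPL2 hΨ hPL1 hatt => ?_⟩
  · simpa using stationary μ2 _ _ hμ2 (fun x y => (hg1 x y).hasFDerivAt)
      (fun x y => (hg2 x y).hasFDerivAt)
      (fun y => ((toDual ℝ _).lipschitz.comp (lipschitzWith_of_joint_sq_le hL y)).locallyLipschitz)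
      (by simpa using hPL) xs ys ⟨hmax, hmin⟩
  · simpa [isSaddlePointOn_univ_iff] using saddle μ1 μ2 _ _ Ψ hμ1 hμ2
      (fun x y => (hg1 x y).hasFDerivAt)
      (fun x y => (hg2 x y).hasFDerivAt)
      (fun y => ((toDual ℝ _).lipschitz.comp (lipschitzWith_of_joint_sq_le hL y)).locallyLipschitz)
      (by simpa using hPL2) hΨ (by simpa using hPL1) hatt
end

section
/- Let μ₁, μ₂, L > 0 with L ≥ max{μ₁, μ₂}, and let ℓ ∈ ℝ satisfy ℓ² ≤ L² − μ₁μ₂ − L|μ₁ − μ₂| (the right-hand side is nonnegative under the stated hypotheses). Define f : ℝ × ℝ → ℝ by f(x;y) = (μ₁/2)x² − (μ₂/2)y² + ℓxy. Then f is L-smooth (its gradient is L-Lipschitz, equivalently the spectral norm of the matrix [[μ₁, ℓ],[ℓ, −μ₂]] is at most L), f is μ₁-strongly convex in x for each fixed y, f is μ₂-strongly concave in y for each fixed x, and (0,0) is the unique saddle point of f. -/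
/-!
Let `H = !![μ₁, ℓ; ℓ, -μ₂]` be the Hessian of `f`. Since `0 ≤ L`, the bound on `ℓ ^ 2` is the
minimum of `(L - μ₁) * (L + μ₂)` and `(L + μ₁) * (L - μ₂)`, the products of the diagonal entries of
`L - H` and `L + H`. So it says that both determinants are nonnegative; as the diagonal entries are
nonnegative too, `-L ≤ H ≤ L` as quadratic forms. Since `H` is symmetric, its Rayleigh quotients
then bound its spectral norm by `L`.

Since `f` is quadratic, it equals its second-order Taylor expansion in each variable, so the strong
convexity and strong concavity inequalities are equalities. At a saddle point `(a, b)`, the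
inequality `f a 0 ≤ f 0 b` reads `μ₁ / 2 * a ^ 2 ≤ -(μ₂ / 2) * b ^ 2`, which forces `a = b = 0`.
-/

open Set
open scoped Matrix.Norms.L2Operator

theorem opNorm_le_of_abs_reApplyInnerSelf_le {𝕜 E : Type*} [RCLike 𝕜] [NormedAddCommGroup E]
    [InnerProductSpace 𝕜 E] {T : E →L[𝕜] E} (hT : T.IsSymmetric) {C : ℝ} (hC : 0 ≤ C)
    (h : ∀ x, |T.reApplyInnerSelf x| ≤ C * ‖x‖ ^ 2) : ‖T‖ ≤ C := by
  rw [T.norm_eq_iSup_rayleighQuotient hT]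
  refine ciSup_le fun x => ?_
  rw [ContinuousLinearMap.rayleighQuotient, abs_div, abs_sq]
  exact div_le_of_le_mul₀ (sq_nonneg _) hC (h x)

theorem hasDerivAt_of_eq_taylor_two {𝕜 F : Type*} [NontriviallyNormedField 𝕜]
    [NormedAddCommGroup F] [NormedSpace 𝕜 F] {f : 𝕜 → F} {x : 𝕜} {f' c : F}
    (h : ∀ z, f z = f x + (z - x) • f' + (z - x) ^ 2 • c) : HasDerivAt f f' x := by
  have hlin : HasDerivAt (fun z => z - x) 1 x := (hasDerivAt_id x).sub_const x
  have htaylor := ((hlin.smul_const f').const_add (f x)).add ((hlin.pow 2).smul_const c)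
  exact (htaylor.congr_of_eventuallyEq (.of_forall h)).congr_deriv (by simp)

section LinearOrderedCommRing

variable {R : Type*} [CommRing R] [LinearOrder R] [IsStrictOrderedRing R]

theorem binary_quadratic_form_nonneg {a b c : R} (ha : 0 ≤ a) (hc : 0 ≤ c) (hb : b ^ 2 ≤ a * c)
    (u v : R) : 0 ≤ a * u ^ 2 + 2 * b * u * v + c * v ^ 2 := by
  obtain rfl | ha := ha.eq_or_lt
  · have hb : b = 0 := sq_nonpos_iff b |>.mp (by simpa using hb)
    subst hb
    simpa using mul_nonneg hc (sq_nonneg v)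
  · refine nonneg_of_mul_nonneg_right ?_ ha
    calc
      0 ≤ (a * u + b * v) ^ 2 + (a * c - b ^ 2) * v ^ 2 :=
        add_nonneg (sq_nonneg _) (mul_nonneg (sub_nonneg.mpr hb) (sq_nonneg v))
      _ = a * (a * u ^ 2 + 2 * b * u * v + c * v ^ 2) := by ring

theorem abs_binary_quadratic_form_le {a b c L : R} (ha : |a| ≤ L) (hc : |c| ≤ L)
    (hsub : b ^ 2 ≤ (L - a) * (L - c)) (hadd : b ^ 2 ≤ (L + a) * (L + c)) (u v : R) :
    |a * u ^ 2 + 2 * b * u * v + c * v ^ 2| ≤ L * (u ^ 2 + v ^ 2) := by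
  rw [abs_le] at ha hc ⊢
  have hsub_form := binary_quadratic_form_nonneg (sub_nonneg.mpr ha.2) (sub_nonneg.mpr hc.2)
    ((neg_sq b).trans_le hsub) u v
  have hadd_form := binary_quadratic_form_nonneg (neg_le_iff_add_nonneg'.mp ha.1)
    (neg_le_iff_add_nonneg'.mp hc.1) hadd u v
  constructor <;> linarith

theorem sq_sub_mul_sub_mul_abs_sub_eq_min {L : R} (hL : 0 ≤ L) (p q : R) :
    L ^ 2 - p * q - L * |p - q| = min ((L - p) * (L + q)) ((L + p) * (L - q)) := by
  rw [abs_eq_max_neg, mul_max_of_nonneg _ _ hL, ← min_sub_sub_left]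
  congr 1 <;> ring

end LinearOrderedCommRing

theorem l2_opNorm_symm_fin_two_le {a b c L : ℝ} (ha : |a| ≤ L) (hc : |c| ≤ L)
    (hsub : b ^ 2 ≤ (L - a) * (L - c)) (hadd : b ^ 2 ≤ (L + a) * (L + c)) :
    ‖!![a, b; b, c]‖ ≤ L := by
  have hsymm : (!![a, b; b, c] : Matrix _ _ ℝ).IsHermitian := by
    ext i j
    fin_cases i <;> fin_cases j <;> rfl
  rw [Matrix.cstar_norm_def]
  refine opNorm_le_of_abs_reApplyInnerSelf_le (Matrix.isSymmetric_toEuclideanLin_iff.mpr hsymm)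
    ((abs_nonneg a).trans ha) fun w => ?_
  have hform := abs_binary_quadratic_form_le ha hc hsub hadd (w 0) (w 1)
  convert! hform using 2
  · simp only [ContinuousLinearMap.reApplyInnerSelf_apply, PiLp.inner_apply,
      Matrix.ofLp_toEuclideanCLM, Matrix.mulVec, Matrix.of_apply, Matrix.cons_val',
      Matrix.cons_val_fin_one, Matrix.vec2_dotProduct, Matrix.cons_val_zero, Matrix.cons_val_one,
      RCLike.inner_apply, Real.ringHom_apply, Fin.sum_univ_two, RCLike.re_to_real]
    ring
  · simp [EuclideanSpace.real_norm_sq_eq, Fin.sum_univ_two]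

theorem sq_add_sq_le_l2_opNorm_sq_mul (A : Matrix (Fin 2) (Fin 2) ℝ) (u v : ℝ) :
    (A 0 0 * u + A 0 1 * v) ^ 2 + (A 1 0 * u + A 1 1 * v) ^ 2 ≤ ‖A‖ ^ 2 * (u ^ 2 + v ^ 2) := by
  have h := pow_le_pow_left₀ (norm_nonneg _) (A.l2_opNorm_mulVec !₂[u, v]) 2
  simpa [mul_pow, EuclideanSpace.real_norm_sq_eq, Matrix.mulVec, Matrix.vec2_dotProduct] using h

theorem isSaddlePointOn_univ_iff_s16 {E F β : Type*} [Preorder β] {f : E → F → β} {a : E} {b : F} :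
    IsSaddlePointOn univ univ f a b ↔ (∀ y, f a y ≤ f a b) ∧ ∀ x, f a b ≤ f x b :=
  ⟨fun h => ⟨fun y => h a trivial y trivial, fun x => h x trivial b trivial⟩,
    fun h x _ y _ => (h.1 y).trans (h.2 x)⟩

/-- The quadratic `f(x; y)` with curvature `p` in `x`, curvature `-q` in `y` and coupling `l`;
its Hessian is `!![p, l; l, -q]`. -/
noncomputable def saddleQuadratic (p q l x y : ℝ) : ℝ :=
  p / 2 * x ^ 2 - q / 2 * y ^ 2 + l * x * y

namespace saddleQuadratic

variable {p q l : ℝ}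

theorem eq_taylor_left (x x' y : ℝ) :
    saddleQuadratic p q l x' y =
      saddleQuadratic p q l x y + (p * x + l * y) * (x' - x) + p / 2 * (x' - x) ^ 2 := by
  unfold saddleQuadratic
  ring

theorem eq_taylor_right (x y y' : ℝ) :
    saddleQuadratic p q l x y' =
      saddleQuadratic p q l x y + (l * x - q * y) * (y' - y) - q / 2 * (y' - y) ^ 2 := by
  unfold saddleQuadratic
  ring

theorem hasDerivAt_left (x y : ℝ) :
    HasDerivAt (fun x' => saddleQuadratic p q l x' y) (p * x + l * y) x :=
  hasDerivAt_of_eq_taylor_two (c := p / 2) fun x' => by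
    rw [eq_taylor_left x x' y, smul_eq_mul, smul_eq_mul]
    ring

theorem hasDerivAt_right (x y : ℝ) :
    HasDerivAt (fun y' => saddleQuadratic p q l x y') (l * x - q * y) y :=
  hasDerivAt_of_eq_taylor_two (c := -(q / 2)) fun y' => by
    rw [eq_taylor_right x y y', smul_eq_mul, smul_eq_mul]
    ring

theorem gradient_lipschitz {L : ℝ} (hessian_le : ‖!![p, l; l, -q]‖ ≤ L) (x y x' y' : ℝ) :
    (p * x + l * y - (p * x' + l * y')) ^ 2 + (l * x - q * y - (l * x' - q * y')) ^ 2
      ≤ L ^ 2 * ((x - x') ^ 2 + (y - y') ^ 2) :=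
  calc
    _ = (p * (x - x') + l * (y - y')) ^ 2 + (l * (x - x') + -q * (y - y')) ^ 2 := by ring
    _ ≤ ‖!![p, l; l, -q]‖ ^ 2 * ((x - x') ^ 2 + (y - y') ^ 2) :=
      sq_add_sq_le_l2_opNorm_sq_mul !![p, l; l, -q] (x - x') (y - y')
    _ ≤ L ^ 2 * ((x - x') ^ 2 + (y - y') ^ 2) := by gcongr

theorem isSaddlePointOn_univ_iff_eq_zero (hp : 0 < p) (hq : 0 < q) {a b : ℝ} :
    IsSaddlePointOn univ univ (saddleQuadratic p q l) a b ↔ a = 0 ∧ b = 0 := by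
  constructor
  · intro h
    have hle : p / 2 * a ^ 2 ≤ -(q / 2 * b ^ 2) := by
      simpa [saddleQuadratic] using h 0 trivial 0 trivial
    have ha : 0 ≤ p / 2 * a ^ 2 := by positivity
    have hb : 0 ≤ q / 2 * b ^ 2 := by positivity
    have ha_zero : p / 2 * a ^ 2 = 0 := by linarith
    have hb_zero : q / 2 * b ^ 2 = 0 := by linarith
    simpa [hp.ne', hq.ne'] using And.intro ha_zero hb_zero
  · rintro ⟨rfl, rfl⟩ x - y -
    calc
      saddleQuadratic p q l 0 y = -(q / 2 * y ^ 2) := by simp [saddleQuadratic]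
      _ ≤ 0 := neg_nonpos.mpr (by positivity)
      _ ≤ p / 2 * x ^ 2 := by positivity
      _ = saddleQuadratic p q l x 0 := by simp [saddleQuadratic]

end saddleQuadratic

/-- **Proposition (worst-case SC-SC quadratic).**
Let `μ₁, μ₂, L > 0` with `L ≥ max{μ₁, μ₂}` and `ℓ² ≤ L² − μ₁μ₂ − L|μ₁ − μ₂|` (the right-hand
side being nonnegative).  Then `f(x;y) = (μ₁/2)x² − (μ₂/2)y² + ℓxy` is `L`-smooth (its
gradient `(μ₁x + ℓy, ℓx − μ₂y)` is `L`-Lipschitz), `μ₁`-strongly convex in `x`,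
`μ₂`-strongly concave in `y`, and `(0,0)` is its unique saddle point. -/
theorem scsc_quadratic_worst_case
    (L μ1 μ2 ℓ : ℝ) (hL : 0 < L) (hμ1 : 0 < μ1) (hμ2 : 0 < μ2)
    (hLmax : max μ1 μ2 ≤ L)
    (hℓ : ℓ ^ 2 ≤ L ^ 2 - μ1 * μ2 - L * |μ1 - μ2|)
    (f : ℝ → ℝ → ℝ)
    (hf : ∀ x y, f x y = μ1 / 2 * x ^ 2 - μ2 / 2 * y ^ 2 + ℓ * x * y) :
    -- nonnegativity of the admissible range for ℓ²
    0 ≤ L ^ 2 - μ1 * μ2 - L * |μ1 - μ2| ∧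
    -- partial derivatives
    (∀ x y, HasDerivAt (fun x' => f x' y) (μ1 * x + ℓ * y) x) ∧
    (∀ x y, HasDerivAt (fun y' => f x y') (ℓ * x - μ2 * y) y) ∧
    -- L-smoothness: the (joint) gradient is L-Lipschitz
    (∀ x y x' y',
      (μ1 * x + ℓ * y - (μ1 * x' + ℓ * y')) ^ 2 + (ℓ * x - μ2 * y - (ℓ * x' - μ2 * y')) ^ 2
        ≤ L ^ 2 * ((x - x') ^ 2 + (y - y') ^ 2)) ∧
    -- μ₁-strong convexity in x for each fixed y
    (∀ y x x', f x y + (μ1 * x + ℓ * y) * (x' - x) + μ1 / 2 * (x' - x) ^ 2 ≤ f x' y) ∧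
    -- μ₂-strong concavity in y for each fixed x
    (∀ x y y', f x y' ≤ f x y + (ℓ * x - μ2 * y) * (y' - y) - μ2 / 2 * (y' - y) ^ 2) ∧
    -- (0,0) is a saddle point
    ((∀ y, f 0 y ≤ f 0 0) ∧ (∀ x, f 0 0 ≤ f x 0)) ∧
    -- uniqueness of the saddle point
    (∀ a b, (∀ y, f a y ≤ f a b) → (∀ x, f a b ≤ f x b) → a = 0 ∧ b = 0) := by
  obtain rfl : f = saddleQuadratic μ1 μ2 ℓ := funext₂ hf
  obtain ⟨hμ1L, hμ2L⟩ := max_le_iff.mp hLmax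
  have saddle {a b : ℝ} := isSaddlePointOn_univ_iff_s16.symm.trans
    (saddleQuadratic.isSaddlePointOn_univ_iff_eq_zero (l := ℓ) hμ1 hμ2 (a := a) (b := b))
  rw [sq_sub_mul_sub_mul_abs_sub_eq_min hL.le] at hℓ ⊢
  obtain ⟨hsub, hadd⟩ := le_min_iff.mp hℓ
  have hessian_le : ‖!![μ1, ℓ; ℓ, -μ2]‖ ≤ L :=
    l2_opNorm_symm_fin_two_le (by rwa [abs_of_pos hμ1]) (by rwa [abs_neg, abs_of_pos hμ2])
      (by rwa [sub_neg_eq_add]) (by rwa [← sub_eq_add_neg])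
  exact ⟨le_min (mul_nonneg (sub_nonneg.mpr hμ1L) (by positivity))
      (mul_nonneg (by positivity) (sub_nonneg.mpr hμ2L)),
    saddleQuadratic.hasDerivAt_left, saddleQuadratic.hasDerivAt_right,
    saddleQuadratic.gradient_lipschitz hessian_le,
    fun y x x' => (saddleQuadratic.eq_taylor_left x x' y).ge,
    fun x y y' => (saddleQuadratic.eq_taylor_right x y y').le,
    saddle.mpr ⟨rfl, rfl⟩, fun a b hy hx => saddle.mp ⟨hy, hx⟩⟩
end

section
/- Suppose every component f_i is L-smooth (Assumption 1). For any epoch k of mini-batch altSGDA-RR (for any realized permutation), define G_k := (1/q)∑_{t=1}^q ‖z_{t−1}^k − z₀^k‖², and epoch aggregates g^k := (1/q)∑_{t=1}^q (1/b)∑_{i∈B_t^k} ∇₁f_i(x_{t−1}^k; y_{t−1}^k) and h^k := (1/q)∑_{t=1}^q (1/b)∑_{i∈B_t^k} ∇₂f_i(x_t^k; y_{t−1}^k). Then ‖g^k − ∇₁f(z₀^k)‖² ≤ L²G_k and ‖h^k − ∇₂f(z₀^k)‖² ≤ L²G_k + L²qα²‖g^k‖². -/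
/-- `t` steps of one epoch of mini-batch alternating SGDA with permutation `σ`. -/
noncomputable def altEpoch {n : ℕ} {E F : Type*} [AddCommGroup E] [Module ℝ E]
    [AddCommGroup F] [Module ℝ F] (α β : ℝ) (b : ℕ)
    (g1 : Fin n → E → F → E) (g2 : Fin n → E → F → F)
    (σ : Equiv.Perm (Fin n)) : ℕ → E × F → E × F
  | 0, z => z
  | t + 1, z =>
    let w := altEpoch α β b g1 g2 σ t z
    let x' := w.1 - α • batchAvg b g1 σ t w.1 w.2
    (x', w.2 + β • batchAvg b g2 σ t x' w.2)

/-!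
The mini-batches partition the index set, so the full gradient at `z₀` is itself an epoch average:
that of the constant trajectory at `z₀`. Comparing the two averages term by term, Jensen's
inequality and Lipschitz continuity bound the aggregation error by `L²` times the mean square
distance of the evaluation points from `z₀`. The ascent steps are evaluated at `(x_t, y_{t-1})`
instead of `(x_{t-1}, y_{t-1})`; shifting the index trades the vanishing term `‖x_0 - x_0‖²` for
`‖x_q - x_0‖² = q²α²‖g‖²`, which the factor `1/q` turns into the extra `qα²‖g‖²`.
-/

lemma norm_inv_card_smul_sum_pow_le {ι V : Type*} [SeminormedAddCommGroup V] [NormedSpace ℝ V]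
    {s : Finset ι} (hs : s.Nonempty) (a : ι → V) (p : ℕ) :
    ‖(s.card : ℝ)⁻¹ • ∑ i ∈ s, a i‖ ^ p ≤ (s.card : ℝ)⁻¹ * ∑ i ∈ s, ‖a i‖ ^ p := by
  have hcard : (s.card : ℝ) ≠ 0 := by exact_mod_cast hs.card_ne_zero
  have hconvex : ConvexOn ℝ Set.univ fun v : V => ‖v‖ ^ p :=
    convexOn_univ_norm.pow (fun _ _ => norm_nonneg _) p
  rw [Finset.smul_sum, Finset.mul_sum]
  exact hconvex.map_sum_le (fun _ _ => by positivity) (by simp [hcard]) (fun _ _ => Set.mem_univ _)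

section MiniBatch

variable {n b q t : ℕ}

/-- The positions `j` (0-indexed) of a permutation of `Fin n` that make up the `t`-th mini-batch of
size `b`; the members of that batch are the `σ j`. It is the index set of the sum in `batchAvg`. -/
def miniBatch (b t : ℕ) : Finset (Fin n) :=
  Finset.univ.filter fun j : Fin n => b * t ≤ (j : ℕ) ∧ (j : ℕ) < b * (t + 1)

lemma mem_miniBatch_iff_div_eq (hb : 0 < b) {j : Fin n} :
    j ∈ miniBatch b t ↔ (j : ℕ) / b = t := by
  rw [miniBatch, Finset.mem_filter_univ, Nat.div_eq_iff hb, mul_comm b t, mul_comm b (t + 1),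
    add_mul, one_mul]
  omega

lemma card_miniBatch (h : b * (t + 1) ≤ n) : (miniBatch b t : Finset (Fin n)).card = b := by
  have hmap : (miniBatch b t : Finset (Fin n)).map Fin.valEmbedding
      = Finset.Ico (b * t) (b * (t + 1)) := by
    ext m
    simp only [miniBatch, Finset.mem_map, Finset.mem_filter_univ, Fin.valEmbedding_apply,
      Finset.mem_Ico]
    exact ⟨fun ⟨_, hj, hjm⟩ => hjm ▸ hj, fun hm => ⟨⟨m, hm.2.trans_le h⟩, hm, rfl⟩⟩
  rw [← Finset.card_map Fin.valEmbedding, hmap, Nat.card_Ico, mul_add_one,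
    Nat.add_sub_cancel_left]

lemma sum_sum_miniBatch {M : Type*} [AddCommMonoid M] (hb : 0 < b) (h : n ≤ b * q)
    (a : Fin n → M) : ∑ t ∈ Finset.range q, ∑ j ∈ miniBatch b t, a j = ∑ j, a j := by
  have hfiber (t : ℕ) :
      (miniBatch b t : Finset (Fin n)) = Finset.univ.filter fun j : Fin n => (j : ℕ) / b = t := by
    ext j
    rw [mem_miniBatch_iff_div_eq hb, Finset.mem_filter_univ]
  simp only [hfiber]
  exact Finset.sum_fiberwise_of_maps_to
    (fun j _ => Finset.mem_range.2 (Nat.div_lt_of_lt_mul (j.2.trans_le h))) a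

end MiniBatch

section EpochAverage

variable {n b q : ℕ} {E F V : Type*}

lemma norm_batchAvg_sub_pow_le [SeminormedAddCommGroup V] [NormedSpace ℝ V] {t p : ℕ}
    (hb : 0 < b) (ht : b * (t + 1) ≤ n) {g : Fin n → E → F → V} {x x' : E} {y y' : F} {C : ℝ}
    (hg : ∀ i, ‖g i x y - g i x' y'‖ ^ p ≤ C) (σ : Equiv.Perm (Fin n)) :
    ‖batchAvg b g σ t x y - batchAvg b g σ t x' y'‖ ^ p ≤ C := by
  have hcard := card_miniBatch ht
  have hne : (miniBatch b t : Finset (Fin n)).Nonempty := Finset.card_pos.1 (hcard.symm ▸ hb)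
  have hb₀ : (b : ℝ) ≠ 0 := by exact_mod_cast hb.ne'
  calc ‖batchAvg b g σ t x y - batchAvg b g σ t x' y'‖ ^ p
      = ‖(b : ℝ)⁻¹ • ∑ j ∈ miniBatch b t, (g (σ j) x y - g (σ j) x' y')‖ ^ p := by
        rw [Finset.sum_sub_distrib, smul_sub]
        rfl
    _ ≤ (b : ℝ)⁻¹ * ∑ j ∈ miniBatch b t, ‖g (σ j) x y - g (σ j) x' y'‖ ^ p := by
        simpa only [hcard] using norm_inv_card_smul_sum_pow_le hne
          (fun j => g (σ j) x y - g (σ j) x' y') p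
    _ ≤ (b : ℝ)⁻¹ * ∑ _j ∈ (miniBatch b t : Finset (Fin n)), C := by
        gcongr
        exact hg _
    _ = C := by rw [Finset.sum_const, hcard, nsmul_eq_mul, inv_mul_cancel_left₀ hb₀]

/-- The average over the `q` steps of an epoch of the mini-batch values of `g`, where the `t`-th
mini-batch is evaluated at `(u t, v t)`. The trajectory is arbitrary because descent and ascent
steps of the alternating method are evaluated at different points. -/
noncomputable def epochAvg [AddCommGroup V] [Module ℝ V] (b q : ℕ) (g : Fin n → E → F → V)
    (σ : Equiv.Perm (Fin n)) (u : ℕ → E) (v : ℕ → F) : V :=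
  (q : ℝ)⁻¹ • ∑ t ∈ Finset.range q, batchAvg b g σ t (u t) (v t)

lemma epochAvg_const [AddCommGroup V] [Module ℝ V] (hb : 0 < b) (hn : n = b * q)
    (g : Fin n → E → F → V) (σ : Equiv.Perm (Fin n)) (x : E) (y : F) :
    epochAvg b q g σ (fun _ => x) (fun _ => y) = (n : ℝ)⁻¹ • ∑ i, g i x y := by
  calc epochAvg b q g σ (fun _ => x) (fun _ => y)
      = (q : ℝ)⁻¹ • (b : ℝ)⁻¹ • ∑ t ∈ Finset.range q, ∑ j ∈ miniBatch b t, g (σ j) x y := by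
        rw [Finset.smul_sum (r := (b : ℝ)⁻¹)]
        rfl
    _ = (n : ℝ)⁻¹ • ∑ j, g (σ j) x y := by
        rw [sum_sum_miniBatch hb hn.le, smul_smul, ← mul_inv_rev, ← Nat.cast_mul, ← hn]
    _ = (n : ℝ)⁻¹ • ∑ i, g i x y := by rw [Equiv.sum_comp σ fun i => g i x y]

/-- The mean of `‖(u t, v t) - (x, y)‖²` over the first `q` points of a trajectory, for the
Euclidean norm of the product (the norm of `E × F` in Mathlib is the maximum). Along the iterates
of an epoch and with `(x, y) = z₀`, this is `G_k`. -/
noncomputable def meanSqDist [SeminormedAddCommGroup E] [SeminormedAddCommGroup F] (q : ℕ)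
    (u : ℕ → E) (v : ℕ → F) (x : E) (y : F) : ℝ :=
  (q : ℝ)⁻¹ * ∑ t ∈ Finset.range q, (‖u t - x‖ ^ 2 + ‖v t - y‖ ^ 2)

lemma meanSqDist_succ_left [SeminormedAddCommGroup E] [SeminormedAddCommGroup F] (q : ℕ)
    (u : ℕ → E) (v : ℕ → F) (y : F) :
    meanSqDist q (fun t => u (t + 1)) v (u 0) y
      = meanSqDist q u v (u 0) y + (q : ℝ)⁻¹ * ‖u q - u 0‖ ^ 2 := by
  have hshift : ∑ t ∈ Finset.range q, ‖u (t + 1) - u 0‖ ^ 2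
      = ∑ t ∈ Finset.range q, ‖u t - u 0‖ ^ 2 + ‖u q - u 0‖ ^ 2 := by
    rw [← Finset.sum_range_succ (fun t => ‖u t - u 0‖ ^ 2), Finset.sum_range_succ']
    simp
  simp only [meanSqDist, Finset.sum_add_distrib, hshift]
  ring

lemma norm_epochAvg_sub_mean_sq_le [SeminormedAddCommGroup E] [SeminormedAddCommGroup F]
    [SeminormedAddCommGroup V] [NormedSpace ℝ V] (hb : 0 < b) (hq : 0 < q) (hn : n = b * q)
    {L : ℝ} {g : Fin n → E → F → V} {x : E} {y : F}
    (hg : ∀ i x' y', ‖g i x' y' - g i x y‖ ^ 2 ≤ L ^ 2 * (‖x' - x‖ ^ 2 + ‖y' - y‖ ^ 2))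
    (σ : Equiv.Perm (Fin n)) (u : ℕ → E) (v : ℕ → F) :
    ‖epochAvg b q g σ u v - (n : ℝ)⁻¹ • ∑ i, g i x y‖ ^ 2 ≤ L ^ 2 * meanSqDist q u v x y := by
  calc ‖epochAvg b q g σ u v - (n : ℝ)⁻¹ • ∑ i, g i x y‖ ^ 2
      = ‖(q : ℝ)⁻¹ • ∑ t ∈ Finset.range q,
          (batchAvg b g σ t (u t) (v t) - batchAvg b g σ t x y)‖ ^ 2 := by
        rw [← epochAvg_const hb hn g σ, Finset.sum_sub_distrib, smul_sub]
        rfl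
    _ ≤ (q : ℝ)⁻¹ * ∑ t ∈ Finset.range q,
          ‖batchAvg b g σ t (u t) (v t) - batchAvg b g σ t x y‖ ^ 2 := by
        simpa only [Finset.card_range] using norm_inv_card_smul_sum_pow_le
          (Finset.nonempty_range_iff.2 hq.ne')
          (fun t => batchAvg b g σ t (u t) (v t) - batchAvg b g σ t x y) 2
    _ ≤ (q : ℝ)⁻¹ * ∑ t ∈ Finset.range q, L ^ 2 * (‖u t - x‖ ^ 2 + ‖v t - y‖ ^ 2) := by
        gcongr with t ht
        have hbatch : b * (t + 1) ≤ n := hn ▸ Nat.mul_le_mul_left b (Finset.mem_range.1 ht)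
        exact norm_batchAvg_sub_pow_le hb hbatch (fun i => hg i (u t) (v t)) σ
    _ = L ^ 2 * meanSqDist q u v x y := by rw [← Finset.mul_sum, mul_left_comm, meanSqDist]

end EpochAverage

section AltEpoch

variable {n : ℕ} {E F : Type*} [AddCommGroup E] [Module ℝ E] [AddCommGroup F] [Module ℝ F]
  (α β : ℝ) (b q : ℕ) (g1 : Fin n → E → F → E) (g2 : Fin n → E → F → F)
  (σ : Equiv.Perm (Fin n)) (z : E × F)

/-- The epoch aggregate `g^k`: the average of the mini-batch descent directions along an epoch
started at `z`. -/
noncomputable def descentAggregate : E :=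
  epochAvg b q g1 σ (fun t => (altEpoch α β b g1 g2 σ t z).1)
    (fun t => (altEpoch α β b g1 g2 σ t z).2)

/-- The epoch aggregate `h^k`: the average of the mini-batch ascent directions along an epoch
started at `z`, each evaluated at the already updated first component. -/
noncomputable def ascentAggregate : F :=
  epochAvg b q g2 σ (fun t => (altEpoch α β b g1 g2 σ (t + 1) z).1)
    (fun t => (altEpoch α β b g1 g2 σ t z).2)

lemma altEpoch_fst_sub (m : ℕ) :
    (altEpoch α β b g1 g2 σ m z).1 - z.1
      = -(α • ∑ t ∈ Finset.range m, batchAvg b g1 σ t (altEpoch α β b g1 g2 σ t z).1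
          (altEpoch α β b g1 g2 σ t z).2) := by
  induction m with
  | zero => simp [altEpoch]
  | succ m ih =>
    rw [Finset.sum_range_succ, smul_add, neg_add, ← ih]
    simp only [altEpoch]
    abel

lemma altEpoch_fst_sub_eq_descentAggregate :
    (altEpoch α β b g1 g2 σ q z).1 - z.1
      = -((q * α) • descentAggregate α β b q g1 g2 σ z) := by
  rcases eq_or_ne q 0 with rfl | hq
  · simp [altEpoch]
  · rw [altEpoch_fst_sub, descentAggregate, epochAvg, mul_comm, mul_smul,
      smul_inv_smul₀ (Nat.cast_ne_zero.2 hq)]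

end AltEpoch

section NoiseBound

variable {n b q : ℕ} {E F : Type*} [SeminormedAddCommGroup E] [NormedSpace ℝ E]
  [SeminormedAddCommGroup F] [NormedSpace ℝ F] {g1 : Fin n → E → F → E} {g2 : Fin n → E → F → F}

/-- The mean square drift `G_k` of the iterates of an epoch from its starting point `z`. -/
noncomputable def epochDrift (α β : ℝ) (b q : ℕ) (g1 : Fin n → E → F → E)
    (g2 : Fin n → E → F → F) (σ : Equiv.Perm (Fin n)) (z : E × F) : ℝ :=
  meanSqDist q (fun t => (altEpoch α β b g1 g2 σ t z).1)
    (fun t => (altEpoch α β b g1 g2 σ t z).2) z.1 z.2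

lemma meanSqDist_altEpoch_succ (α β : ℝ) (b q : ℕ) (g1 : Fin n → E → F → E)
    (g2 : Fin n → E → F → F) (σ : Equiv.Perm (Fin n)) (z : E × F) :
    meanSqDist q (fun t => (altEpoch α β b g1 g2 σ (t + 1) z).1)
        (fun t => (altEpoch α β b g1 g2 σ t z).2) z.1 z.2
      = epochDrift α β b q g1 g2 σ z
        + q * α ^ 2 * ‖descentAggregate α β b q g1 g2 σ z‖ ^ 2 := by
  have hlast : (q : ℝ)⁻¹ * ‖(altEpoch α β b g1 g2 σ q z).1 - z.1‖ ^ 2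
      = q * α ^ 2 * ‖descentAggregate α β b q g1 g2 σ z‖ ^ 2 := by
    rw [altEpoch_fst_sub_eq_descentAggregate, norm_neg, norm_smul, mul_pow, Real.norm_eq_abs,
      sq_abs, mul_pow]
    rcases eq_or_ne (q : ℝ) 0 with hq | hq
    · simp [hq]
    · field_simp
  rw [← hlast]
  exact meanSqDist_succ_left q (fun t => (altEpoch α β b g1 g2 σ t z).1) _ z.2

lemma norm_descentAggregate_sub_sq_le (hb : 0 < b) (hq : 0 < q) (hn : n = b * q) {L : ℝ}
    {z : E × F} (hg1 : ∀ i x y,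
      ‖g1 i x y - g1 i z.1 z.2‖ ^ 2 ≤ L ^ 2 * (‖x - z.1‖ ^ 2 + ‖y - z.2‖ ^ 2))
    (g2 : Fin n → E → F → F) (α β : ℝ) (σ : Equiv.Perm (Fin n)) :
    ‖descentAggregate α β b q g1 g2 σ z - (n : ℝ)⁻¹ • ∑ i, g1 i z.1 z.2‖ ^ 2
      ≤ L ^ 2 * epochDrift α β b q g1 g2 σ z :=
  norm_epochAvg_sub_mean_sq_le hb hq hn hg1 σ _ _

lemma norm_ascentAggregate_sub_sq_le (hb : 0 < b) (hq : 0 < q) (hn : n = b * q) {L : ℝ}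
    {z : E × F} (hg2 : ∀ i x y,
      ‖g2 i x y - g2 i z.1 z.2‖ ^ 2 ≤ L ^ 2 * (‖x - z.1‖ ^ 2 + ‖y - z.2‖ ^ 2))
    (g1 : Fin n → E → F → E) (α β : ℝ) (σ : Equiv.Perm (Fin n)) :
    ‖ascentAggregate α β b q g1 g2 σ z - (n : ℝ)⁻¹ • ∑ i, g2 i z.1 z.2‖ ^ 2
      ≤ L ^ 2 * epochDrift α β b q g1 g2 σ z
        + L ^ 2 * q * α ^ 2 * ‖descentAggregate α β b q g1 g2 σ z‖ ^ 2 := by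
  refine (norm_epochAvg_sub_mean_sq_le hb hq hn hg2 σ _ _).trans_eq ?_
  rw [meanSqDist_altEpoch_succ]
  ring

theorem alt_epoch_aggregate_noise_bound_general (hb : 0 < b) (hq : 0 < q) (hn : n = b * q)
    {L₁ L₂ : ℝ} {z : E × F}
    (hg1 : ∀ i x y,
      ‖g1 i x y - g1 i z.1 z.2‖ ^ 2 ≤ L₁ ^ 2 * (‖x - z.1‖ ^ 2 + ‖y - z.2‖ ^ 2))
    (hg2 : ∀ i x y,
      ‖g2 i x y - g2 i z.1 z.2‖ ^ 2 ≤ L₂ ^ 2 * (‖x - z.1‖ ^ 2 + ‖y - z.2‖ ^ 2))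
    (α β : ℝ) (σ : Equiv.Perm (Fin n)) :
    ‖descentAggregate α β b q g1 g2 σ z - (n : ℝ)⁻¹ • ∑ i, g1 i z.1 z.2‖ ^ 2
      ≤ L₁ ^ 2 * epochDrift α β b q g1 g2 σ z ∧
    ‖ascentAggregate α β b q g1 g2 σ z - (n : ℝ)⁻¹ • ∑ i, g2 i z.1 z.2‖ ^ 2
      ≤ L₂ ^ 2 * epochDrift α β b q g1 g2 σ z
        + L₂ ^ 2 * q * α ^ 2 * ‖descentAggregate α β b q g1 g2 σ z‖ ^ 2 :=
  ⟨norm_descentAggregate_sub_sq_le hb hq hn hg1 g2 α β σ,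
    norm_ascentAggregate_sub_sq_le hb hq hn hg2 g1 α β σ⟩

end NoiseBound

/-- **Lemma (epoch-aggregate noise bound for altSGDA-RR).**
Suppose every component `f_i` is `L`-smooth.  For any epoch of mini-batch altSGDA-RR with any
realized permutation, with `G_k = (1/q)∑_{t=1}^q ‖z_{t−1} − z₀‖²` and the epoch aggregates
`g^k = (1/q)∑_t (1/b)∑_{i∈B_t} ∇₁f_i(x_{t−1};y_{t−1})`,
`h^k = (1/q)∑_t (1/b)∑_{i∈B_t} ∇₂f_i(x_t;y_{t−1})`, one has
`‖g^k − ∇₁f(z₀)‖² ≤ L²G_k` and `‖h^k − ∇₂f(z₀)‖² ≤ L²G_k + L²qα²‖g^k‖²`. -/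
theorem alt_epoch_aggregate_noise_bound
    (dx dy n b q : ℕ) (hn : 1 ≤ n) (hb : 0 < b) (hq : n = b * q)
    (L : ℝ) (hL : 0 < L)
    (f : Fin n → EuclideanSpace ℝ (Fin dx) → EuclideanSpace ℝ (Fin dy) → ℝ)
    (g1 : Fin n → EuclideanSpace ℝ (Fin dx) → EuclideanSpace ℝ (Fin dy) → EuclideanSpace ℝ (Fin dx))
    (g2 : Fin n → EuclideanSpace ℝ (Fin dx) → EuclideanSpace ℝ (Fin dy) → EuclideanSpace ℝ (Fin dy))
    (hg1 : ∀ i x y, HasGradientAt (fun x' => f i x' y) (g1 i x y) x)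
    (hg2 : ∀ i x y, HasGradientAt (fun y' => f i x y') (g2 i x y) y)
    (hsmooth : ∀ i x y x' y',
      ‖g1 i x y - g1 i x' y'‖ ^ 2 + ‖g2 i x y - g2 i x' y'‖ ^ 2
        ≤ L ^ 2 * (‖x - x'‖ ^ 2 + ‖y - y'‖ ^ 2))
    (G1 : EuclideanSpace ℝ (Fin dx) → EuclideanSpace ℝ (Fin dy) → EuclideanSpace ℝ (Fin dx))
    (G2 : EuclideanSpace ℝ (Fin dx) → EuclideanSpace ℝ (Fin dy) → EuclideanSpace ℝ (Fin dy))
    (hG1 : ∀ x y, G1 x y = (n : ℝ)⁻¹ • ∑ i, g1 i x y)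
    (hG2 : ∀ x y, G2 x y = (n : ℝ)⁻¹ • ∑ i, g2 i x y)
    (α β : ℝ) (σ : Equiv.Perm (Fin n))
    (x0 : EuclideanSpace ℝ (Fin dx)) (y0 : EuclideanSpace ℝ (Fin dy))
    (gk : EuclideanSpace ℝ (Fin dx)) (hk : EuclideanSpace ℝ (Fin dy)) (Gk : ℝ)
    (hgk : gk = (q : ℝ)⁻¹ • ∑ t ∈ Finset.range q,
      batchAvg b g1 σ t (altEpoch α β b g1 g2 σ t (x0, y0)).1 (altEpoch α β b g1 g2 σ t (x0, y0)).2)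
    (hhk : hk = (q : ℝ)⁻¹ • ∑ t ∈ Finset.range q,
      batchAvg b g2 σ t (altEpoch α β b g1 g2 σ (t + 1) (x0, y0)).1
        (altEpoch α β b g1 g2 σ t (x0, y0)).2)
    (hGk : Gk = (q : ℝ)⁻¹ * ∑ t ∈ Finset.range q,
      (‖(altEpoch α β b g1 g2 σ t (x0, y0)).1 - x0‖ ^ 2 +
        ‖(altEpoch α β b g1 g2 σ t (x0, y0)).2 - y0‖ ^ 2)) :
    ‖gk - G1 x0 y0‖ ^ 2 ≤ L ^ 2 * Gk ∧
    ‖hk - G2 x0 y0‖ ^ 2 ≤ L ^ 2 * Gk + L ^ 2 * q * α ^ 2 * ‖gk‖ ^ 2 := by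
  have hq0 : 0 < q := Nat.pos_of_mul_pos_left (hq ▸ hn)
  rw [hgk, hhk, hGk, hG1, hG2]
  exact alt_epoch_aggregate_noise_bound_general (z := (x0, y0)) hb hq0 hq
    (fun i x y => (le_add_of_nonneg_right (sq_nonneg _)).trans (hsmooth i x y x0 y0))
    (fun i x y => (le_add_of_nonneg_left (sq_nonneg _)).trans (hsmooth i x y x0 y0)) α β σ
end
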